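/- arXiv:math/0503747 — 2 statements merged into one kernel-verified Lean document; each statement's English description precedes it below -/
import Mathlib

section
/- For projections p, q in a von Neumann algebra M, the Kadison–Pedersen equivalence p ≈ q holds if and only if p and q are Murray–von Neumann equivalent. -/
open ContinuousLinearMap Filter Topology

universe u

noncomputable section

variable {H : Type u} [NormedAddCommGroup H] [InnerProductSpace ℂ H] [CompleteSpace H]

/-- `p` is an (orthogonal) projection belonging to the von Neumann algebra `M`. -/
def IsProjIn (M : VonNeumannAlgebra H) (p : H →L[ℂ] H) : Prop :=
  p ∈ M ∧ IsSelfAdjoint p ∧ p * p = p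

/-- Murray–von Neumann equivalence of `p` and `q` relative to `M`:
there is a partial isometry `v ∈ M` with `v* v = p` and `v v* = q`. -/
def MvNEquiv (M : VonNeumannAlgebra H) (p q : H →L[ℂ] H) : Prop :=
  ∃ v ∈ M, adjoint v * v = p ∧ v * adjoint v = q

/-- The order on projections: `p ≤ q` iff `p q = p = q p`. -/
def ProjLE (p q : H →L[ℂ] H) : Prop := p * q = p ∧ q * p = p

/-- Murray–von Neumann subequivalence `p ≼ q`: `p` is equivalent to a subprojection of `q`. -/
def SubEquiv (M : VonNeumannAlgebra H) (p q : H →L[ℂ] H) : Prop :=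
  ∃ r, IsProjIn M r ∧ MvNEquiv M p r ∧ ProjLE r q

/-- `z` is a central projection of `M`. -/
def IsCentralProj (M : VonNeumannAlgebra H) (z : H →L[ℂ] H) : Prop :=
  IsProjIn M z ∧ ∀ x ∈ M, z * x = x * z

/-- A projection `p` is finite: `p ∼ q ≤ p` implies `q = p`. -/
def FiniteProj (M : VonNeumannAlgebra H) (p : H →L[ℂ] H) : Prop :=
  ∀ q, IsProjIn M q → ProjLE q p → MvNEquiv M p q → q = p

/-- A projection `p` is properly infinite: it is a countably infinite sum of pairwise
orthogonal projections, each equivalent to `p`. -/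
def ProperlyInfiniteProj (M : VonNeumannAlgebra H) (p : H →L[ℂ] H) : Prop :=
  p ≠ 0 ∧ ∃ e : ℕ → H →L[ℂ] H, (∀ n, IsProjIn M (e n)) ∧
    (Pairwise fun m n => e m * e n = 0) ∧ (∀ n, MvNEquiv M (e n) p) ∧
    ∀ ξ : H, HasSum (fun n => e n ξ) (p ξ)

/-- `z` is the central support of `h`: the smallest central projection with `z h = h`. -/
def IsCentralSupport (M : VonNeumannAlgebra H) (h z : H →L[ℂ] H) : Prop :=
  IsCentralProj M z ∧ z * h = h ∧ ∀ w, IsCentralProj M w → w * h = h → z * w = z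

/-- The projection `e` is σ-finite relative to `M`: every family of pairwise orthogonal
nonzero subprojections of `e` in `M` is countable. -/
def SigmaFiniteProj (M : VonNeumannAlgebra H) (e : H →L[ℂ] H) : Prop :=
  ∀ S : Set (H →L[ℂ] H), (∀ q ∈ S, IsProjIn M q ∧ q ≠ 0 ∧ ProjLE q e) →
    (S.Pairwise fun a b => a * b = 0) → S.Countable

/-- Kadison–Pedersen equivalence on the positive cone: `h ≈ k` iff there is a family
`{x_α} ⊆ M` with `h = Σ x_α* x_α` and `k = Σ x_α x_α*` (sums in the strong topology). -/
def KPEquiv (M : VonNeumannAlgebra H) (h k : H →L[ℂ] H) : Prop :=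
  ∃ (ι : Type u) (x : ι → H →L[ℂ] H), (∀ i, x i ∈ M) ∧
    (∀ ξ : H, HasSum (fun i => (adjoint (x i) * x i) ξ) (h ξ)) ∧
    (∀ ξ : H, HasSum (fun i => (x i * adjoint (x i)) ξ) (k ξ))

/-- Operator order: `a ≤ b` iff `b - a` is positive. -/
def OpLE (a b : H →L[ℂ] H) : Prop := (b - a).IsPositive

/-- `h ∈ M₊` is finite in the Kadison–Pedersen sense: `h ≈ k ≤ h` implies `k = h`. -/
def KPFinite (M : VonNeumannAlgebra H) (h : H →L[ℂ] H) : Prop :=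
  ∀ k, k ∈ M → k.IsPositive → OpLE k h → KPEquiv M h k → k = h

/-- `h ∈ M₊` is properly infinite: `z h` is finite and nonzero for no central projection `z`. -/
def KPProperlyInfinite (M : VonNeumannAlgebra H) (h : H →L[ℂ] H) : Prop :=
  h ≠ 0 ∧ ∀ z, IsCentralProj M z → KPFinite M (z * h) → z * h = 0

/-- The set of projections of `M`. -/
def ProjSet (M : VonNeumannAlgebra H) := {p : H →L[ℂ] H // IsProjIn M p}

/-- The strong operator topology on the projections of `M` (topology of pointwise convergence). -/
instance (M : VonNeumannAlgebra H) : TopologicalSpace (ProjSet M) :=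
  TopologicalSpace.induced (fun p : ProjSet M => (fun ξ => p.1 ξ : H → H)) inferInstance

/-- The quotient `P(M)/∼` of the projections of `M` by Murray–von Neumann equivalence,
carrying the quotient (strong operator) topology. -/
abbrev PQuot (M : VonNeumannAlgebra H) :=
  Quot (fun p q : ProjSet M => MvNEquiv M p.1 q.1)

/-- The quotient map `P(M) → P(M)/∼`. -/
def pquotMk (M : VonNeumannAlgebra H) : ProjSet M → PQuot M := Quot.mk _

/-- The strong operator topology on `B(H)`. -/
def SOT : TopologicalSpace (H →L[ℂ] H) :=
  TopologicalSpace.induced (fun a : H →L[ℂ] H => (fun ξ => a ξ : H → H)) inferInstance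

/-- The order induced on `P(M)/∼` by Murray–von Neumann subequivalence. -/
def QLE (M : VonNeumannAlgebra H) (a b : PQuot M) : Prop :=
  ∃ p q : ProjSet M, a = pquotMk M p ∧ b = pquotMk M q ∧ SubEquiv M p.1 q.1



namespace KPMvN


theorem mem_iff_comm (M : VonNeumannAlgebra H) (a : H →L[ℂ] H) :
    a ∈ M ↔ ∀ y ∈ M.commutant, y * a = a * y := by
  rw [← VonNeumannAlgebra.mem_commutant_iff, VonNeumannAlgebra.commutant_commutant]

theorem comm_of_mem {M : VonNeumannAlgebra H} {a y : H →L[ℂ] H} (ha : a ∈ M)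
    (hy : y ∈ M.commutant) : y * a = a * y := (mem_iff_comm M a).1 ha y hy

/-- A self-adjoint idempotent. -/
def Pr (e : H →L[ℂ] H) : Prop := star e = e ∧ e * e = e

theorem inner_star (a : H →L[ℂ] H) (x y : H) :
    inner ℂ (star a x) y = inner ℂ x (a y) := by
  rw [ContinuousLinearMap.star_eq_adjoint, ContinuousLinearMap.adjoint_inner_left]

theorem inner_star' (a : H →L[ℂ] H) (x y : H) :
    inner ℂ x (star a y) = inner ℂ (a x) y := by
  rw [ContinuousLinearMap.star_eq_adjoint, ContinuousLinearMap.adjoint_inner_right]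

theorem normsq_apply (a : H →L[ℂ] H) (x : H) :
    ((‖a x‖ ^ 2 : ℝ) : ℂ) = inner ℂ x ((star a * a) x) := by
  rw [mul_apply_eq_comp, inner_star', inner_self_eq_norm_sq_to_K]
  norm_cast

theorem eq_zero_of_star_mul {a : H →L[ℂ] H} (h : star a * a = 0) : a = 0 :=
  CStarRing.star_mul_self_eq_zero_iff a |>.1 h

/-- two operators with the same quadratic form are equal -/
theorem ext_quad {a b : H →L[ℂ] H} (h : ∀ x : H, inner ℂ x (a x) = inner ℂ x (b x)) : a = b := by
  have : (a : H →ₗ[ℂ] H) = b := by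
    refine (ext_inner_map _ _).1 fun x => ?_
    have := congrArg (starRingEnd ℂ) (h x)
    simpa [inner_conj_symm] using this
  exact ContinuousLinearMap.coe_injective this

theorem norm_eq_of_star_mul {a b : H →L[ℂ] H} (h : star a * a = star b * b) (x : H) :
    ‖a x‖ = ‖b x‖ := by
  have h1 := normsq_apply a x
  rw [h, ← normsq_apply b x] at h1
  have h2 : ‖a x‖ ^ 2 = ‖b x‖ ^ 2 := by exact_mod_cast h1
  exact (sq_eq_sq₀ (norm_nonneg _) (norm_nonneg _)).1 h2

theorem star_mul_eq_of_norm {a b : H →L[ℂ] H} (h : ∀ x, ‖a x‖ = ‖b x‖) :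
    star a * a = star b * b := by
  refine ext_quad fun x => ?_
  rw [← normsq_apply, ← normsq_apply, h]

theorem Pr.norm_le {e : H →L[ℂ] H} (he : Pr e) (x : H) : ‖e x‖ ≤ ‖x‖ := by
  have h1 : ((‖e x‖ ^ 2 : ℝ) : ℂ) = inner ℂ x (e x) := by rw [normsq_apply, he.1, he.2]
  have h2 : ‖e x‖ ^ 2 ≤ ‖x‖ * ‖e x‖ := by
    have := norm_inner_le_norm (𝕜 := ℂ) x (e x)
    rw [← h1] at this
    simpa using this
  rcases (norm_nonneg (e x)).eq_or_lt with h | h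
  · rw [← h]; exact norm_nonneg _
  · nlinarith

theorem Pr.one_sub {e : H →L[ℂ] H} (he : Pr e) : Pr (1 - e) := by
  refine ⟨by simp [he.1], ?_⟩
  simp [mul_sub, sub_mul, he.2]

theorem Pr.sub {p q : H →L[ℂ] H} (hp : Pr p) (hq : Pr q) (h : p * q = q) : Pr (p - q) := by
  have h' : q * p = q := by
    have := congrArg star h
    simpa [hp.1, hq.1] using this
  refine ⟨by simp [hp.1, hq.1], ?_⟩
  simp [mul_sub, sub_mul, hp.2, hq.2, h, h']

/-- orthogonal projection on the closed span of a set -/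
def projOn (A : Set H) : H →L[ℂ] H :=
  (Submodule.span ℂ A).topologicalClosure.starProjection

theorem projOn_pr (A : Set H) : Pr (projOn A) :=
  ⟨(isStarProjection_starProjection (U := (Submodule.span ℂ A).topologicalClosure)).isSelfAdjoint,
   (isStarProjection_starProjection (U := (Submodule.span ℂ A).topologicalClosure)).isIdempotentElem⟩

theorem projOn_self {A : Set H} {a : H} (ha : a ∈ A) : projOn A a = a :=
  Submodule.starProjection_eq_self_iff.2
    (Submodule.le_topologicalClosure _ (Submodule.subset_span ha))

theorem projOn_kill {A : Set H} {c : H →L[ℂ] H} (h : ∀ a ∈ A, c a = 0) : c * projOn A = 0 := by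
  have h1 : (Submodule.span ℂ A).topologicalClosure ≤ LinearMap.ker (c : H →ₗ[ℂ] H) := by
    refine Submodule.topologicalClosure_minimal _ ?_ c.isClosed_ker
    exact Submodule.span_le.2 h
  ext x
  exact h1 (Submodule.starProjection_apply_mem _ x)

theorem projOn_comm {A : Set H} {y : H →L[ℂ] H} (h1 : ∀ a ∈ A, y a ∈ A)
    (h2 : ∀ a ∈ A, star y a ∈ A) : y * projOn A = projOn A * y := by
  have k : ∀ w : H →L[ℂ] H, (∀ a ∈ A, w a ∈ A) → w * projOn A = projOn A * w * projOn A := by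
    intro w hw
    have := projOn_kill (A := A) (c := (1 - projOn A) * w) (fun a ha => by
      simp [projOn_self (hw a ha)])
    rw [sub_mul, sub_mul, sub_eq_zero, one_mul] at this
    exact this
  have e1 := k y h1
  have e2 := congrArg star (k _ h2)
  simp only [star_mul, star_star, (projOn_pr A).1] at e2
  rw [e2, ← mul_assoc]
  exact e1

theorem projOn_mem {M : VonNeumannAlgebra H} {A : Set H}
    (h : ∀ y ∈ M.commutant, ∀ a ∈ A, y a ∈ A) : projOn A ∈ M :=
  (mem_iff_comm _ _).2 fun y hy => projOn_comm (h y hy) (h _ (star_mem hy))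

/-- range projection -/
theorem exists_range_proj {M : VonNeumannAlgebra H} {a : H →L[ℂ] H} (ha : a ∈ M) :
    ∃ E ∈ M, Pr E ∧ E * a = a ∧ ∀ c : H →L[ℂ] H, c * a = 0 → c * E = 0 := by
  refine ⟨projOn (Set.range a), projOn_mem ?_, projOn_pr _, ?_, ?_⟩
  · rintro y hy _ ⟨x, rfl⟩
    exact ⟨y x, (DFunLike.congr_fun (comm_of_mem ha hy) x).symm⟩
  · ext x
    exact projOn_self ⟨x, rfl⟩
  · intro c hc
    refine projOn_kill ?_
    rintro _ ⟨x, rfl⟩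
    exact DFunLike.congr_fun hc x

/-- central separation -/
theorem central_sep {M : VonNeumannAlgebra H} {r s : H →L[ℂ] H} (hr : r ∈ M)
    (h : ∀ x ∈ M, s * x * r = 0) :
    ∃ z ∈ M, Pr z ∧ (∀ x ∈ M, z * x = x * z) ∧ z * r = r ∧ s * z = 0 := by
  set A : Set H := {v | ∃ x ∈ M, ∃ η, v = x (r η)} with hA
  have hM : ∀ x ∈ M, ∀ a ∈ A, x a ∈ A := by
    rintro x hx _ ⟨y, hy, η, rfl⟩
    exact ⟨x * y, mul_mem hx hy, η, rfl⟩
  refine ⟨projOn A, projOn_mem ?_, projOn_pr _, ?_, ?_, ?_⟩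
  · rintro y hy _ ⟨x, hx, η, rfl⟩
    refine ⟨x, hx, y η, ?_⟩
    have := DFunLike.congr_fun (comm_of_mem (mul_mem hx hr) hy) η
    exact this
  · intro x hx
    exact (projOn_comm (hM x hx) (hM _ (star_mem hx))).symm
  · ext η
    exact projOn_self ⟨1, one_mem _, η, rfl⟩
  · refine projOn_kill ?_
    rintro _ ⟨x, hx, η, rfl⟩
    exact DFunLike.congr_fun (h x hx) η

end KPMvN


namespace KPMvN

/-- partial isometries -/
def PI (u : H →L[ℂ] H) : Prop := u * star u * u = u

theorem PI.star {u : H →L[ℂ] H} (h : PI u) : PI (star u) := by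
  have := congrArg Star.star h
  simp only [PI, star_mul, star_star] at this ⊢
  rw [mul_assoc, this]

theorem PI.pr {u : H →L[ℂ] H} (h : PI u) : Pr (Star.star u * u) := by
  refine ⟨by simp, ?_⟩
  have h' : u * (Star.star u * u) = u := by rw [← mul_assoc]; exact h
  rw [mul_assoc, h']

theorem PI.pr' {u : H →L[ℂ] H} (h : PI u) : Pr (u * Star.star u) := by
  simpa using h.star.pr

theorem PI.right {u : H →L[ℂ] H} (h : PI u) : u * (Star.star u * u) = u := by
  rw [← mul_assoc]; exact h

theorem PI.right' {u : H →L[ℂ] H} (h : PI u) : Star.star u * (u * Star.star u) = Star.star u := by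
  simpa using h.star.right

theorem PI.of_pr {u e : H →L[ℂ] H} (he : Pr e) (h : Star.star u * u = e) : PI u := by
  have : Star.star (u - u * e) * (u - u * e) = 0 := by
    simp only [star_sub, star_mul, he.1, sub_mul, mul_sub]
    rw [h]
    have : Star.star u * (u * e) = e := by rw [← mul_assoc, h, he.2]
    rw [this]
    simp only [mul_assoc]
    rw [this, h, he.2]
    simp
  have := eq_zero_of_star_mul this
  rw [PI, mul_assoc, h]
  exact (sub_eq_zero.1 this).symm

theorem PI.norm_sq {u : H →L[ℂ] H} (h : PI u) (η : H) :
    ‖u η‖ = ‖(Star.star u * u) η‖ := by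
  refine norm_eq_of_star_mul ?_ η
  rw [h.pr.1, h.pr.2]

theorem PI.norm_le {u : H →L[ℂ] H} (h : PI u) (η : H) : ‖u η‖ ≤ ‖η‖ := by
  rw [h.norm_sq]; exact h.pr.norm_le η

theorem Pr.pi {e : H →L[ℂ] H} (h : Pr e) : PI e := by
  rw [PI, h.1, h.2, h.2]

/-- strongly convergent sums of operators with orthogonal ranges -/
theorem exists_sum {M : VonNeumannAlgebra H} {J : Type*} (v : J → H →L[ℂ] H)
    (hM : ∀ i, v i ∈ M) (ho : ∀ i j, i ≠ j → star (v i) * v j = 0) (C : ℝ)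
    (hb : ∀ η (s : Finset J), ∑ i ∈ s, ‖v i η‖ ^ 2 ≤ C * ‖η‖ ^ 2) :
    ∃ w ∈ M, (∀ η, HasSum (fun i => v i η) (w η)) ∧
      ∀ η, HasSum (fun i => ‖v i η‖ ^ 2) (‖w η‖ ^ 2) := by
  have hV : OrthogonalFamily ℂ (fun i => LinearMap.range (v i : H →ₗ[ℂ] H))
      (fun i => (LinearMap.range (v i : H →ₗ[ℂ] H)).subtypeₗᵢ) := by
    intro i j hij
    rintro ⟨_, a, rfl⟩ ⟨_, b, rfl⟩
    have : inner ℂ a ((star (v i) * v j) b) = inner ℂ (v i a) (v j b) := by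
      rw [mul_apply_eq_comp, inner_star']
    rw [ho i j hij] at this
    simpa using this.symm
  have hs2 : ∀ η, Summable fun i => ‖v i η‖ ^ 2 := fun η =>
    summable_of_sum_le (fun i => by positivity) (hb η)
  have hs : ∀ η, Summable fun i => v i η := fun η =>
    (hV.summable_iff_norm_sq_summable (fun i => ⟨v i η, η, rfl⟩)).2 (hs2 η)
  have hfin : ∀ η (s : Finset J), ‖∑ i ∈ s, v i η‖ ^ 2 = ∑ i ∈ s, ‖v i η‖ ^ 2 := fun η s =>
    hV.norm_sum (fun i => ⟨v i η, η, rfl⟩) s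
  have hlim : ∀ η, HasSum (fun i => ‖v i η‖ ^ 2) (‖∑' i, v i η‖ ^ 2) := by
    intro η
    have h1 : Tendsto (fun s : Finset J => ‖∑ i ∈ s, v i η‖ ^ 2) atTop (𝓝 (‖∑' i, v i η‖ ^ 2)) :=
      ((hs η).hasSum.norm).pow 2
    simp only [hfin] at h1
    exact h1
  let L : H →ₗ[ℂ] H :=
    { toFun := fun η => ∑' i, v i η
      map_add' := fun a b => by
        simp only [map_add]
        exact (hs a).tsum_add (hs b)
      map_smul' := fun c a => by
        simp only [map_smul, RingHom.id_apply]
        exact (hs a).tsum_const_smul c }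
  let w : H →L[ℂ] H := L.mkContinuous (Real.sqrt C) (fun η => by
    refine (sq_le_sq₀ (norm_nonneg _) (by positivity)).1 ?_
    have h1 : ‖L η‖ ^ 2 ≤ C * ‖η‖ ^ 2 := hasSum_le_of_sum_le (hlim η) (hb η)
    rw [mul_pow]
    rcases le_or_gt 0 C with hC | hC
    · rwa [Real.sq_sqrt hC]
    · have : C * ‖η‖ ^ 2 ≤ 0 := mul_nonpos_of_nonpos_of_nonneg hC.le (by positivity)
      exact h1.trans (this.trans (by positivity)))
  have hw : ∀ η, HasSum (fun i => v i η) (w η) := fun η => (hs η).hasSum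
  refine ⟨w, (mem_iff_comm _ _).2 fun y hy => ?_, hw, hlim⟩
  ext η
  have h1 := (hw η).mapL y
  have h2 : (fun i => y (v i η)) = fun i => v i (y η) := by
    funext i
    exact DFunLike.congr_fun (comm_of_mem (hM i) hy) η
  rw [h2] at h1
  exact h1.unique (hw (y η))

theorem sum_kill {J : Type*} {v : J → H →L[ℂ] H} {w : H →L[ℂ] H}
    (hw : ∀ η, HasSum (fun i => v i η) (w η)) {c : H →L[ℂ] H} (h : ∀ i, c * v i = 0) :
    c * w = 0 := by
  ext η
  have h1 := (hw η).mapL c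
  have h2 : (fun i => c (v i η)) = fun i => 0 := by
    funext i
    exact DFunLike.congr_fun (h i) η
  rw [h2] at h1
  exact h1.unique hasSum_zero

theorem sum_fix {J : Type*} {v : J → H →L[ℂ] H} {w : H →L[ℂ] H}
    (hw : ∀ η, HasSum (fun i => v i η) (w η)) {c : H →L[ℂ] H} (h : ∀ i, c * v i = v i) :
    c * w = w := by
  have := sum_kill hw (c := 1 - c) (fun i => by rw [sub_mul, h i, one_mul, sub_self])
  rw [sub_mul, one_mul, sub_eq_zero] at this
  exact this.symm

theorem sum_fix_right {J : Type*} {v : J → H →L[ℂ] H} {w : H →L[ℂ] H}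
    (hw : ∀ η, HasSum (fun i => v i η) (w η)) {c : H →L[ℂ] H} (h : ∀ i, v i * c = v i) :
    w * c = w := by
  ext η
  have h1 := hw (c η)
  have h2 : (fun i => v i (c η)) = fun i => v i η := by
    funext i
    exact DFunLike.congr_fun (h i) η
  rw [h2] at h1
  exact h1.unique (hw η)

theorem sum_comm {J : Type*} {v : J → H →L[ℂ] H} {w : H →L[ℂ] H}
    (hw : ∀ η, HasSum (fun i => v i η) (w η)) {c d : H →L[ℂ] H} (h : ∀ i, c * v i = v i * d) :
    c * w = w * d := by
  ext η
  have h1 := (hw η).mapL c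
  have h2 : (fun i => c (v i η)) = fun i => v i (d η) := by
    funext i
    exact DFunLike.congr_fun (h i) η
  rw [h2] at h1
  exact h1.unique (hw (d η))

theorem sum_single {J : Type*} {v : J → H →L[ℂ] H} {w : H →L[ℂ] H}
    (hw : ∀ η, HasSum (fun i => v i η) (w η)) {c : H →L[ℂ] H} (j : J)
    (h : ∀ i, i ≠ j → c * v i = 0) : c * w = c * v j := by
  ext η
  have h1 := (hw η).mapL c
  have h2 : HasSum (fun i => c (v i η)) (c (v j η)) :=
    hasSum_single j (fun i hi => DFunLike.congr_fun (h i hi) η)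
  exact h1.unique h2

theorem sum_single_right {J : Type*} {v : J → H →L[ℂ] H} {w : H →L[ℂ] H}
    (hw : ∀ η, HasSum (fun i => v i η) (w η)) {c : H →L[ℂ] H} (j : J)
    (h : ∀ i, i ≠ j → v i * c = 0) : w * c = v j * c := by
  ext η
  have h2 : HasSum (fun i => v i (c η)) (v j (c η)) :=
    hasSum_single j (fun i hi => DFunLike.congr_fun (h i hi) η)
  exact (hw (c η)).unique h2

theorem bessel {J : Type*} (v : J → H →L[ℂ] H) (hpi : ∀ i, PI (v i))
    (ho : ∀ i j, i ≠ j → v i * star (v j) = 0) (η : H) (s : Finset J) :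
    ∑ i ∈ s, ‖v i η‖ ^ 2 ≤ 1 * ‖η‖ ^ 2 := by
  classical
  set w : H →L[ℂ] H := ∑ i ∈ s, star (v i) * v i with hw
  have hpr : Pr w := by
    refine ⟨by simp [hw, star_sum], ?_⟩
    rw [hw, Finset.sum_mul_sum]
    refine Finset.sum_congr rfl fun i hi => ?_
    rw [Finset.sum_eq_single i]
    · exact (hpi i).pr.2
    · intro j _ hj
      rw [mul_assoc, ← mul_assoc (v i), ho i j hj.symm]
      simp
    · exact fun h => (h hi).elim
  have h1 : ((∑ i ∈ s, ‖v i η‖ ^ 2 : ℝ) : ℂ) = ((‖w η‖ ^ 2 : ℝ) : ℂ) := by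
    rw [normsq_apply w, hpr.1, hpr.2, hw, Complex.ofReal_sum]
    simp only [normsq_apply, ContinuousLinearMap.sum_apply, inner_sum]
  have h2 : ∑ i ∈ s, ‖v i η‖ ^ 2 = ‖w η‖ ^ 2 := by exact_mod_cast h1
  rw [h2, one_mul]
  exact pow_le_pow_left₀ (norm_nonneg _) (hpr.norm_le η) 2

theorem exists_pi_sum {M : VonNeumannAlgebra H} {J : Type*} (v : J → H →L[ℂ] H)
    (hM : ∀ i, v i ∈ M) (hpi : ∀ i, PI (v i))
    (h1 : ∀ i j, i ≠ j → star (v i) * v j = 0) (h2 : ∀ i j, i ≠ j → v i * star (v j) = 0) :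
    ∃ w ∈ M, PI w ∧ (∀ η, HasSum (fun i => v i η) (w η)) ∧
      (∀ η, HasSum (fun i => star (v i) η) (star w η)) ∧
      (∀ η, HasSum (fun i => ‖v i η‖ ^ 2) (‖w η‖ ^ 2)) ∧
      (∀ η, HasSum (fun i => ‖star (v i) η‖ ^ 2) (‖star w η‖ ^ 2)) := by
  obtain ⟨w, hwM, hw, hw2⟩ := exists_sum v hM h1 1 (bessel v hpi h2)
  obtain ⟨w', hwM', hw', hw2'⟩ := exists_sum (fun i => star (v i)) (fun i => star_mem (hM i))
    (fun i j hij => by simpa using h2 i j hij) 1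
    (bessel (fun i => star (v i)) (fun i => (hpi i).star)
      (fun i j hij => by simpa using h1 i j hij))
  have e : w' = star w := by
    ext η
    refine ext_inner_left ℂ fun ζ => ?_
    rw [inner_star']
    have a1 := (hw' η).mapL (innerSL ℂ ζ)
    have a2 : HasSum (fun i => inner ℂ (v i ζ) η) (inner ℂ (w ζ) η) := by
      have := ((hw ζ).mapL (innerSL ℂ η)).star
      simpa using this
    simp only [innerSL_apply_apply, inner_star'] at a1
    exact a1.unique a2
  subst e
  refine ⟨w, hwM, ?_, hw, hw', hw2, hw2'⟩
  have e1 : ∀ i, w * star (v i) = v i * star (v i) := fun i =>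
    sum_single_right hw i (fun j hj => h2 j i hj)
  have e2 : ∀ i, star w * v i = star (v i) * v i := fun i => by
    have := congrArg star (sum_single hw (c := star (v i)) i (fun j hj => h1 i j hj.symm))
    simpa using this
  have : (w * star w) * w = w := sum_fix hw fun i => by
    rw [mul_assoc, e2, ← mul_assoc, e1]
    exact hpi i
  exact this

theorem exhaust2 (M : VonNeumannAlgebra H) (P : (H →L[ℂ] H) → Prop) :
    ∃ (S : Set (H →L[ℂ] H)) (w : H →L[ℂ] H), (∀ u ∈ S, u ∈ M ∧ PI u ∧ P u) ∧
      w ∈ M ∧ PI w ∧ (∀ η, HasSum (fun i : S => i.1 η) (w η)) ∧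
      (∀ η, HasSum (fun i : S => star i.1 η) (star w η)) ∧
      (∀ η, HasSum (fun i : S => ‖i.1 η‖ ^ 2) (‖w η‖ ^ 2)) ∧
      (∀ η, HasSum (fun i : S => ‖star i.1 η‖ ^ 2) (‖star w η‖ ^ 2)) ∧
      (∀ u ∈ M, PI u → P u → star w * u = 0 → w * star u = 0 → u = 0) ∧
      (∀ i : S, star w * i.1 = star i.1 * i.1 ∧ w * star i.1 = i.1 * star i.1) := by
  obtain ⟨S, hS⟩ := zorn_subset {S : Set (H →L[ℂ] H) | (∀ u ∈ S, u ∈ M ∧ PI u ∧ P u) ∧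
      S.Pairwise (fun a b => star a * b = 0 ∧ a * star b = 0)} (by
    intro c hc hchain
    refine ⟨⋃₀ c, ⟨?_, ?_⟩, fun s hs => Set.subset_sUnion_of_mem hs⟩
    · rintro u ⟨s, hs, hu⟩
      exact (hc hs).1 u hu
    · exact (Set.pairwise_sUnion hchain.directedOn).2 fun s hs => (hc hs).2)
  obtain ⟨⟨hS1, hS2⟩, hmax⟩ := hS
  have ho : ∀ i j : S, i ≠ j → star i.1 * j.1 = 0 ∧ i.1 * star j.1 = 0 := fun i j hij =>
    hS2 i.2 j.2 (fun h => hij (Subtype.ext h))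
  obtain ⟨w, hwM, hwpi, k1, k2, k3, k4⟩ := exists_pi_sum (M := M) (fun i : S => i.1)
    (fun i => (hS1 i.1 i.2).1) (fun i => (hS1 i.1 i.2).2.1)
    (fun i j hij => (ho i j hij).1) (fun i j hij => (ho i j hij).2)
  have e1 : ∀ i : S, w * star i.1 = i.1 * star i.1 := fun i =>
    sum_single_right k1 i (fun j hj => (ho j i hj).2)
  have e2 : ∀ i : S, star i.1 * w = star i.1 * i.1 := fun i =>
    sum_single k1 i (fun j hj => (ho i j hj.symm).1)
  refine ⟨S, w, hS1, hwM, hwpi, k1, k2, k3, k4, ?_, fun i => ⟨?_, e1 i⟩⟩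
  swap
  · have := congrArg star (e2 i)
    simpa using this
  intro u huM hu hPu a1 a2
  have b1 : ∀ i : S, star i.1 * u = 0 := by
    intro i
    have : star i.1 = star i.1 * i.1 * star w := by
      have h3 : star (w * star i.1) = i.1 * star w := by simp
      rw [mul_assoc, ← h3, e1]
      simp [(hS1 i.1 i.2).2.1.right']
    rw [this, mul_assoc, a1, mul_zero]
  have b2 : ∀ i : S, i.1 * star u = 0 := by
    intro i
    have : i.1 = i.1 * star i.1 * w := by
      rw [mul_assoc, e2, (hS1 i.1 i.2).2.1.right]
    rw [this, mul_assoc, a2, mul_zero]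
  have hmem : u ∈ S := by
    refine hmax (y := insert u S) ⟨?_, ?_⟩ (Set.subset_insert _ _) (Set.mem_insert _ _)
    · rintro v (rfl | hv)
      · exact ⟨huM, hu, hPu⟩
      · exact hS1 v hv
    · refine hS2.insert fun v hv _ => ?_
      have c1 := b1 ⟨v, hv⟩
      have c2 := b2 ⟨v, hv⟩
      have c3 := congrArg star c1
      have c4 := congrArg star c2
      simp only [star_mul, star_star, star_zero] at c3 c4
      exact ⟨⟨c3, c4⟩, c1, c2⟩
  exact eq_zero_of_star_mul (b1 ⟨u, hmem⟩)

theorem exhaust (M : VonNeumannAlgebra H) (P : (H →L[ℂ] H) → Prop) :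
    ∃ (S : Set (H →L[ℂ] H)) (w : H →L[ℂ] H), (∀ u ∈ S, u ∈ M ∧ PI u ∧ P u) ∧
      w ∈ M ∧ PI w ∧ (∀ η, HasSum (fun i : S => i.1 η) (w η)) ∧
      (∀ η, HasSum (fun i : S => star i.1 η) (star w η)) ∧
      (∀ η, HasSum (fun i : S => ‖i.1 η‖ ^ 2) (‖w η‖ ^ 2)) ∧
      (∀ η, HasSum (fun i : S => ‖star i.1 η‖ ^ 2) (‖star w η‖ ^ 2)) ∧
      (∀ u ∈ M, PI u → P u → star w * u = 0 → w * star u = 0 → u = 0) := by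
  obtain ⟨S, w, a1, a2, a3, a4, a5, a6, a7, a8, -⟩ := exhaust2 M P
  exact ⟨S, w, a1, a2, a3, a4, a5, a6, a7, a8⟩

end KPMvN


namespace KPMvN

theorem polar {M : VonNeumannAlgebra H} {x : H →L[ℂ] H} (hx : x ∈ M) :
    ∃ t ∈ M, PI t ∧ (∃ h : H →L[ℂ] H, star h = h ∧ h * h = star x * x ∧ x = t * h ∧
      star t * t * h = h) ∧
      (∀ c : H →L[ℂ] H, c * x = 0 → c * t = 0) ∧ (∀ c : H →L[ℂ] H, x * c = 0 → t * c = 0) := by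
  set h : H →L[ℂ] H := CFC.abs x with hh
  have hsa : star h = h := (CFC.abs_nonneg x).isSelfAdjoint
  have hsq : h * h = star x * x := CFC.abs_mul_abs x
  have hcom : ∀ y ∈ M.commutant, y * h = h * y := by
    intro y hy
    have c1 : Commute x y := (comm_of_mem hx hy).symm
    have c2 : Commute x (star y) := (comm_of_mem hx (star_mem hy)).symm
    exact c1.cfcAbs_right c2
  have hnorm : ∀ η, ‖x η‖ = ‖h η‖ := norm_eq_of_star_mul (by rw [hsa, hsq])
  let K := LinearMap.ker (h : H →ₗ[ℂ] H)
  let e : (H × K) →ₗ[ℂ] H := (h : H →ₗ[ℂ] H).coprod K.subtype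
  let f : (H × K) →ₗ[ℂ] H := (x : H →ₗ[ℂ] H).coprod 0
  have horth : ∀ η (ζ : K), inner ℂ (h η) (ζ : H) = 0 := by
    intro η ζ
    have hz : h ζ = 0 := ζ.2
    rw [← hsa, inner_star, hz, inner_zero_right]
  have hbd : ∀ v, ‖f v‖ ≤ 1 * ‖e v‖ := by
    rintro ⟨η, ζ⟩
    have h1 : f (η, ζ) = x η := by simp [f]
    have h2 : e (η, ζ) = h η + ζ := by simp [e]
    rw [h1, h2, hnorm, one_mul]
    refine (sq_le_sq₀ (norm_nonneg _) (norm_nonneg _)).1 ?_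
    have := norm_add_sq_eq_norm_sq_add_norm_sq_of_inner_eq_zero (h η) (ζ : H) (horth η ζ)
    nlinarith [norm_nonneg (ζ : H)]
  have hdense : DenseRange e := by
    have h1 : (LinearMap.range e)ᗮ = ⊥ := by
      rw [Submodule.eq_bot_iff]
      intro v hv
      rw [Submodule.mem_orthogonal] at hv
      have a1 : ∀ η, inner ℂ (h η) v = 0 := fun η => hv _ ⟨(η, 0), by simp [e]⟩
      have a2 : h v = 0 := by
        refine ext_inner_left ℂ fun η => ?_
        rw [inner_zero_right, ← inner_star, hsa, a1]
      have a3 : inner ℂ v v = 0 := hv _ ⟨(0, ⟨v, a2⟩), by simp [e]⟩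
      exact inner_self_eq_zero.1 a3
    have h2 := (Submodule.topologicalClosure_eq_top_iff (K := LinearMap.range e)).2 h1
    have h3 : Dense ((LinearMap.range e : Submodule ℂ H) : Set H) := by
      rw [Submodule.dense_iff_topologicalClosure_eq_top]; exact h2
    exact h3
  set t : H →L[ℂ] H := f.extendOfNorm e with ht
  have te : ∀ v, t (e v) = f v := LinearMap.extendOfNorm_eq hdense ⟨1, hbd⟩
  have tn : ∀ v, ‖t v‖ ≤ ‖v‖ := fun v => by
    have := LinearMap.norm_extendOfNorm_apply_le hdense 1 hbd v
    simpa using this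
  have tspec : ∀ η (ζ : K), t (h η + ζ) = x η := fun η ζ => by
    have := te (η, ζ)
    simpa [e, f] using this
  have th : ∀ η, t (h η) = x η := fun η => by simpa using tspec η 0
  have tk : ∀ ζ, h ζ = 0 → t ζ = 0 := fun ζ hz => by simpa using tspec 0 ⟨ζ, hz⟩
  have hext : ∀ a b : H →L[ℂ] H, (∀ η (ζ : K), a (h η + ζ) = b (h η + ζ)) → a = b := by
    intro a b hab
    have : (a : H → H) = b := hdense.equalizer a.continuous b.continuous (by
      funext v
      obtain ⟨η, ζ⟩ := v
      have := hab η ζ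
      simpa [e] using this)
    exact DFunLike.coe_injective this
  have tth : star t * t * h = h := by
    ext η
    have : ‖(star t * t * h) η - h η‖ ^ 2 ≤ 0 := by
      have e1 : (star t * t * h) η = star t (x η) := by
        simp [th]
      rw [e1]
      have e2 : ‖star t (x η)‖ ≤ ‖x η‖ := by
        have b1 : ‖star t‖ ≤ 1 := by
          rw [norm_star]
          exact t.opNorm_le_bound zero_le_one (fun v => by simpa using tn v)
        calc _ ≤ ‖star t‖ * ‖x η‖ := (star t).le_opNorm _
          _ ≤ 1 * ‖x η‖ := by gcongr
          _ = _ := one_mul _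
      rw [@norm_sub_sq ℂ, inner_star, th, inner_self_eq_norm_sq]
      have e3 := hnorm η
      nlinarith [norm_nonneg (star t (x η)), norm_nonneg (x η)]
    have h0 : ‖(star t * t * h) η - h η‖ = 0 := by nlinarith [norm_nonneg ((star t * t * h) η - h η)]
    exact sub_eq_zero.1 (norm_eq_zero.1 h0)
  refine ⟨t, ?_, ?_, ⟨h, hsa, hsq, ?_, tth⟩, ?_, ?_⟩
  · refine (mem_iff_comm _ _).2 fun y hy => hext _ _ fun η ζ => ?_
    have c1 : ∀ v, h (y v) = y (h v) := fun v => (DFunLike.congr_fun (hcom y hy) v).symm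
    have c2 : ∀ v, x (y v) = y (x v) := fun v => (DFunLike.congr_fun (comm_of_mem hx hy) v).symm
    have hz : h ζ = 0 := ζ.2
    have c3 : t (y ζ) = 0 := tk _ (by rw [c1, hz, map_zero])
    have l : (y * t) (h η + ζ) = y (x η) := by
      rw [mul_apply_eq_comp, tspec]
    rw [l, mul_apply_eq_comp, map_add, map_add, ← c1, th, c2, c3, add_zero]
  · refine hext _ _ fun η ζ => ?_
    have := DFunLike.congr_fun tth η
    have hz : t ζ = 0 := tk _ ζ.2
    have e1 : star t (t (h η)) = h η := this
    simp only [mul_apply_eq_comp, map_add, hz, map_zero, add_zero]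
    rw [e1]
  · ext η
    exact (th η).symm
  · intro c hc
    refine hext _ _ fun η ζ => ?_
    rw [mul_apply_eq_comp, tspec]
    exact DFunLike.congr_fun hc η
  · intro c hc
    ext η
    have h1 : x (c η) = 0 := DFunLike.congr_fun hc η
    refine tk _ ?_
    rw [← norm_eq_zero]
    change ‖h (c η)‖ = 0
    rw [← hnorm, h1, norm_zero]

/-- consequences of `polar` in the form used below -/
theorem polar_sub {M : VonNeumannAlgebra H} {x r s : H →L[ℂ] H} (hx : x ∈ M) (h0 : x ≠ 0)
    (hr : x * r = x) (hs : s * x = x) :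
    ∃ t ∈ M, PI t ∧ t ≠ 0 ∧ t * r = t ∧ s * t = t := by
  obtain ⟨t, htM, ht, ⟨h, _, _, e, _⟩, k1, k2⟩ := polar hx
  refine ⟨t, htM, ht, ?_, ?_, ?_⟩
  · rintro rfl
    exact h0 (by rw [e, zero_mul])
  · have := k2 (1 - r) (by rw [mul_sub, hr, mul_one, sub_self])
    rw [mul_sub, mul_one, sub_eq_zero] at this
    exact this.symm
  · have := k1 (1 - s) (by rw [sub_mul, hs, one_mul, sub_self])
    rw [sub_mul, one_mul, sub_eq_zero] at this
    exact this.symm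

theorem slices {a : H →L[ℂ] H} (ha : 0 ≤ a) (n : ℕ) (c : ℝ) (hc : 0 < c) (hn : ‖a‖ ≤ n * c) :
    ∃ d : ℕ → H →L[ℂ] H, (∀ k, star (d k) = d k) ∧ (∀ k, 0 ≤ d k) ∧
      (∀ k, d k ≤ algebraMap ℝ _ c) ∧ (∀ k y, y * a = a * y → y * d k = d k * y) ∧
      (∑ k ∈ Finset.range n, d k = a) ∧ (∀ k, d k * d (k + 1) = c • d (k + 1)) := by
  have hsa : IsSelfAdjoint a := ha.isSelfAdjoint
  let g : ℕ → ℝ → ℝ := fun k t => max (t - k * c) 0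
  let f : ℕ → ℝ → ℝ := fun k t => g k t - g (k + 1) t
  have hg : ∀ k, Continuous (g k) := fun k => by fun_prop
  have hf : ∀ k, Continuous (f k) := fun k => (hg k).sub (hg (k+1))
  have hf0 : ∀ k t, 0 ≤ f k t := by
    intro k t
    simp only [f, g]
    push_cast
    have : t - (k + 1) * c ≤ t - k * c := by nlinarith
    have := max_le_max_right 0 this
    linarith
  have hfc : ∀ k t, f k t ≤ c := by
    intro k t
    simp only [f, g]
    push_cast
    have h1 := le_max_left (t - (k + 1) * c) 0
    have h2 := le_max_right (t - (k + 1) * c) 0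
    rcases max_cases (t - k * c) 0 with h | h <;> nlinarith
  refine ⟨fun k => cfc (f k) a, fun k => ?_, fun k => ?_, fun k => ?_, fun k y hy => ?_, ?_, fun k => ?_⟩
  · exact (cfc_predicate (f k) a : IsSelfAdjoint _)
  · exact cfc_nonneg fun t _ => hf0 k t
  · exact cfc_le_algebraMap (f k) c a (fun t _ => hfc k t) (hf k).continuousOn
  · have h1 : Commute a y := hy.symm
    exact (h1.cfc_real (f k)).symm
  · have h1 : ∀ m, ∑ k ∈ Finset.range m, cfc (f k) a = cfc (g 0) a - cfc (g m) a := by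
      intro m
      induction m with
      | zero => simp
      | succ m ih =>
        rw [Finset.sum_range_succ, ih]
        have : cfc (f m) a = cfc (g m) a - cfc (g (m+1)) a :=
          cfc_sub (g m) (g (m+1)) a (hg m).continuousOn (hg (m+1)).continuousOn
        rw [this]; abel
    rw [h1]
    have e0 : cfc (g 0) a = a := by
      have : cfc (g 0) a = cfc (fun t : ℝ => t) a := cfc_congr fun t ht => by
        have : 0 ≤ t := spectrum_nonneg_of_nonneg ha ht
        simp [g, this]
      rw [this, cfc_id' ℝ a]
    have en : cfc (g n) a = 0 := by
      have : cfc (g n) a = cfc (fun _ : ℝ => (0 : ℝ)) a := cfc_congr fun t ht => by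
        have h2 : ‖t‖ ≤ ‖a‖ := by
          rcases subsingleton_or_nontrivial H with hs | hs
          · have := spectrum.of_subsingleton (R := ℝ) a
            rw [this] at ht; exact ht.elim
          · exact spectrum.norm_le_norm_of_mem ht
        have : t ≤ n * c := (le_abs_self t).trans (h2.trans hn)
        simp only [g]
        exact max_eq_right (by linarith)
      rw [this, cfc_const_zero]
    rw [e0, en, sub_zero]
  · rw [← cfc_mul (f k) (f (k+1)) a (hf k).continuousOn (hf (k+1)).continuousOn,
      ← cfc_const_mul c (f (k+1)) a (hf (k+1)).continuousOn]
    refine cfc_congr fun t _ => ?_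
    simp only [f, g]
    push_cast
    rcases le_or_gt t ((k+1) * c) with h | h
    · have h1 : t - (k + 1) * c ≤ 0 := by linarith
      have h2 : t - (k + 1 + 1) * c ≤ 0 := by nlinarith
      simp [max_eq_right h1, max_eq_right h2]
    · have h1 : 0 ≤ t - (k + 1) * c := by linarith
      have h2 : 0 ≤ t - k * c := by nlinarith
      rw [max_eq_left h1, max_eq_left h2]
      ring

end KPMvN


namespace KPMvN

theorem Pr.flip {s t : H →L[ℂ] H} (hs : Pr s) (h : s * t = t) : star t * s = star t := by
  have := congrArg star h
  simpa [hs.1] using this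

theorem Pr.flip' {s t : H →L[ℂ] H} (hs : Pr s) (h : t * s = t) : s * star t = star t := by
  have := congrArg star h
  simpa [hs.1] using this

theorem Pr.flip0 {s t : H →L[ℂ] H} (hs : Pr s) (h : s * t = 0) : star t * s = 0 := by
  have := congrArg star h
  simpa [hs.1] using this

theorem Pr.flip0' {s t : H →L[ℂ] H} (hs : Pr s) (h : t * s = 0) : s * star t = 0 := by
  have := congrArg star h
  simpa [hs.1] using this

/-- quadratic form -/
def qf (b : H →L[ℂ] H) (η : H) : ℝ := RCLike.re (inner ℂ η (b η))

theorem qf_star_mul (a : H →L[ℂ] H) (η : H) : qf (star a * a) η = ‖a η‖ ^ 2 := by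
  rw [qf, ← normsq_apply]; exact Complex.ofReal_re _

theorem qf_conj (a b : H →L[ℂ] H) (η : H) : qf (star a * b * a) η = qf b (a η) := by
  rw [qf, qf, mul_apply_eq_comp, mul_apply_eq_comp, inner_star']

theorem qf_nonneg {b : H →L[ℂ] H} (hb : 0 ≤ b) (η : H) : 0 ≤ qf b η := by
  obtain ⟨a, rfl⟩ := CStarAlgebra.nonneg_iff_eq_star_mul_self.1 hb
  rw [qf_star_mul]; positivity

theorem qf_sub (a b : H →L[ℂ] H) (η : H) : qf (a - b) η = qf a η - qf b η := by
  simp [qf, inner_sub_right]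

theorem qf_add (a b : H →L[ℂ] H) (η : H) : qf (a + b) η = qf a η + qf b η := by
  simp [qf, inner_add_right]

theorem qf_mono {a b : H →L[ℂ] H} (h : a ≤ b) (η : H) : qf a η ≤ qf b η := by
  have := qf_nonneg (sub_nonneg.2 h) η
  rw [qf_sub] at this
  linarith

theorem qf_sum {J : Type*} (s : Finset J) (b : J → H →L[ℂ] H) (η : H) :
    qf (∑ i ∈ s, b i) η = ∑ i ∈ s, qf (b i) η := by
  simp [qf, ContinuousLinearMap.sum_apply, inner_sum]

theorem qf_smul (c : ℝ) (a : H →L[ℂ] H) (η : H) : qf (c • a) η = c * qf a η := by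
  have : (c • a) η = (c : ℂ) • a η := by simp
  rw [qf, this, inner_smul_right, qf]
  simp

theorem qf_pr {e : H →L[ℂ] H} (he : Pr e) (η : H) : qf e η = ‖e η‖ ^ 2 := by
  rw [← qf_star_mul, he.1, he.2]

theorem mul_eq_zero_of_sum {J : Type*} {s : Finset J} {d : J → H →L[ℂ] H} {g : H →L[ℂ] H}
    (hd : ∀ k, 0 ≤ d k) (h : (∑ k ∈ s, d k) * g = 0) {k : J} (hk : k ∈ s) : d k * g = 0 := by
  have h1 : ∑ k ∈ s, star g * d k * g = 0 := by
    rw [← Finset.sum_mul, ← Finset.mul_sum, mul_assoc, h, mul_zero]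
  have h2 := (Finset.sum_eq_zero_iff_of_nonneg
    (fun k _ => star_left_conjugate_nonneg (hd k) g)).1 h1 k hk
  obtain ⟨a, ha⟩ := CStarAlgebra.nonneg_iff_eq_star_mul_self.1 (hd k)
  rw [ha] at h2 ⊢
  have h3 : star (a * g) * (a * g) = 0 := by
    rw [star_mul, ← h2]; simp only [mul_assoc]
  rw [mul_assoc, eq_zero_of_star_mul h3, mul_zero]

theorem layer_step {M : VonNeumannAlgebra H} {x r s : H →L[ℂ] H} (hx : x ∈ M) (hrp : Pr r)
    (hr : x * r = x) (hs : s * x = x) (ξ : H) (δ : ℝ) (hδ : 0 ≤ δ)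
    (hyp : ∀ t ∈ M, PI t → t * r = t → s * t = t → δ * ‖t ξ‖ ^ 2 ≤ ‖star t ξ‖ ^ 2)
    (m : ℕ) (c : ℝ) (hc : 0 < c) (hm : ‖star x * x‖ ≤ (m + 1 : ℕ) * c) :
    δ * ‖x ξ‖ ^ 2 ≤ ‖star x ξ‖ ^ 2 + δ * c * ‖ξ‖ ^ 2 := by
  obtain ⟨t, htM, ht, ⟨h, hsa, hsq, hxt, tth⟩, k1, k2⟩ := polar hx
  have hst : s * t = t := by
    have := k1 (1 - s) (by rw [sub_mul, hs, one_mul, sub_self])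
    rw [sub_mul, one_mul, sub_eq_zero] at this
    exact this.symm
  set a := star x * x with ha
  have haM : a ∈ M := mul_mem (star_mem hx) hx
  obtain ⟨d, dsa, d0, dc, dcom, dsum, dd⟩ := slices (star_mul_self_nonneg x) (m + 1) c hc hm
  rw [← ha] at dsum
  have dM : ∀ k, d k ∈ M := fun k => (mem_iff_comm _ _).2 fun y hy =>
    dcom k y (comm_of_mem haM hy)
  choose E EM Epr Ed Ek using fun k => exists_range_proj (dM k)
  have dE : ∀ k, d k * E k = d k := fun k => by
    have := (Epr k).flip (Ed k)
    rwa [dsa] at this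
  have hg : ∀ g : H →L[ℂ] H, star g = g → a * g = 0 → ∀ k < m + 1, g * E k = 0 := by
    intro g hg hag k hk
    refine Ek k g ?_
    have h1 : d k * g = 0 := mul_eq_zero_of_sum d0 (by rw [dsum]; exact hag)
      (Finset.mem_range.2 hk)
    have := congrArg star h1
    simpa [hg, dsa] using this
  have hE1 : ∀ k < m + 1, star t * t * E k = E k := by
    intro k hk
    have := hg (1 - star t * t) (by simp) (by
      have h1 := congrArg star tth
      simp only [star_mul, star_star, hsa] at h1
      change a * _ = 0
      rw [← hsq, mul_sub, mul_one, mul_assoc, h1, sub_self]) k hk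
    rw [sub_mul, one_mul, sub_eq_zero] at this
    exact this.symm
  have hE2 : ∀ k < m + 1, E k * r = E k := by
    intro k hk
    have := hg (1 - r) (by simp [hrp.1]) (by rw [ha, mul_assoc, mul_sub, hr]; simp) k hk
    rw [sub_mul, one_mul, sub_eq_zero] at this
    have := hrp.flip this.symm
    rwa [(Epr k).1] at this
  have up : ∀ k η, qf (d k) η ≤ c * ‖E k η‖ ^ 2 := by
    intro k η
    have e1 : d k = star (E k) * d k * E k := by rw [(Epr k).1, mul_assoc, dE, Ed]
    rw [e1, qf_conj]
    have e2 := qf_mono (dc k) (E k η)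
    rw [Algebra.algebraMap_eq_smul_one, qf_smul] at e2
    have e3 : qf (1 : H →L[ℂ] H) (E k η) = ‖E k η‖ ^ 2 := by
      have := qf_star_mul (1 : H →L[ℂ] H) (E k η)
      simpa using this
    rwa [e3] at e2
  have lo : ∀ k η, c * ‖E (k+1) η‖ ^ 2 ≤ qf (d k) η := by
    intro k η
    have e1 : d k * E (k+1) = c • E (k+1) := by
      have := Ek (k+1) (d k - c • 1) (by rw [sub_mul, dd]; simp)
      rw [sub_mul, sub_eq_zero] at this
      simpa using this
    have e2 : E (k+1) * d k = c • E (k+1) := by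
      have := congrArg star e1
      simpa [dsa, (Epr (k+1)).1] using this
    have e3 : d k = c • E (k+1) + star (1 - E (k+1)) * d k * (1 - E (k+1)) := by
      rw [(Epr (k+1)).one_sub.1]
      simp only [sub_mul, mul_sub, one_mul, mul_one, e1, e2]
      rw [smul_mul_assoc, (Epr (k+1)).2]
      abel
    rw [e3, qf_add, qf_conj, qf_smul, qf_pr (Epr _)]
    linarith [qf_nonneg (d0 k) ((1 - E (k+1)) η)]
  have key : ∀ k < m, δ * ‖E (k+1) ξ‖ ^ 2 ≤ ‖E (k+1) (star t ξ)‖ ^ 2 := by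
    intro k hk
    have hk' : k + 1 < m + 1 := by omega
    have e0 : star (t * E (k+1)) * (t * E (k+1)) = E (k+1) := by
      rw [star_mul, (Epr _).1, mul_assoc, ← mul_assoc (star t), hE1 _ hk', (Epr _).2]
    have e1 := hyp (t * E (k+1)) (mul_mem htM (EM _)) (PI.of_pr (Epr (k+1)) e0)
      (by rw [mul_assoc, hE2 _ hk']) (by rw [← mul_assoc, hst])
    have e2 : ‖(t * E (k+1)) ξ‖ = ‖E (k+1) ξ‖ :=
      norm_eq_of_star_mul (by rw [e0, (Epr _).1, (Epr _).2]) ξ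
    rw [e2, star_mul, (Epr _).1] at e1
    exact e1
  have f1 : ‖x ξ‖ ^ 2 ≤ (∑ k ∈ Finset.range m, c * ‖E (k+1) ξ‖ ^ 2) + c * ‖ξ‖ ^ 2 := by
    rw [← qf_star_mul, ← ha, ← dsum, qf_sum, Finset.sum_range_succ']
    have e1 : ∀ k, qf (d k) ξ ≤ c * ‖E k ξ‖ ^ 2 := fun k => up k ξ
    have : c * ‖E 0 ξ‖ ^ 2 ≤ c * ‖ξ‖ ^ 2 := by
      have := (Epr 0).norm_le ξ
      gcongr
    exact add_le_add (Finset.sum_le_sum fun k _ => e1 _) ((e1 0).trans this)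
  have f2 : ∑ k ∈ Finset.range m, c * ‖E (k+1) (star t ξ)‖ ^ 2 ≤ ‖star x ξ‖ ^ 2 := by
    have e1 : ‖star x ξ‖ ^ 2 = qf a (star t ξ) := by
      have : star x = h * star t := by rw [hxt, star_mul, hsa]
      rw [this, mul_apply_eq_comp, ← qf_star_mul, hsa, hsq]
    rw [e1, ← dsum, qf_sum, Finset.sum_range_succ]
    have := qf_nonneg (d0 m) (star t ξ)
    have := Finset.sum_le_sum (fun k (_ : k ∈ Finset.range m) => lo k (star t ξ))
    linarith
  have f3 : δ * ∑ k ∈ Finset.range m, c * ‖E (k+1) ξ‖ ^ 2 ≤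
      ∑ k ∈ Finset.range m, c * ‖E (k+1) (star t ξ)‖ ^ 2 := by
    rw [Finset.mul_sum]
    refine Finset.sum_le_sum fun k hk => ?_
    have := key k (Finset.mem_range.1 hk)
    nlinarith
  nlinarith

theorem layer {M : VonNeumannAlgebra H} {x r s : H →L[ℂ] H} (hx : x ∈ M) (hrp : Pr r)
    (hr : x * r = x) (hs : s * x = x) (ξ : H) (δ : ℝ) (hδ : 0 ≤ δ)
    (hyp : ∀ t ∈ M, PI t → t * r = t → s * t = t → δ * ‖t ξ‖ ^ 2 ≤ ‖star t ξ‖ ^ 2) :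
    δ * ‖x ξ‖ ^ 2 ≤ ‖star x ξ‖ ^ 2 := by
  refine le_of_forall_pos_le_add fun ε hε => ?_
  set K := ‖star x * x‖ + 1 with hK
  have hK0 : 0 < K := by positivity
  obtain ⟨m, hm⟩ := exists_nat_gt (δ * K * ‖ξ‖ ^ 2 / ε)
  have hm1 : (0 : ℝ) < (m + 1 : ℕ) := by positivity
  refine (layer_step hx hrp hr hs ξ δ hδ hyp m (K / (m + 1 : ℕ)) (by positivity) ?_).trans ?_
  · rw [mul_div_cancel₀ _ hm1.ne']; linarith
  · gcongr
    rw [div_lt_iff₀ hε] at hm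
    rw [mul_div_assoc', div_mul_eq_mul_div, div_le_iff₀ hm1]
    push_cast
    nlinarith

/-- comparison theorem -/
theorem comparison {M : VonNeumannAlgebra H} {e f : H →L[ℂ] H} (heM : e ∈ M) (hfM : f ∈ M)
    (he : Pr e) (hf : Pr f) :
    ∃ z ∈ M, Pr z ∧ (∀ x ∈ M, z * x = x * z) ∧
      (∃ w ∈ M, star w * w = z * e ∧ f * w = w ∧ z * w = w) ∧
      (∃ w ∈ M, star w * w = (1 - z) * f ∧ e * w = w ∧ (1 - z) * w = w) := by
  obtain ⟨S, w, hS, hwM, hw, k1, k2, -, -, kmax⟩ := exhaust M (fun u => u * e = u ∧ f * u = u)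
  have hwe : w * e = w := sum_fix_right k1 fun i => (hS i.1 i.2).2.2.1
  have hfw : f * w = w := sum_fix k1 fun i => (hS i.1 i.2).2.2.2
  have hew : e * star w = star w := he.flip' hwe
  have hwf : star w * f = star w := hf.flip hfw
  set e' := e - star w * w with he'
  set f' := f - w * star w with hf'
  have e'M : e' ∈ M := sub_mem heM (mul_mem (star_mem hwM) hwM)
  have f'M : f' ∈ M := sub_mem hfM (mul_mem hwM (star_mem hwM))
  have we' : w * e' = 0 := by rw [he', mul_sub, hwe, hw.right, sub_self]
  have wf' : star w * f' = 0 := by rw [hf', mul_sub, hwf, hw.right', sub_self]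
  have e'p : Pr e' := he.sub hw.pr (by rw [← mul_assoc, hew])
  have f'p : Pr f' := hf.sub hw.pr' (by rw [← mul_assoc, hfw])
  have ee' : e' * e = e' := by rw [he', sub_mul, he.2, mul_assoc, hwe]
  have ff' : f * f' = f' := by rw [hf', mul_sub, hf.2, ← mul_assoc, hfw]
  have hz : ∀ x ∈ M, e' * x * f' = 0 := by
    intro x hx
    by_contra h0
    have h1 : f' * star x * e' ≠ 0 := by
      intro h
      apply h0
      have := congrArg star h
      simpa [e'p.1, f'p.1, mul_assoc] using this
    obtain ⟨t, htM, ht, t0, te, ft⟩ := polar_sub (r := e') (s := f')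
      (mul_mem (mul_mem f'M (star_mem hx)) e'M) h1
      (by rw [mul_assoc, e'p.2]) (by rw [← mul_assoc, ← mul_assoc, f'p.2])
    refine t0 (kmax t htM ht ⟨?_, ?_⟩ ?_ ?_)
    · rw [← te, mul_assoc, ee']
    · rw [← ft, ← mul_assoc, ff']
    · rw [← ft, ← mul_assoc, wf', zero_mul]
    · have : star t = e' * star t := (e'p.flip' te).symm
      rw [this, ← mul_assoc, we', zero_mul]
  obtain ⟨z, zM, zp, zc, zf, ez⟩ := central_sep f'M hz
  have ze : z * e' = 0 := by rw [zc _ e'M]; exact ez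
  refine ⟨z, zM, zp, zc, ⟨z * w, mul_mem zM hwM, ?_, ?_, ?_⟩, ⟨(1 - z) * star w, ?_, ?_, ?_, ?_⟩⟩
  · rw [star_mul, zp.1, mul_assoc, ← mul_assoc z, zp.2, zc w hwM, ← mul_assoc,
      ← zc _ (mul_mem (star_mem hwM) hwM)]
    rw [he', mul_sub, sub_eq_zero] at ze
    exact ze.symm
  · rw [zc w hwM, ← mul_assoc, hfw]
  · rw [← mul_assoc, zp.2]
  · exact mul_mem (sub_mem (one_mem M) zM) (star_mem hwM)
  · have h1 : (1 - z) * w = w * (1 - z) := by rw [sub_mul, mul_sub, zc w hwM]; simp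
    rw [star_mul, zp.one_sub.1, star_star, mul_assoc, ← mul_assoc (1 - z), zp.one_sub.2,
      ← mul_assoc, ← h1, mul_assoc]
    have : (1 - z) * f' = 0 := by rw [sub_mul, zf, one_mul, sub_self]
    rw [hf', mul_sub, sub_eq_zero] at this
    exact this.symm
  · have h1 : (1 - z) * e = e * (1 - z) := by rw [sub_mul, mul_sub, zc e heM]; simp
    rw [← mul_assoc, ← h1, mul_assoc, hew]
  · rw [← mul_assoc, zp.one_sub.2]

end KPMvN


namespace KPMvN

theorem sum_proj {M : VonNeumannAlgebra H} {J : Type*} (u : J → H →L[ℂ] H)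
    (hM : ∀ i, u i ∈ M) (hpi : ∀ i, PI (u i)) (ho : ∀ i j, i ≠ j → star (u i) * u j = 0) :
    ∃ G ∈ M, Pr G ∧ (∀ η, HasSum (fun i => (u i * star (u i)) η) (G η)) ∧
      (∀ i, G * u i = u i) ∧ (∀ i, star (u i) * G = star (u i)) := by
  have o1 : ∀ i j, i ≠ j → (u i * star (u i)) * (u j * star (u j)) = 0 := fun i j hij => by
    rw [mul_assoc, ← mul_assoc (star (u i)), ho i j hij]; simp
  obtain ⟨G, GM, -, k1, k2, -, -⟩ := exists_pi_sum (M := M) (fun i => u i * star (u i))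
    (fun i => mul_mem (hM i) (star_mem (hM i))) (fun i => (hpi i).pr'.pi)
    (fun i j hij => by simpa using o1 i j hij) (fun i j hij => by simpa using o1 i j hij)
  have hG : star G = G := by
    ext η
    refine (k2 η).unique ?_
    simpa using k1 η
  have hGu : ∀ i, G * u i = u i := fun i => by
    rw [sum_single_right k1 (c := u i) i (fun j hj => by rw [mul_assoc, ho j i hj, mul_zero])]
    exact hpi i
  refine ⟨G, GM, ⟨hG, ?_⟩, k1, hGu, fun i => ?_⟩
  · exact sum_fix k1 fun i => by rw [← mul_assoc, hGu]
  · have := congrArg star (hGu i)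
    simpa [hG] using this

/-- iterating an isometry -/
theorem shift {v P D : H →L[ℂ] H} (hP : Pr P) (hv : star v * v = P) (hPv : P * v = v)
    (hD : Pr D) (hPD : P * D = D) (hDv : D * v = 0) :
    (∀ n, star (v ^ n * D) * (v ^ n * D) = D) ∧
    (∀ m n, m ≠ n → star (v ^ m * D) * (v ^ n * D) = 0) ∧ (∀ n, P * (v ^ n * D) = v ^ n * D) := by
  have a1 : ∀ n, P * (v ^ n * D) = v ^ n * D := by
    intro n
    cases n with
    | zero => simpa using hPD
    | succ n => rw [pow_succ', mul_assoc, ← mul_assoc P, hPv]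
  have a2 : ∀ m k, star (v ^ m) * (v ^ (m + k) * D) = v ^ k * D := by
    intro m k
    induction m with
    | zero => simp
    | succ m ih =>
      have : m + 1 + k = (m + k) + 1 := by ring
      rw [this, pow_succ' v m, pow_succ' v (m + k), star_mul, mul_assoc, mul_assoc,
        ← mul_assoc (star v), hv, a1, ih]
  have a3 : ∀ m n, m < n → star (v ^ m * D) * (v ^ n * D) = 0 := by
    intro m n h
    obtain ⟨k, rfl⟩ := Nat.exists_eq_add_of_lt h
    rw [star_mul, mul_assoc, add_assoc, a2, hD.1, pow_succ', mul_assoc, ← mul_assoc, hDv, zero_mul]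
  refine ⟨fun n => ?_, fun m n h => ?_, a1⟩
  · have := a2 n 0
    rw [star_mul, mul_assoc]
    simp only [add_zero, pow_zero, one_mul] at this
    rw [this, hD.1, hD.2]
  · rcases lt_or_gt_of_ne h with h | h
    · exact a3 m n h
    · have := congrArg star (a3 n m h)
      simpa using this

/-- no nonzero projection has infinitely many orthogonal copies below `q` -/
def DFin (M : VonNeumannAlgebra H) (q : H →L[ℂ] H) : Prop :=
  ∀ (e : H →L[ℂ] H) (u : ℕ → H →L[ℂ] H), Pr e →
    (∀ n, u n ∈ M ∧ star (u n) * u n = e ∧ q * u n = u n) →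
    (∀ m n, m ≠ n → star (u m) * u n = 0) → e = 0

theorem DFin.mono {M : VonNeumannAlgebra H} {q q' : H →L[ℂ] H} (h : DFin M q) (hq : q * q' = q') :
    DFin M q' := fun e u he hu ho => h e u he (fun n => ⟨(hu n).1, (hu n).2.1, by
      rw [← (hu n).2.2, ← mul_assoc, hq]⟩) ho

theorem dfin_iso {M : VonNeumannAlgebra H} {v P q : H →L[ℂ] H} (hvM : v ∈ M)
    (hP : Pr P) (hv : star v * v = P) (hPv : P * v = v) (hq : q * P = P) (h : DFin M q) :
    v * star v = P := by
  have hpi : PI v := PI.of_pr hP hv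
  have hD : Pr (P - v * star v) := hP.sub hpi.pr' (by rw [← mul_assoc, hPv])
  have hPM : P ∈ M := hv ▸ mul_mem (star_mem hvM) hvM
  obtain ⟨b1, b2, b3⟩ := shift hP hv hPv hD
    (by rw [mul_sub, hP.2, ← mul_assoc, hPv])
    (by rw [sub_mul, hPv, mul_assoc, hpi.right, sub_self])
  have := h _ (fun n => v ^ n * (P - v * star v)) hD (fun n => ⟨mul_mem (pow_mem hvM n)
    (sub_mem hPM (mul_mem hvM (star_mem hvM))), b1 n, by
      rw [← b3 n, ← mul_assoc, hq]⟩) b2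
  exact (sub_eq_zero.1 this).symm

/-- Cantor–Schröder–Bernstein -/
theorem csb {M : VonNeumannAlgebra H} {V P Q : H →L[ℂ] H} (hVM : V ∈ M) (hQM : Q ∈ M)
    (hP : Pr P) (hQ : Pr Q) (hPQ : P * Q = Q) (hV : star V * V = P) (hQV : Q * V = V) :
    ∃ W ∈ M, star W * W = P ∧ W * star W = Q := by
  have hpi : PI V := PI.of_pr hP hV
  have hPM : P ∈ M := hV ▸ mul_mem (star_mem hVM) hVM
  have hD : Pr (P - Q) := hP.sub hQ hPQ
  have hPV : P * V = V := by rw [← hQV, ← mul_assoc, hPQ]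
  set D := P - Q with hDd
  have hDM : D ∈ M := sub_mem hPM hQM
  have hPD : P * D = D := by rw [hDd, mul_sub, hP.2, hPQ]
  have hDV : D * V = 0 := by rw [hDd, sub_mul, hPV, hQV, sub_self]
  obtain ⟨b1, b2, b3⟩ := shift hP hV hPV hD hPD hDV
  obtain ⟨F, FM, hF, k1, k2, k3⟩ := sum_proj (M := M) (fun n => V ^ n * D)
    (fun n => mul_mem (pow_mem hVM n) hDM) (fun n => PI.of_pr hD (b1 n)) b2
  have hPF : P * F = F := sum_fix k1 fun n => by rw [← mul_assoc, b3]
  have hFP : F * P = F := by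
    have := hP.flip hPF
    rwa [hF.1] at this
  have c1 : V * F * star V = F - D := by
    ext η
    have h1 := (k1 (star V η)).mapL V
    have h2 := (hasSum_nat_add_iff' 1).2 (k1 η)
    have h3 : (fun n => V ((V ^ n * D * star (V ^ n * D)) (star V η))) =
        fun n => (V ^ (n + 1) * D * star (V ^ (n + 1) * D)) η := by
      funext n
      rw [pow_succ']
      simp
    rw [h3] at h1
    have h4 := h1.unique h2
    have h5 : D (D η) = D η := DFunLike.congr_fun hD.2 η
    simpa [hD.1, h5] using h4
  have hVP : V * P = V := by rw [← hV]; exact hpi.right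
  have c2 : V * F = F * V := by
    have : V * F = V * F * star V * V := by rw [mul_assoc _ (star V), hV, mul_assoc, hFP]
    rw [this, c1, sub_mul, hDV, sub_zero]
  have c3 : F * star V = star V * F := by
    have := congrArg star c2
    simpa [hF.1] using this
  have hPFp : Pr (P - F) := hP.sub hF hPF
  have d1 : F * (P - F) = 0 := by rw [mul_sub, hFP, hF.2, sub_self]
  have d1' : (P - F) * F = 0 := by rw [sub_mul, hPF, hF.2, sub_self]
  refine ⟨V * F + (P - F), add_mem (mul_mem hVM FM) (sub_mem hPM FM), ?_, ?_⟩
  · have e1 : star (V * F) * (V * F) = F := by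
      rw [star_mul, hF.1, mul_assoc, ← mul_assoc (star V), hV, hPF, hF.2]
    have e2 : star (V * F) * (P - F) = 0 := by
      rw [star_mul, hF.1, c3, mul_assoc, d1, mul_zero]
    have e3 : (P - F) * (V * F) = 0 := by
      rw [c2, ← mul_assoc, d1', zero_mul]
    rw [star_add, add_mul, mul_add, mul_add, e1, e2, hPFp.1, e3, hPFp.2]
    abel
  · have e1 : (V * F) * star (V * F) = F - D := by
      rw [star_mul, hF.1, mul_assoc, ← mul_assoc F, hF.2, ← mul_assoc, c1]
    have e2 : (V * F) * (P - F) = 0 := by rw [mul_assoc, d1, mul_zero]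
    have e3 : (P - F) * star (V * F) = 0 := by
      rw [star_mul, hF.1, ← mul_assoc, d1', zero_mul]
    rw [star_add, add_mul, mul_add, mul_add, e1, hPFp.1, e2, e3, hPFp.2, hDd]
    abel

/-- a family of orthogonal copies of `e` below `q` -/
def IsCopies (M : VonNeumannAlgebra H) (q e : H →L[ℂ] H) (S : Set (H →L[ℂ] H)) : Prop :=
  (∀ u ∈ S, u ∈ M ∧ star u * u = e ∧ q * u = u) ∧ S.Pairwise (fun a b => star a * b = 0)

theorem max_copies {M : VonNeumannAlgebra H} {q e : H →L[ℂ] H} (hqM : q ∈ M) (hq : Pr q)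
    (heM : e ∈ M) (he : Pr e) (e0 : e ≠ 0) (T : Set (H →L[ℂ] H)) (hT : IsCopies M q e T) :
    ∃ S, T ⊆ S ∧ IsCopies M q e S ∧ ∃ G ∈ M, Pr G ∧ q * G = G ∧
      (∀ η, HasSum (fun u : S => (u.1 * star u.1) η) (G η)) ∧ (∀ u ∈ S, star u * G = star u) ∧
      ∃ z ∈ M, Pr z ∧ (∀ x ∈ M, z * x = x * z) ∧ z * e ≠ 0 ∧
        ∃ w ∈ M, star w * w = z * (q - G) ∧ e * w = w ∧ z * w = w := by
  obtain ⟨S, hTS, hS⟩ := zorn_subset_nonempty {S : Set (H →L[ℂ] H) | IsCopies M q e S} (by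
    intro c hc hchain hne
    refine ⟨⋃₀ c, ⟨?_, ?_⟩, fun s hs => Set.subset_sUnion_of_mem hs⟩
    · rintro u ⟨s, hs, hu⟩
      exact (hc hs).1 u hu
    · exact (Set.pairwise_sUnion hchain.directedOn).2 fun s hs => (hc hs).2) T hT
  obtain ⟨⟨hS1, hS2⟩, hmax⟩ := hS
  obtain ⟨G, GM, hG, k1, k2, k3⟩ := sum_proj (M := M) (fun i : S => i.1)
    (fun i => (hS1 i.1 i.2).1) (fun i => PI.of_pr he (hS1 i.1 i.2).2.1)
    (fun i j hij => hS2 i.2 j.2 (fun h => hij (Subtype.ext h)))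
  have hqG : q * G = G := sum_fix k1 fun i => by rw [← mul_assoc, (hS1 i.1 i.2).2.2]
  obtain ⟨z, zM, zp, zc, hw1, ⟨w2, w2M, e1, e2, e3⟩⟩ :=
    comparison (sub_mem hqM GM) heM (hq.sub hG hqG) he
  refine ⟨S, hTS, ⟨hS1, hS2⟩, G, GM, hG, hqG, k1, fun u hu => k3 ⟨u, hu⟩, z, zM, zp, zc, ?_, hw1⟩
  intro hze
  rw [sub_mul, hze, one_mul, sub_zero] at e1
  have f1 : ∀ u ∈ S, star u * w2 = 0 := fun u hu => by
    have h1 : star u * q = star u := hq.flip (hS1 u hu).2.2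
    rw [← e2, ← mul_assoc, mul_sub, k3 ⟨u, hu⟩, h1, sub_self, zero_mul]
  have hmem : w2 ∈ S := by
    refine hmax (y := insert w2 S) ⟨?_, ?_⟩ (Set.subset_insert _ _) (Set.mem_insert _ _)
    · rintro v (rfl | hv)
      · refine ⟨w2M, e1, ?_⟩
        rw [← e2, ← mul_assoc, mul_sub, hq.2, hqG]
      · exact hS1 v hv
    · refine hS2.insert fun v hv _ => ?_
      have c1 := f1 v hv
      have c3 := congrArg star c1
      simp only [star_mul, star_star, star_zero] at c3
      exact ⟨c3, c1⟩
  exact e0 (by rw [← e1]; exact f1 w2 hmem)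

theorem fin_lemma {M : VonNeumannAlgebra H} {d : H →L[ℂ] H} (hdM : d ∈ M) (hd : Pr d)
    (hfin : DFin M d) (ξ : H) (hξ : d ξ = ξ) (ξ0 : ξ ≠ 0) :
    ∃ u ∈ M, PI u ∧ u ≠ 0 ∧ d * u = u ∧ u * d = u ∧ ∀ t ∈ M, PI t → t * (star u * u) = t →
      (u * star u) * t = t → (1 / 2 : ℝ) * ‖t ξ‖ ^ 2 ≤ ‖star t ξ‖ ^ 2 := by
  by_contra! hcon
  obtain ⟨S, w, hS, hwM, hw, k1, k2, k3, k4, kmax⟩ := exhaust M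
    (fun t => t * d = t ∧ d * t = t ∧ ‖star t ξ‖ ^ 2 ≤ (1 / 2 : ℝ) * ‖t ξ‖ ^ 2)
  have hwd : w * d = w := sum_fix_right k1 fun i => (hS i.1 i.2).2.2.1
  have hdw : d * w = w := sum_fix k1 fun i => (hS i.1 i.2).2.2.2.1
  have hdw' : d * star w = star w := hd.flip' hwd
  have hwd' : star w * d = star w := hd.flip hdw
  have hr0p : Pr (d - star w * w) := hd.sub hw.pr (by rw [← mul_assoc, hdw'])
  have hs0p : Pr (d - w * star w) := hd.sub hw.pr' (by rw [← mul_assoc, hdw])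
  set r0 := d - star w * w with hr0
  set s0 := d - w * star w with hs0
  have r0M : r0 ∈ M := sub_mem hdM (mul_mem (star_mem hwM) hwM)
  have s0M : s0 ∈ M := sub_mem hdM (mul_mem hwM (star_mem hwM))
  have wr0 : w * r0 = 0 := by rw [hr0, mul_sub, hwd, hw.right, sub_self]
  have ws0 : star w * s0 = 0 := by rw [hs0, mul_sub, hwd', hw.right', sub_self]
  have r0d : r0 * d = r0 := by rw [hr0, sub_mul, hd.2, mul_assoc, hwd]
  have ds0 : d * s0 = s0 := by rw [hs0, mul_sub, hd.2, ← mul_assoc, hdw]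
  have dr0 : d * r0 = r0 := by rw [hr0, mul_sub, hd.2, ← mul_assoc, hdw']
  by_cases hr : r0 = 0
  · have h1 : star w * w = d := (sub_eq_zero.1 hr).symm
    have h2 : w * star w = d := dfin_iso hwM hd h1 hdw hd.2 hfin
    have n1 : ‖w ξ‖ = ‖ξ‖ := by rw [hw.norm_sq, h1, hξ]
    have n2 : ‖star w ξ‖ = ‖ξ‖ := by
      rw [hw.star.norm_sq, star_star, h2, hξ]
    have := hasSum_le (fun i : S => (hS i.1 i.2).2.2.2.2) (k4 ξ) ((k3 ξ).mul_left (1 / 2))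
    rw [n1, n2] at this
    have : 0 < ‖ξ‖ := norm_pos_iff.2 ξ0
    nlinarith
  by_cases hz : ∀ x ∈ M, s0 * x * r0 = 0
  · obtain ⟨z, zM, zp, zc, zr, sz⟩ := central_sep r0M hz
    have h3 : w * star w * z = d * z := by
      rw [hs0, sub_mul, sub_eq_zero] at sz
      exact sz.symm
    have hzd : Pr (z * d) := by
      refine ⟨by rw [star_mul, hd.1, zp.1, zc d hdM], ?_⟩
      rw [mul_assoc, ← mul_assoc d, ← zc d hdM, mul_assoc, hd.2, ← mul_assoc, zp.2]
    have h4 : star (star w * z) * (star w * z) = z * d := by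
      rw [star_mul, star_star, zp.1, mul_assoc, ← mul_assoc w, h3, ← mul_assoc, zc d hdM, mul_assoc,
        zp.2]
    have h5 := dfin_iso (mul_mem (star_mem hwM) zM) hzd h4
      (by rw [mul_assoc, ← mul_assoc d, hdw', ← mul_assoc, zc _ (star_mem hwM), mul_assoc, zp.2])
      (by rw [zc d hdM, ← mul_assoc, hd.2]) hfin
    have h6 : z * (star w * w) = z * d := by
      have h7 : star w * z * (z * w) = z * (star w * w) := by
        rw [mul_assoc, ← mul_assoc z z, zp.2, ← mul_assoc, ← zc _ (star_mem hwM), mul_assoc]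
      rw [← h7, ← h5, star_mul, star_star, zp.1]
    apply hr
    rw [← zr, hr0, mul_sub, h6, sub_self]
  · push Not at hz
    obtain ⟨x, hx, hne⟩ := hz
    obtain ⟨u, huM, hu, u0, ur, su⟩ := polar_sub (r := r0) (s := s0)
      (mul_mem (mul_mem s0M hx) r0M) hne
      (by rw [mul_assoc, hr0p.2]) (by rw [← mul_assoc, ← mul_assoc, hs0p.2])
    obtain ⟨t, htM, ht, tr, st, hlt⟩ := hcon u huM hu u0 (by rw [← su, ← mul_assoc, ds0])
      (by rw [← ur, mul_assoc, r0d])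
    have tr0 : t * r0 = t := by rw [← tr, mul_assoc, mul_assoc, ur]
    have st0 : s0 * t = t := by rw [← st, ← mul_assoc, ← mul_assoc, su]
    have t0 : t ≠ 0 := by
      rintro rfl
      simp at hlt
    refine t0 (kmax t htM ht ⟨?_, ?_, hlt.le⟩ ?_ ?_)
    · rw [← tr0, mul_assoc, r0d]
    · rw [← st0, ← mul_assoc, ds0]
    · rw [← st0, ← mul_assoc, ws0, zero_mul]
    · rw [← hr0p.flip' tr0, ← mul_assoc, wr0, zero_mul]

end KPMvN


namespace KPMvN
open scoped ENNReal

/-- squared norm as an extended nonnegative real -/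
def n2 (η : H) : ℝ≥0∞ := ENNReal.ofReal (‖η‖ ^ 2)

theorem n2_ne_top (η : H) : n2 η ≠ ⊤ := ENNReal.ofReal_ne_top

theorem n2_eq_zero {η : H} (h : n2 η = 0) : η = 0 := by
  have h1 : ‖η‖ ^ 2 ≤ 0 := ENNReal.ofReal_eq_zero.1 h
  have : ‖η‖ = 0 := by nlinarith [norm_nonneg η]
  exact norm_eq_zero.1 this

theorem n2_mono {η ζ : H} (h : ‖η‖ ≤ ‖ζ‖) : n2 η ≤ n2 ζ :=
  ENNReal.ofReal_le_ofReal (pow_le_pow_left₀ (norm_nonneg _) h 2)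

theorem n2_congr {η ζ : H} (h : ‖η‖ = ‖ζ‖) : n2 η = n2 ζ := by rw [n2, n2, h]

/-- the family `x` implements `p ≈ q` -/
structure KPx (M : VonNeumannAlgebra H) {ι : Type*} (x : ι → H →L[ℂ] H) (p q : H →L[ℂ] H) :
    Prop where
  mem : ∀ i, x i ∈ M
  left : ∀ ξ : H, HasSum (fun i => (star (x i) * x i) ξ) (p ξ)
  right : ∀ ξ : H, HasSum (fun i => (x i * star (x i)) ξ) (q ξ)

theorem KPx.symm {M : VonNeumannAlgebra H} {ι : Type*} {x : ι → H →L[ℂ] H} {p q : H →L[ℂ] H}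
    (h : KPx M x p q) : KPx M (fun i => star (x i)) q p :=
  ⟨fun i => star_mem (h.mem i), fun ξ => by simpa using h.right ξ, fun ξ => by simpa using h.left ξ⟩

theorem KPx.sum_sq {M : VonNeumannAlgebra H} {ι : Type*} {x : ι → H →L[ℂ] H} {p q : H →L[ℂ] H}
    (h : KPx M x p q) (hp : Pr p) (ξ : H) : HasSum (fun i => ‖x i ξ‖ ^ 2) (‖p ξ‖ ^ 2) := by
  have h1 := ((h.left ξ).mapL (innerSL ℂ ξ)).mapL Complex.reCLM
  have h2 : ∀ b : H →L[ℂ] H, Complex.reCLM (innerSL ℂ ξ (b ξ)) = qf b ξ := fun b => rfl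
  simp only [h2, qf_star_mul, qf_pr hp] at h1
  exact h1

theorem KPx.sum_n2 {M : VonNeumannAlgebra H} {ι : Type*} {x : ι → H →L[ℂ] H} {p q : H →L[ℂ] H}
    (h : KPx M x p q) (hp : Pr p) (ξ : H) : ∑' i, n2 (x i ξ) = n2 (p ξ) := by
  have h1 := h.sum_sq hp ξ
  rw [n2, ← h1.tsum_eq, ENNReal.ofReal_tsum_of_nonneg (fun i => by positivity) h1.summable]
  rfl

theorem KPx.mul_right {M : VonNeumannAlgebra H} {ι : Type*} {x : ι → H →L[ℂ] H}
    {p q : H →L[ℂ] H} (h : KPx M x p q) (hp : Pr p) (i : ι) : x i * p = x i := by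
  have : x i * (1 - p) = 0 := by
    ext η
    have h1 := h.sum_n2 hp ((1 - p) η)
    have h2 : p ((1 - p) η) = 0 := by
      have : p * (1 - p) = 0 := by rw [mul_sub, hp.2, mul_one, sub_self]
      exact DFunLike.congr_fun this η
    rw [h2] at h1
    have h3 : n2 (0 : H) = 0 := by simp [n2]
    rw [h3, ENNReal.tsum_eq_zero] at h1
    exact n2_eq_zero (h1 i)
  rw [mul_sub, mul_one, sub_eq_zero] at this
  exact this.symm

theorem KPx.mul_left {M : VonNeumannAlgebra H} {ι : Type*} {x : ι → H →L[ℂ] H}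
    {p q : H →L[ℂ] H} (h : KPx M x p q) (hq : Pr q) (i : ι) : q * x i = x i := by
  have := hq.flip' (h.symm.mul_right hq i)
  simpa using this

/-- words -/
def Wd.{v} (ι : Type v) : ℕ → Type v
  | 0 => PUnit.{v+1}
  | n + 1 => ι × Wd ι n

/-- the operator of a word -/
def wy {ι : Type*} (x : ι → H →L[ℂ] H) (d : H →L[ℂ] H) : (n : ℕ) → Wd ι n → H →L[ℂ] H
  | 0, _ => d
  | n + 1, α => x α.1 * wy x d n α.2

/-- column sums of words -/
def Qw {ι : Type*} (x : ι → H →L[ℂ] H) (d : H →L[ℂ] H) (n : ℕ) (η : H) : ℝ≥0∞ :=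
  ∑' α : Wd ι n, n2 (star (wy x d n α) η)

/-- remainders -/
def Rw {ι : Type*} (x : ι → H →L[ℂ] H) (p : H →L[ℂ] H) : ℕ → H → ℝ≥0∞
  | 0, η => n2 (p η)
  | n + 1, η => ∑' i, Rw x p n (star (x i) η)

theorem Qw_zero {ι : Type*} (x : ι → H →L[ℂ] H) (d : H →L[ℂ] H) (η : H) :
    Qw x d 0 η = n2 (star d η) := by
  change ∑' α : PUnit, n2 (star d η) = _
  rw [tsum_fintype]; simp

theorem Qw_succ {ι : Type*} (x : ι → H →L[ℂ] H) (d : H →L[ℂ] H) (n : ℕ) (η : H) :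
    Qw x d (n + 1) η = ∑' i, Qw x d n (star (x i) η) := by
  change ∑' α : ι × Wd ι n, n2 (star (x α.1 * wy x d n α.2) η) = _
  rw [ENNReal.tsum_prod']
  simp only [star_mul, mul_apply_eq_comp]
  rfl

section
variable {M : VonNeumannAlgebra H} {ι : Type*} {x : ι → H →L[ℂ] H} {p q : H →L[ℂ] H}

theorem wy_fix (h : KPx M x p q) (hp : Pr p) (hq : Pr q) (hpq : p * q = q) (n : ℕ)
    (α : Wd ι n) : p * wy x (p - q) n α = wy x (p - q) n α := by
  cases n with
  | zero =>
    change p * (p - q) = p - q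
    rw [mul_sub, hp.2, hpq]
  | succ n =>
    change p * (x α.1 * wy x (p - q) n α.2) = x α.1 * wy x (p - q) n α.2
    have : p * x α.1 = x α.1 := by rw [← h.mul_left hq, ← mul_assoc, hpq]
    rw [← mul_assoc, this]

theorem wy_mem (h : KPx M x p q) {d : H →L[ℂ] H} (hd : d ∈ M) (n : ℕ) :
    ∀ α : Wd ι n, wy x d n α ∈ M := by
  induction n with
  | zero => exact fun _ => hd
  | succ n ih => exact fun α => mul_mem (h.mem α.1) (ih α.2)

theorem wy_sum (h : KPx M x p q) (hp : Pr p) (hq : Pr q) (hpq : p * q = q) (n : ℕ) (η : H) :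
    ∑' α : Wd ι n, n2 (wy x (p - q) n α η) = n2 ((p - q) η) := by
  induction n with
  | zero =>
    change ∑' α : PUnit, n2 ((p - q) η) = _
    rw [tsum_fintype]; simp
  | succ n ih =>
    change ∑' α : ι × Wd ι n, n2 ((x α.1 * wy x (p - q) n α.2) η) = _
    rw [ENNReal.tsum_prod', ENNReal.tsum_comm, ← ih]
    refine tsum_congr fun α => ?_
    simp only [mul_apply_eq_comp]
    rw [h.sum_n2 hp]
    congr 1
    exact DFunLike.congr_fun (wy_fix h hp hq hpq n α) η

theorem QR (h : KPx M x p q) (hp : Pr p) (hq : Pr q) (hpq : p * q = q) (n : ℕ) :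
    ∀ η : H, Qw x (p - q) n η + Rw x p (n + 1) η = Rw x p n η := by
  induction n with
  | zero =>
    intro η
    have hd : Pr (p - q) := hp.sub hq hpq
    have h1 : Rw x p 1 η = n2 (q η) := by
      change ∑' i, n2 (p (star (x i) η)) = _
      rw [← h.symm.sum_n2 hq]
      refine tsum_congr fun i => ?_
      congr 1
      exact DFunLike.congr_fun (hp.flip' (h.mul_right hp i)) η
    rw [h1, Qw_zero, hd.1]
    change _ = n2 (p η)
    rw [n2, n2, n2, ← ENNReal.ofReal_add (by positivity) (by positivity)]
    congr 1
    rw [← qf_pr hd, ← qf_pr hq, ← qf_pr hp, ← qf_add]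
    congr 1
    abel
  | succ n ih =>
    intro η
    rw [Qw_succ]
    change _ + ∑' i, Rw x p (n + 1) (star (x i) η) = ∑' i, Rw x p n (star (x i) η)
    rw [← ENNReal.tsum_add]
    exact tsum_congr fun i => ih _

theorem Q_le (h : KPx M x p q) (hp : Pr p) (hq : Pr q) (hpq : p * q = q) (N : ℕ) (η : H) :
    ∑ n ∈ Finset.range N, Qw x (p - q) n η ≤ n2 η := by
  have h1 : ∑ n ∈ Finset.range N, Qw x (p - q) n η + Rw x p N η = n2 (p η) := by
    induction N with
    | zero => rw [Finset.sum_range_zero, zero_add]; rfl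
    | succ N ih => rw [Finset.sum_range_succ, add_assoc, QR h hp hq hpq, ih]
  calc _ ≤ _ := le_self_add
    _ = _ := h1
    _ ≤ _ := n2_mono (hp.norm_le η)

theorem core_est (h : KPx M x p q) (hpM : p ∈ M) (hqM : q ∈ M) (hp : Pr p) (hq : Pr q)
    (hpq : p * q = q)
    {t r0 u z : H →L[ℂ] H} (htM : t ∈ M) (htd : t * (p - q) = t) (r0M : r0 ∈ M) (hr0 : Pr r0)
    (htr : t * star t * r0 = r0) (huM : u ∈ M) (hu : PI u) (hr0r : r0 * (star u * u) = r0)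
    (zM : z ∈ M) (zc : ∀ x ∈ M, z * x = x * z) (hzr : z * r0 = r0)
    {K : Type*} [Fintype K] (v : K → H →L[ℂ] H) (vM : ∀ k, v k ∈ M)
    (hvr : ∀ k, v k * (star u * u) = v k) (hsum : ∑ k, v k * star (v k) = z * q) (ξ : H)
    (hyp : ∀ t ∈ M, PI t → t * (star u * u) = t → (u * star u) * t = t →
      (1 / 2 : ℝ) * ‖t ξ‖ ^ 2 ≤ ‖star t ξ‖ ^ 2) : r0 ξ = 0 := by
  have hd : Pr (p - q) := hp.sub hq hpq
  have hdM : p - q ∈ M := sub_mem hpM hqM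
  -- bound for a single operator
  have b1 : ∀ y ∈ M, ∀ k, n2 (star (v k) (y (star t (r0 ξ)))) ≤ 2 * n2 (star y (v k (star u ξ))) := by
    intro y hy k
    have hX := layer (x := u * star (v k) * y * star t * r0)
      (mul_mem (mul_mem (mul_mem (mul_mem huM (star_mem (vM k))) hy) (star_mem htM)) r0M)
      hu.pr (by rw [mul_assoc, hr0r]) (s := u * star u)
      (by simp only [← mul_assoc]; rw [show u * star u * u = u from hu]) ξ (1 / 2) (by norm_num) hyp
    have e1 : ‖(u * star (v k) * y * star t * r0) ξ‖ = ‖star (v k) (y (star t (r0 ξ)))‖ := by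
      change ‖u (star (v k) (y (star t (r0 ξ))))‖ = _
      rw [hu.norm_sq]
      congr 1
      exact DFunLike.congr_fun (hu.pr.flip' (hvr k)) _
    have e2 : ‖star (u * star (v k) * y * star t * r0) ξ‖ ≤ ‖star y (v k (star u ξ))‖ := by
      have : star (u * star (v k) * y * star t * r0) ξ = r0 (t (star y (v k (star u ξ)))) := by
        simp [hr0.1]
      rw [this]
      have htn : star (t * star t * r0) = r0 * (t * star t) := by simp [hr0.1, mul_assoc]
      have hn : star (star (r0 * t)) * star (r0 * t) = r0 := by
        rw [star_star, star_mul, hr0.1, mul_assoc, ← mul_assoc t, htr, hr0.2]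
      have hpi : PI (star (r0 * t)) := PI.of_pr hr0 hn
      have := hpi.star.norm_le (star y (v k (star u ξ)))
      simpa using this
    rw [e1] at hX
    have e3 : ‖star (v k) (y (star t (r0 ξ)))‖ ^ 2 ≤ 2 * ‖star y (v k (star u ξ))‖ ^ 2 := by
      have := pow_le_pow_left₀ (norm_nonneg _) e2 2
      linarith
    have e4 := ENNReal.ofReal_le_ofReal e3
    rw [ENNReal.ofReal_mul (by norm_num)] at e4
    simpa [n2] using e4
  have hsumn : ∀ η, z (q η) = η → n2 η = ∑ k, n2 (star (v k) η) := by
    intro η hη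
    have e1 : qf (∑ k, v k * star (v k)) η = ∑ k, ‖star (v k) η‖ ^ 2 := by
      rw [qf_sum]
      refine Finset.sum_congr rfl fun k _ => ?_
      have := qf_star_mul (star (v k)) η
      rwa [star_star] at this
    have e2 : qf (z * q) η = ‖η‖ ^ 2 := by
      have : (z * q) η = η := hη
      rw [qf, this, inner_self_eq_norm_sq]
    rw [hsum, e2] at e1
    simp only [n2]
    rw [e1, ENNReal.ofReal_sum_of_nonneg (fun k _ => by positivity)]
  have b2 : ∀ n, n2 (r0 ξ) ≤ 2 * ∑ k, Qw x (p - q) (n + 1) (v k (star u ξ)) := by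
    intro n
    have e0 : n2 (r0 ξ) = n2 (star t (r0 ξ)) := by
      refine n2_congr ?_
      refine norm_eq_of_star_mul (a := r0) (b := star t * r0) ?_ ξ
      rw [star_mul, star_star, hr0.1, mul_assoc, ← mul_assoc t, htr]
    have e1 : n2 (star t (r0 ξ)) =
        ∑' α : Wd ι (n + 1), n2 (wy x (p - q) (n + 1) α (star t (r0 ξ))) := by
      rw [wy_sum h hp hq hpq]
      congr 1
      exact (DFunLike.congr_fun (hd.flip' htd) (r0 ξ)).symm
    rw [e0, e1]
    have e2 : ∀ α : Wd ι (n + 1), n2 (wy x (p - q) (n + 1) α (star t (r0 ξ))) ≤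
        ∑ k, 2 * n2 (star (wy x (p - q) (n + 1) α) (v k (star u ξ))) := by
      intro α
      have yM := wy_mem h hdM (n + 1) α
      rw [hsumn]
      · exact Finset.sum_le_sum fun k _ => b1 _ yM k
      · have f1 : q * wy x (p - q) (n + 1) α = wy x (p - q) (n + 1) α := by
          change q * (x α.1 * wy x (p - q) n α.2) = x α.1 * wy x (p - q) n α.2
          rw [← mul_assoc, h.mul_left hq]
        have f2 : z * q * wy x (p - q) (n + 1) α * star t * r0 =
            wy x (p - q) (n + 1) α * star t * r0 := by
          rw [mul_assoc z, f1, zc _ yM, mul_assoc _ z, zc _ (star_mem htM), mul_assoc, mul_assoc,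
            hzr, ← mul_assoc]
        exact DFunLike.congr_fun f2 ξ
    refine (ENNReal.tsum_le_tsum e2).trans ?_
    rw [Summable.tsum_finsetSum (fun _ _ => ENNReal.summable), Finset.mul_sum]
    refine Finset.sum_le_sum fun k _ => ?_
    rw [ENNReal.tsum_mul_left]
    rfl
  set C : ℝ≥0∞ := 2 * ∑ k, n2 (v k (star u ξ)) with hC
  have hCt : C ≠ ⊤ := ENNReal.mul_ne_top (by simp) (ENNReal.sum_ne_top.2 fun k _ => n2_ne_top _)
  have b3 : ∀ N : ℕ, (N : ℝ≥0∞) * n2 (r0 ξ) ≤ C := by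
    intro N
    calc (N : ℝ≥0∞) * n2 (r0 ξ) = ∑ n ∈ Finset.range N, n2 (r0 ξ) := by simp
      _ ≤ ∑ n ∈ Finset.range N, 2 * ∑ k, Qw x (p - q) (n + 1) (v k (star u ξ)) :=
        Finset.sum_le_sum fun n _ => b2 n
      _ = 2 * ∑ k, ∑ n ∈ Finset.range N, Qw x (p - q) (n + 1) (v k (star u ξ)) := by
        rw [← Finset.mul_sum, Finset.sum_comm]
      _ ≤ C := by
        rw [hC]
        gcongr with k
        refine le_trans ?_ (Q_le h hp hq hpq (N + 1) _)
        rw [Finset.sum_range_succ']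
        exact le_self_add
  refine n2_eq_zero ?_
  by_contra hne
  obtain ⟨N, hN⟩ := ENNReal.exists_nat_mul_gt hne hCt
  exact absurd (b3 N) (not_le.2 hN)

end

theorem core {M : VonNeumannAlgebra H} {ι : Type*} {x : ι → H →L[ℂ] H} {p q : H →L[ℂ] H}
    (h : KPx M x p q) (hpM : p ∈ M) (hqM : q ∈ M) (hp : Pr p) (hq : Pr q)
    (hpq : p * q = q) (hfin : DFin M q) : p = q := by
  by_contra hne
  have hd0 : p - q ≠ 0 := sub_ne_zero.2 hne
  have hd : Pr (p - q) := hp.sub hq hpq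
  have hdM : p - q ∈ M := sub_mem hpM hqM
  obtain ⟨i, hi⟩ : ∃ i, x i * (p - q) ≠ 0 := by
    by_contra! hall
    apply hd0
    have : p * (p - q) = 0 := by
      ext η
      refine (h.left ((p - q) η)).unique ?_
      have : (fun i => (star (x i) * x i) ((p - q) η)) = fun _ => 0 := by
        funext i
        have := DFunLike.congr_fun (hall i) η
        change star (x i) ((x i * (p - q)) η) = 0
        rw [hall i]; simp
      rw [this]
      exact hasSum_zero
    rw [mul_sub, hp.2, hpq] at this
    exact this
  obtain ⟨t, htM, ht, t0, htd, hqt⟩ := polar_sub (r := p - q) (s := q) (mul_mem (h.mem i) hdM) hi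
    (by rw [mul_assoc, hd.2]) (by rw [← mul_assoc, h.mul_left hq])
  obtain ⟨η0, hη0⟩ : ∃ η, t η ≠ 0 := by
    by_contra! hall
    exact t0 (by ext η; simp [hall η])
  set ξ := t η0 with hξ
  set A : Set H := {a | ∃ y ∈ M.commutant, a = y ξ} with hA
  have hd'p := projOn_pr A
  have hd'M : projOn A ∈ M := projOn_mem (by
    rintro y hy _ ⟨y', hy', rfl⟩
    exact ⟨y * y', mul_mem hy hy', rfl⟩)
  have hξA : ξ ∈ A := ⟨1, one_mem _, rfl⟩
  have hd'ξ := projOn_self hξA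
  have htd' : t * star t * projOn A = projOn A := by
    have := projOn_kill (A := A) (c := 1 - t * star t) (by
      rintro _ ⟨y, hy, rfl⟩
      have c := comm_of_mem htM hy
      have e1 : (1 - t * star t) * y * t = 0 := by
        rw [mul_assoc, c, sub_mul, one_mul, ← mul_assoc, show t * star t * t = t from ht, sub_self]
      exact DFunLike.congr_fun e1 η0)
    rw [sub_mul, one_mul, sub_eq_zero] at this
    exact this.symm
  set d' := projOn A with hd'
  have hqd' : q * d' = d' := by rw [← htd', ← mul_assoc, ← mul_assoc, hqt]
  obtain ⟨u, huM, hu, u0, hdu, hud, hyp⟩ := fin_lemma hd'M hd'p (hfin.mono hqd') ξ hd'ξ hη0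
  set r := star u * u with hr
  have hrp : Pr r := hu.pr
  have hrM : r ∈ M := mul_mem (star_mem huM) huM
  have r0 : r ≠ 0 := fun h0 => u0 (eq_zero_of_star_mul h0)
  have hrd' : r * d' = r := by rw [hr, mul_assoc, hud]
  have hd'r : d' * r = r := by rw [hr, ← mul_assoc, hd'p.flip' hud]
  obtain ⟨S, -, ⟨hS1, hS2⟩, G, GM, hG, hqG, k1, k2, z, zM, zp, zc, hze, w, wM, w1, w2, w3⟩ :=
    max_copies hqM hq hrM hrp r0 ∅ ⟨by simp, by simp⟩
  have hSfin : S.Finite := by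
    by_contra hinf
    obtain ⟨f⟩ : Nonempty (ℕ ↪ S) := ⟨(Set.Infinite.to_subtype hinf).natEmbedding⟩
    exact r0 (hfin r (fun n => (f n).1) hrp (fun n => hS1 _ (f n).2)
      (fun m n hmn => hS2 (f m).2 (f n).2 (fun e => hmn (f.injective (Subtype.ext e)))))
  haveI : Fintype S := hSfin.fintype
  let v : Option S → H →L[ℂ] H := fun o => match o with
    | none => star w
    | some s => s.1 * z
  have hzrp : Pr (z * r) := by
    refine ⟨by rw [star_mul, hrp.1, zp.1, zc r hrM], ?_⟩
    rw [mul_assoc, ← mul_assoc r, ← zc r hrM, mul_assoc, hrp.2, ← mul_assoc, zp.2]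
  have key := core_est h hpM hqM hp hq hpq htM htd (mul_mem zM hrM) hzrp
    (by rw [zc r hrM, ← mul_assoc]; congr 1; rw [← hd'r, ← mul_assoc, htd'])
    huM hu (by rw [mul_assoc, ← hr, hrp.2]) zM zc (by rw [← mul_assoc, zp.2]) v
    (by
      rintro (_ | s)
      · exact star_mem wM
      · exact mul_mem (hS1 s.1 s.2).1 zM)
    (by
      rintro (_ | s)
      · exact hrp.flip w2
      · change s.1 * z * r = s.1 * z
        have : s.1 * r = s.1 := by
          rw [← (hS1 s.1 s.2).2.1]
          exact (PI.of_pr hrp (hS1 s.1 s.2).2.1).right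
        rw [mul_assoc, zc r hrM, ← mul_assoc, this])
    (by
      rw [Fintype.sum_option]
      change star w * star (star w) + ∑ s : S, s.1 * z * star (s.1 * z) = z * q
      have e1 : ∑ s : S, s.1 * z * star (s.1 * z) = z * G := by
        have e2 : ∑ s : S, s.1 * star s.1 = G := by
          ext η
          rw [ContinuousLinearMap.sum_apply]
          exact (hasSum_fintype _).unique (k1 η)
        rw [← e2, Finset.mul_sum]
        refine Finset.sum_congr rfl fun s _ => ?_
        rw [star_mul, zp.1, mul_assoc, ← mul_assoc z, zp.2, ← mul_assoc, ← zc _ (hS1 s.1 s.2).1,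
          mul_assoc]
      rw [e1, star_star, w1, mul_sub]
      abel)
    ξ hyp
  apply hze
  have e1 : z * r * d' = 0 := projOn_kill (by
    rintro _ ⟨y, hy, rfl⟩
    have c := DFunLike.congr_fun (comm_of_mem (mul_mem zM hrM) hy) ξ
    change (z * r * y) ξ = 0
    rw [← c]
    change y ((z * r) ξ) = 0
    rw [key, map_zero])
  rwa [mul_assoc, hrd'] at e1

end KPMvN


namespace KPMvN
open scoped ENNReal

theorem Pr.mul_comm {z p : H →L[ℂ] H} (hz : Pr z) (hp : Pr p) (h : z * p = p * z) :
    Pr (z * p) := by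
  refine ⟨by rw [star_mul, hp.1, hz.1, h], ?_⟩
  rw [mul_assoc, ← mul_assoc p, ← h, mul_assoc, hp.2, ← mul_assoc, hz.2]

theorem sum_n2_of {ι : Type*} {x : ι → H →L[ℂ] H} {p : H →L[ℂ] H} (hp : Pr p)
    (h : ∀ ξ : H, HasSum (fun i => (star (x i) * x i) ξ) (p ξ)) (ξ : H) :
    ∑' i, n2 (x i ξ) = n2 (p ξ) := by
  have h1 := ((h ξ).mapL (innerSL ℂ ξ)).mapL Complex.reCLM
  have h2 : ∀ b : H →L[ℂ] H, Complex.reCLM (innerSL ℂ ξ (b ξ)) = qf b ξ := fun b => rfl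
  simp only [h2, qf_star_mul, qf_pr hp] at h1
  rw [n2, ← h1.tsum_eq, ENNReal.ofReal_tsum_of_nonneg (fun i => by positivity) h1.summable]
  rfl

theorem exists_sum_n2 {M : VonNeumannAlgebra H} {J : Type*} (v : J → H →L[ℂ] H)
    (hM : ∀ i, v i ∈ M) (ho : ∀ i j, i ≠ j → star (v i) * v j = 0) {P : H →L[ℂ] H} (hP : Pr P)
    (hs : ∀ η, ∑' i, n2 (v i η) = n2 (P η)) :
    ∃ w ∈ M, (∀ η, HasSum (fun i => v i η) (w η)) ∧ star w * w = P := by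
  obtain ⟨w, wM, h1, h2⟩ := exists_sum v hM ho 1 (by
    intro η s
    have e1 : ∑ i ∈ s, n2 (v i η) ≤ n2 (P η) := by
      rw [← hs η]; exact ENNReal.sum_le_tsum s
    have e2 : ∑ i ∈ s, n2 (v i η) = ENNReal.ofReal (∑ i ∈ s, ‖v i η‖ ^ 2) :=
      (ENNReal.ofReal_sum_of_nonneg fun i _ => by positivity).symm
    rw [e2] at e1
    have e3 := (ENNReal.ofReal_le_ofReal_iff (by positivity)).1 e1
    rw [one_mul]
    exact e3.trans (pow_le_pow_left₀ (norm_nonneg _) (hP.norm_le η) 2))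
  refine ⟨w, wM, h1, ?_⟩
  have : star w * w = star P * P := by
    refine star_mul_eq_of_norm fun η => ?_
    have e1 : n2 (w η) = n2 (P η) := by
      rw [← hs η, n2, ← (h2 η).tsum_eq,
        ENNReal.ofReal_tsum_of_nonneg (fun i => by positivity) (h2 η).summable]
      rfl
    have e2 := (ENNReal.ofReal_eq_ofReal_iff (by positivity) (by positivity)).1 e1
    exact (sq_eq_sq₀ (norm_nonneg _) (norm_nonneg _)).1 e2
  rw [this, hP.1, hP.2]

theorem main2 {M : VonNeumannAlgebra H} {ι : Type*} [Countable ι] {x : ι → H →L[ℂ] H}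
    {p q : H →L[ℂ] H}
    (h : KPx M x p q) (hpM : p ∈ M) (hqM : q ∈ M) (hp : Pr p) (hq : Pr q)
    (hpq : p * q = q) (p0 : p ≠ 0) :
    ∃ z ∈ M, Pr z ∧ (∀ x ∈ M, z * x = x * z) ∧ z * p ≠ 0 ∧
      ∃ v ∈ M, star v * v = z * p ∧ v * star v = z * q := by
  by_cases hfin : DFin M q
  · have e := core h hpM hqM hp hq hpq hfin
    refine ⟨1, one_mem _, ⟨by simp, by simp⟩, by simp, by simpa using p0, p, hpM, ?_, ?_⟩
    · rw [hp.1, hp.2, one_mul]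
    · rw [hp.1, hp.2, one_mul, e]
  unfold DFin at hfin
  push Not at hfin
  obtain ⟨e, u, he, hu, huo, e0⟩ := hfin
  have heM : e ∈ M := by
    rw [← (hu 0).2.1]; exact mul_mem (star_mem (hu 0).1) (hu 0).1
  have uinj : Function.Injective u := by
    intro m n hmn
    by_contra hne
    have := huo m n hne
    rw [← hmn, (hu m).2.1] at this
    exact e0 this
  obtain ⟨S, hTS, ⟨hS1, hS2⟩, G, GM, hG, hqG, k1, k2, z, zM, zp, zc, hze, w, wM, w1, w2, w3⟩ :=
    max_copies hqM hq heM he e0 (Set.range u) ⟨by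
      rintro _ ⟨n, rfl⟩
      exact hu n, by
      rintro _ ⟨m, rfl⟩ _ ⟨n, rfl⟩ hmn
      exact huo m n (fun h => hmn (by rw [h]))⟩
  have hSinf : Infinite S := ((Set.infinite_range_of_injective uinj).mono hTS).to_subtype
  obtain ⟨f, hf⟩ := exists_injective_nat ι
  obtain ⟨β0⟩ : Nonempty ((S ⊕ PUnit.{u+1}) × ULift.{u} ℕ ↪ S) := by
    rw [← Cardinal.le_def]
    have h1 := Cardinal.aleph0_le_mk S
    simp only [Cardinal.mk_prod, Cardinal.mk_sum, Cardinal.lift_id, Cardinal.mk_fintype,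
      Fintype.card_punit, Nat.cast_one, Cardinal.lift_one, Cardinal.mk_uLift, Cardinal.mk_nat,
      Cardinal.lift_aleph0, Cardinal.lift_add]
    rw [Cardinal.add_one_eq h1, Cardinal.mul_aleph0_eq h1]
  let β : (S ⊕ PUnit.{u+1}) × ι → S := fun o => β0 (o.1, ⟨f o.2⟩)
  have hβ : ∀ a b, a ≠ b → star (β a).1 * (β b).1 = 0 := by
    rintro ⟨a, i⟩ ⟨b, j⟩ hab
    refine hS2 (β _).2 (β _).2 fun h1 => hab ?_
    have h2 := β0.injective (Subtype.ext h1)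
    simp only [Prod.mk.injEq, ULift.up.injEq] at h2
    rw [h2.1, hf h2.2]
  have hββ : ∀ o, star (β o).1 * (β o).1 = e := fun o => (hS1 _ (β o).2).2.1
  let a : S ⊕ PUnit.{u+1} → H →L[ℂ] H := fun o => match o with
    | .inl s => star s.1 * z
    | .inr _ => w
  have aM : ∀ o, a o ∈ M := by
    rintro (s | _)
    · exact mul_mem (star_mem (hS1 s.1 s.2).1) zM
    · exact wM
  have ea : ∀ o, e * a o = a o := by
    rintro (s | _)
    · change e * (star s.1 * z) = star s.1 * z
      have : s.1 * e = s.1 := by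
        rw [← (hS1 s.1 s.2).2.1]
        exact (PI.of_pr he (hS1 s.1 s.2).2.1).right
      rw [← mul_assoc, he.flip' this]
    · exact w2
  have za : ∀ o, z * a o = a o := by
    rintro (s | _)
    · change z * (star s.1 * z) = star s.1 * z
      rw [← mul_assoc, zc _ (star_mem (hS1 s.1 s.2).1), mul_assoc, zp.2]
    · exact w3
  have hzq := zp.mul_comm hq (zc q hqM)
  have hzp := zp.mul_comm hp (zc p hpM)
  have hqGp := hq.sub hG hqG
  have hzqG := zp.mul_comm hqGp (zc _ (sub_mem hqM GM))
  have hzG := zp.mul_comm hG (zc G GM)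
  have asum : ∀ η, ∑' o, n2 (a o η) = n2 ((z * q) η) := by
    intro η
    rw [Summable.tsum_sum ENNReal.summable ENNReal.summable]
    have e1 : ∑' s : S, n2 (a (.inl s) η) = n2 ((z * G) η) := by
      change ∑' s : S, n2 (star s.1 (z η)) = _
      rw [sum_n2_of (x := fun s : S => star s.1) hG (by simpa using k1) (z η), zc G GM]
      rfl
    have e2 : ∑' o : PUnit.{u+1}, n2 (a (.inr o) η) = n2 ((z * (q - G)) η) := by
      rw [tsum_fintype]
      change ∑ _i : PUnit.{u+1}, n2 (w η) = _
      rw [Finset.sum_const, Finset.card_univ, Fintype.card_punit, one_smul]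
      refine n2_congr (norm_eq_of_star_mul ?_ η)
      rw [w1, hzqG.1, hzqG.2]
    rw [e1, e2, n2, n2, n2, ← ENNReal.ofReal_add (by positivity) (by positivity)]
    congr 1
    rw [← qf_pr hzG, ← qf_pr hzqG, ← qf_pr hzq, ← qf_add, mul_sub]
    congr 1
    abel
  obtain ⟨V, VM, hVs, hV⟩ := exists_sum_n2 (M := M) (P := z * p)
    (fun o : (S ⊕ PUnit.{u+1}) × ι => (β o).1 * a o.1 * x o.2)
    (fun o => mul_mem (mul_mem (hS1 _ (β o).2).1 (aM _)) (h.mem _))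
    (fun o o' hoo => by
      simp only [star_mul]
      have := hβ o o' hoo
      calc _ = star (x o.2) * star (a o.1) * (star (β o).1 * (β o').1) * (a o'.1) * x o'.2 := by
            simp only [mul_assoc]
        _ = 0 := by rw [this]; simp)
    hzp
    (by
      intro η
      have e1 : ∀ o : (S ⊕ PUnit.{u+1}) × ι, n2 (((β o).1 * a o.1 * x o.2) η) =
          n2 (a o.1 (x o.2 η)) := by
        intro o
        refine n2_congr ?_
        change ‖((β o).1 * a o.1) (x o.2 η)‖ = _
        refine norm_eq_of_star_mul ?_ _
        rw [star_mul, mul_assoc, ← mul_assoc (star (β o).1), hββ, ea]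
      simp only [e1]
      rw [ENNReal.tsum_prod', ENNReal.tsum_comm]
      simp only [asum]
      have e2 : ∀ i, n2 ((z * q) (x i η)) = n2 (x i (z η)) := by
        intro i
        congr 1
        have : z * q * x i = x i * z := by rw [mul_assoc, h.mul_left hq, zc _ (h.mem i)]
        exact DFunLike.congr_fun this η
      simp only [e2]
      rw [h.sum_n2 hp, zc p hpM]
      rfl)
  have hQV : z * q * V = V := sum_fix hVs fun o => by
    have e1 : z * q * ((β o).1 * a o.1 * x o.2) = (q * (β o).1) * (z * a o.1) * x o.2 := by
      rw [zc q hqM]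
      have := zc _ (hS1 _ (β o).2).1
      simp only [mul_assoc]
      rw [← mul_assoc z (β o).1, this]
      simp only [mul_assoc]
    rw [e1, za, (hS1 _ (β o).2).2.2]
  obtain ⟨W, WM, W1, W2⟩ := csb VM (mul_mem zM hqM) hzp hzq
    (by rw [zc p hpM, mul_assoc, ← mul_assoc z, zp.2, ← mul_assoc, ← zc p hpM, mul_assoc, hpq])
    hV hQV
  refine ⟨z, zM, zp, zc, ?_, W, WM, W1, W2⟩
  intro h0
  apply hze
  have h1 : z * q = 0 := by rw [← hpq, ← mul_assoc, h0, zero_mul]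
  have h2 : z * u 0 = 0 := by rw [← (hu 0).2.2, ← mul_assoc, h1, zero_mul]
  rw [← (hu 0).2.1, zc _ (mul_mem (star_mem (hu 0).1) (hu 0).1), mul_assoc, ← zc _ (hu 0).1, h2,
    mul_zero]

end KPMvN


namespace KPMvN
open scoped ENNReal

section
variable {M : VonNeumannAlgebra H} {ι : Type*} {x : ι → H →L[ℂ] H} {p q : H →L[ℂ] H}

theorem half [Countable ι] (h : KPx M x p q) (hpM : p ∈ M) (hqM : q ∈ M) (hp : Pr p) (hq : Pr q)
    {z w : H →L[ℂ] H} (zM : z ∈ M) (zp : Pr z) (zc : ∀ x ∈ M, z * x = x * z) (wM : w ∈ M)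
    (w1 : star w * w = z * q) (w2 : p * w = w) (w3 : z * w = w) (h0 : z * p ≠ 0) :
    ∃ z ∈ M, Pr z ∧ (∀ x ∈ M, z * x = x * z) ∧ z * p ≠ 0 ∧
      ∃ v ∈ M, star v * v = z * p ∧ v * star v = z * q := by
  have hzp := zp.mul_comm hp (zc p hpM)
  have hzq := zp.mul_comm hq (zc q hqM)
  have hw : PI w := PI.of_pr hzq w1
  have wq : w * q = w := by
    have := hw.right
    rw [w1] at this
    rw [← this, mul_assoc, mul_assoc, hq.2]
  have hK : KPx M (fun i => w * x i) (z * p) (w * star w) := by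
    refine ⟨fun i => mul_mem wM (h.mem i), fun ξ => ?_, fun ξ => ?_⟩
    · have h1 := (h.left ξ).mapL z
      have h2 : (fun i => z ((star (x i) * x i) ξ)) =
          fun i => (star (w * x i) * (w * x i)) ξ := by
        funext i
        have : z * (star (x i) * x i) = star (w * x i) * (w * x i) := by
          rw [star_mul, mul_assoc, ← mul_assoc (star w), w1, mul_assoc, h.mul_left hq,
            ← mul_assoc, zc _ (star_mem (h.mem i)), mul_assoc]
        exact DFunLike.congr_fun this ξ
      rw [h2] at h1
      exact h1
    · have h1 := (h.right (star w ξ)).mapL w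
      have h2 : (fun i => w ((x i * star (x i)) (star w ξ))) =
          fun i => (w * x i * star (w * x i)) ξ := by
        funext i
        simp
      rw [h2] at h1
      have h3 : w (q (star w ξ)) = (w * star w) ξ := by
        have : w * q * star w = w * star w := by rw [wq]
        exact DFunLike.congr_fun this ξ
      rw [h3] at h1
      exact h1
  obtain ⟨z2, z2M, z2p, z2c, z20, v0, v0M, a1, a2⟩ := main2 hK (mul_mem zM hpM)
    (mul_mem wM (star_mem wM)) hzp hw.pr'
    (by rw [← mul_assoc, mul_assoc z, w2, w3]) h0
  have hz2zp := z2p.mul_comm hzp (z2c _ (mul_mem zM hpM))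
  have hv0 : PI v0 := PI.of_pr hz2zp a1
  have b1 : w * star w * v0 = v0 := by
    have e1 : v0 * star v0 * v0 = v0 := hv0
    rw [a2, z2c _ (mul_mem wM (star_mem wM))] at e1
    rw [← e1, ← mul_assoc, ← mul_assoc, hw.pr'.2]
  refine ⟨z2 * z, mul_mem z2M zM, z2p.mul_comm zp (z2c z zM), fun y hy => ?_, ?_, star w * v0,
    mul_mem (star_mem wM) v0M, ?_, ?_⟩
  · rw [mul_assoc, zc y hy, ← mul_assoc, z2c y hy, mul_assoc]
  · rw [mul_assoc]; exact z20
  · rw [star_mul, star_star, mul_assoc, ← mul_assoc w, b1, a1, mul_assoc]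
  · have e1 : star w * v0 * star (star w * v0) = star w * (v0 * star v0) * w := by
      simp [mul_assoc]
    rw [e1, a2, z2c _ (mul_mem wM (star_mem wM))]
    have e2 : star w * (w * star w * z2) * w = z2 * ((star w * w) * (star w * w)) := by
      rw [z2c _ (mul_mem (mul_mem (star_mem wM) wM) (mul_mem (star_mem wM) wM))]
      have := z2c w wM
      simp only [mul_assoc]
      rw [this]
    rw [e2, w1, hzq.2, mul_assoc]

theorem local1 [Countable ι] (h : KPx M x p q) (hpM : p ∈ M) (hqM : q ∈ M) (hp : Pr p)
    (hq : Pr q) (p0 : p ≠ 0) :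
    ∃ z ∈ M, Pr z ∧ (∀ x ∈ M, z * x = x * z) ∧ z * p ≠ 0 ∧
      ∃ v ∈ M, star v * v = z * p ∧ v * star v = z * q := by
  obtain ⟨z, zM, zp, zc, ⟨w1, w1M, a1, a2, a3⟩, ⟨w2, w2M, b1, b2, b3⟩⟩ :=
    comparison hpM hqM hp hq
  by_cases h0 : (1 - z) * p = 0
  · have h1 : z * p = p := by
      rw [sub_mul, one_mul, sub_eq_zero] at h0
      exact h0.symm
    have h2 : z * q ≠ 0 := by
      intro hzq
      apply p0
      rw [← h1]
      refine sum_kill h.left fun i => ?_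
      rw [← mul_assoc, zc _ (star_mem (h.mem i)), mul_assoc]
      have : z * x i = 0 := by rw [← h.mul_left hq, ← mul_assoc, hzq, zero_mul]
      rw [this, mul_zero]
    obtain ⟨z', z'M, z'p, z'c, z'0, v, vM, c1, c2⟩ :=
      half h.symm hqM hpM hq hp zM zp zc w1M a1 a2 a3 h2
    refine ⟨z', z'M, z'p, z'c, ?_, star v, star_mem vM, by rw [star_star, c2],
      by rw [star_star, c1]⟩
    intro h3
    rw [h3] at c2
    have : star v = 0 := eq_zero_of_star_mul (by rw [star_star, c2])
    rw [star_eq_zero] at this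
    rw [this] at c1
    exact z'0 (by rw [← c1]; simp)
  · refine half h hpM hqM hp hq (sub_mem (one_mem _) zM) zp.one_sub (fun y hy => ?_) w2M b1 b2 b3 h0
    rw [sub_mul, mul_sub, zc y hy]; simp

/-- iterated orbit of a vector under the family and its adjoints -/
def orb {ι : Type*} (x : ι → H →L[ℂ] H) (ξ : H) : ℕ → Set H
  | 0 => {ξ}
  | n + 1 => ⋃ η ∈ orb x ξ n, (Set.range (fun i => x i η) ∪ Set.range (fun i => star (x i) η))

theorem supp_countable (h : KPx M x p q) (hp : Pr p) (η : H) : {i | x i η ≠ 0}.Countable := by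
  refine (h.sum_sq hp η).summable.countable_support.mono fun i hi => ?_
  simpa using hi

theorem range_countable (h : KPx M x p q) (hp : Pr p) (η : H) :
    (Set.range (fun i => x i η)).Countable := by
  refine (((supp_countable h hp η).image (fun i => x i η)).insert 0).mono ?_
  rintro _ ⟨i, rfl⟩
  by_cases hi : x i η = 0
  · exact Or.inl hi
  · exact Or.inr ⟨i, hi, rfl⟩

theorem orb_countable (h : KPx M x p q) (hp : Pr p) (hq : Pr q) (ξ : H) (n : ℕ) :
    (orb x ξ n).Countable := by
  induction n with
  | zero => exact Set.countable_singleton ξ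
  | succ n ih =>
    exact ih.biUnion fun η _ => (range_countable h hp η).union (range_countable h.symm hq η)

theorem sigma (h : KPx M x p q) (hp : Pr p) (hq : Pr q) (p0 : p ≠ 0) :
    ∃ e ∈ M, Pr e ∧ (∀ i, e * x i = x i * e) ∧ p * e ≠ 0 ∧ {i | x i * e ≠ 0}.Countable := by
  obtain ⟨ξ, hξ⟩ : ∃ ξ, p ξ ≠ 0 := by
    by_contra! hall
    exact p0 (by ext η; simp [hall η])
  set B : Set H := ⋃ n, orb x ξ n with hB
  have Bc : B.Countable := Set.countable_iUnion fun n => orb_countable h hp hq ξ n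
  have B1 : ∀ η ∈ B, ∀ i, x i η ∈ B := by
    intro η hη i
    obtain ⟨n, hn⟩ := Set.mem_iUnion.1 hη
    exact Set.mem_iUnion.2 ⟨n + 1, Set.mem_biUnion hn (Or.inl ⟨i, rfl⟩)⟩
  have B2 : ∀ η ∈ B, ∀ i, star (x i) η ∈ B := by
    intro η hη i
    obtain ⟨n, hn⟩ := Set.mem_iUnion.1 hη
    exact Set.mem_iUnion.2 ⟨n + 1, Set.mem_biUnion hn (Or.inr ⟨i, rfl⟩)⟩
  have hξB : ξ ∈ B := Set.mem_iUnion.2 ⟨0, rfl⟩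
  set A : Set H := {a | ∃ y ∈ M.commutant, ∃ η ∈ B, a = y η} with hA
  refine ⟨projOn A, projOn_mem ?_, projOn_pr A, fun i => ?_, ?_, ?_⟩
  · rintro y hy _ ⟨y', hy', η, hη, rfl⟩
    exact ⟨y * y', mul_mem hy hy', η, hη, rfl⟩
  · refine (projOn_comm ?_ ?_).symm
    · rintro _ ⟨y, hy, η, hη, rfl⟩
      exact ⟨y, hy, x i η, B1 η hη i, (DFunLike.congr_fun (comm_of_mem (h.mem i) hy) η).symm⟩
    · rintro _ ⟨y, hy, η, hη, rfl⟩
      exact ⟨y, hy, star (x i) η, B2 η hη i,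
        (DFunLike.congr_fun (comm_of_mem (star_mem (h.mem i)) hy) η).symm⟩
  · intro h0
    have h1 : projOn A ξ = ξ := projOn_self ⟨1, one_mem _, ξ, hξB, rfl⟩
    have h2 := DFunLike.congr_fun h0 ξ
    rw [mul_apply_eq_comp, h1] at h2
    exact hξ h2
  · refine (Bc.biUnion (t := fun η _ => {i | x i η ≠ 0})
      fun η _ => supp_countable h hp η).mono fun i hi => ?_
    by_contra hcon
    apply hi
    refine projOn_kill ?_
    rintro _ ⟨y, hy, η, hη, rfl⟩
    have h1 : x i η = 0 := by
      by_contra h2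
      exact hcon (Set.mem_biUnion hη h2)
    have h2 := DFunLike.congr_fun (comm_of_mem (h.mem i) hy) η
    change y (x i η) = x i (y η) at h2
    rw [← h2, h1, map_zero]

theorem sub_hasSum {κ : Type*} (f : κ → H) (J : Set κ) (a : H) (hf : HasSum f a)
    (h0 : ∀ i, i ∉ J → f i = 0) : HasSum (fun i : J => f i.1) a := by
  have hs : Function.support f ⊆ J := fun i hi => by
    by_contra h3
    exact hi (h0 i h3)
  exact (hasSum_subtype_iff_of_support_subset hs).2 hf

theorem cut (h : KPx M x p q) {e : H →L[ℂ] H} (eM : e ∈ M) (ep : Pr e)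
    (ec : ∀ i, e * x i = x i * e) (ec' : ∀ i, e * star (x i) = star (x i) * e)
    (ecp : e * p = p * e) (ecq : e * q = q * e) (J : Set ι)
    (hz : ∀ i, i ∉ J → x i * e = 0) :
    KPx M (fun i : J => x i.1 * e) (e * p) (e * q) := by
  refine ⟨fun i => mul_mem (h.mem _) eM, fun ξ => ?_, fun ξ => ?_⟩
  · have h1 := h.left (e ξ)
    have h2 : (fun i => (star (x i) * x i) (e ξ)) =
        fun i => (star (x i * e) * (x i * e)) ξ := by
      funext i
      have h5 : e * (x i * e) = x i * e := by rw [← mul_assoc, ec, mul_assoc, ep.2]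
      have : star (x i) * x i * e = star (x i * e) * (x i * e) := by
        rw [star_mul, ep.1, ec', mul_assoc, mul_assoc, h5]
      exact DFunLike.congr_fun this ξ
    rw [h2] at h1
    have h3 : p (e ξ) = (e * p) ξ := (DFunLike.congr_fun ecp ξ).symm
    rw [h3] at h1
    refine sub_hasSum (fun i => (star (x i * e) * (x i * e)) ξ) J _ h1 fun i hi => ?_
    simp only [hz i hi, mul_zero, zero_apply]
  · have h1 := h.right (e ξ)
    have h2 : (fun i => (x i * star (x i)) (e ξ)) =
        fun i => (x i * e * star (x i * e)) ξ := by
      funext i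
      have : x i * star (x i) * e = x i * e * star (x i * e) := by
        rw [star_mul, ep.1, mul_assoc _ e, ← mul_assoc e, ep.2, ec', mul_assoc]
      exact DFunLike.congr_fun this ξ
    rw [h2] at h1
    have h3 : q (e ξ) = (e * q) ξ := (DFunLike.congr_fun ecq ξ).symm
    rw [h3] at h1
    refine sub_hasSum (fun i => (x i * e * star (x i * e)) ξ) J _ h1 fun i hi => ?_
    simp only [hz i hi, zero_mul, zero_apply]

theorem local2 (h : KPx M x p q) (hpM : p ∈ M) (hqM : q ∈ M) (hp : Pr p)
    (hq : Pr q) (p0 : p ≠ 0) :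
    ∃ v ∈ M, PI v ∧ v ≠ 0 ∧ v * p = v ∧ q * v = v ∧
      ∀ i, x i * (star v * v) = (v * star v) * x i := by
  obtain ⟨e, eM, ep, ec, e0, ect⟩ := sigma h hp hq p0
  have ec' : ∀ i, e * star (x i) = star (x i) * e := fun i => by
    have := congrArg star (ec i)
    simpa [ep.1] using this.symm
  have ecp : e * p = p * e := sum_comm h.left fun i => by
    rw [← mul_assoc, ec', mul_assoc, ec, mul_assoc]
  have ecq : e * q = q * e := sum_comm h.right fun i => by
    rw [← mul_assoc, ec, mul_assoc, ec', mul_assoc]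
  have hep := ep.mul_comm hp ecp
  have heq := ep.mul_comm hq ecq
  have : Countable {i | x i * e ≠ 0} := ect.to_subtype
  have hz : ∀ i, i ∉ {i | x i * e ≠ 0} → x i * e = 0 := fun i hi => by
    by_contra h1
    exact hi h1
  have hK := cut h eM ep ec ec' ecp ecq _ hz
  obtain ⟨z, zM, zp, zc, z0, v, vM, v1, v2⟩ := local1 hK (mul_mem eM hpM) (mul_mem eM hqM) hep heq
    (by rw [ecp]; exact e0)
  have hv : PI v := PI.of_pr (zp.mul_comm hep (zc _ (mul_mem eM hpM))) v1
  refine ⟨v, vM, hv, ?_, ?_, ?_, fun i => ?_⟩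
  · rintro rfl
    apply z0
    rw [← v1]; simp
  · have e1 := hv.right
    rw [v1] at e1
    rw [← e1]
    simp only [mul_assoc, hp.2]
  · have e1 : v * star v * v = v := hv
    rw [v2, ecq] at e1
    have e2 : q * (z * (q * e) * v) = z * (q * e) * v := by
      rw [← mul_assoc, ← mul_assoc, ← zc q hqM, mul_assoc z q, ← mul_assoc q, hq.2]
    rw [e1] at e2
    exact e2
  · rw [v1, v2, ← mul_assoc, ← zc _ (h.mem i), mul_assoc, ← mul_assoc (x i), ← ec, mul_assoc e,
      h.mul_right hp, mul_assoc, mul_assoc, h.mul_left hq]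

theorem final (h : KPx M x p q) (hpM : p ∈ M) (hqM : q ∈ M) (hp : Pr p) (hq : Pr q) :
    ∃ v ∈ M, star v * v = p ∧ v * star v = q := by
  obtain ⟨S, w, hS, hwM, hw, k1, k2, -, -, kmax, kS⟩ := exhaust2 M
    (fun v => v * p = v ∧ q * v = v ∧ ∀ i, x i * (star v * v) = (v * star v) * x i)
  have hwp : w * p = w := sum_fix_right k1 fun i => (hS i.1 i.2).2.2.1
  have hqw : q * w = w := sum_fix k1 fun i => (hS i.1 i.2).2.2.2.1
  have hpw : p * star w = star w := hp.flip' hwp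
  have hwq : star w * q = star w := hq.flip hqw
  have s1 : ∀ η, HasSum (fun i : S => (star i.1 * i.1) η) ((star w * w) η) := fun η => by
    have := (k1 η).mapL (star w)
    have e : (fun i : S => star w (i.1 η)) = fun i : S => (star i.1 * i.1) η := by
      funext i
      exact DFunLike.congr_fun (kS i).1 η
    rw [e] at this
    exact this
  have s2 : ∀ η, HasSum (fun i : S => (i.1 * star i.1) η) ((w * star w) η) := fun η => by
    have := (k2 η).mapL w
    have e : (fun i : S => w (star i.1 η)) = fun i : S => (i.1 * star i.1) η := by
      funext i
      exact DFunLike.congr_fun (kS i).2 η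
    rw [e] at this
    exact this
  have comm : ∀ i, x i * (star w * w) = (w * star w) * x i := by
    intro i
    ext η
    have h1 := (s1 η).mapL (x i)
    have h2 := s2 (x i η)
    have e : (fun u : S => x i ((star u.1 * u.1) η)) = fun u : S => (u.1 * star u.1) (x i η) := by
      funext u
      exact DFunLike.congr_fun ((hS u.1 u.2).2.2.2.2 i) η
    rw [e] at h1
    exact h1.unique h2
  have hep : Pr (p - star w * w) := hp.sub hw.pr (by rw [← mul_assoc, hpw])
  have hfp : Pr (q - w * star w) := hq.sub hw.pr' (by rw [← mul_assoc, hqw])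
  set e := p - star w * w with he
  set f := q - w * star w with hf
  have eM : e ∈ M := sub_mem hpM (mul_mem (star_mem hwM) hwM)
  have fM : f ∈ M := sub_mem hqM (mul_mem hwM (star_mem hwM))
  have we : w * e = 0 := by rw [he, mul_sub, hwp, hw.right, sub_self]
  have wf : star w * f = 0 := by rw [hf, mul_sub, hwq, hw.right', sub_self]
  have epe : e * p = e := by rw [he, sub_mul, hp.2, mul_assoc, hwp]
  have pe : p * e = e := by rw [he, mul_sub, hp.2, ← mul_assoc, hpw]
  have qf' : q * f = f := by rw [hf, mul_sub, hq.2, ← mul_assoc, hqw]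
  have xef : ∀ i, x i * e = f * x i := fun i => by
    rw [he, hf, mul_sub, sub_mul, comm, h.mul_right hp, h.mul_left hq]
  have xef' : ∀ i, e * star (x i) = star (x i) * f := fun i => by
    have := congrArg star (xef i)
    simpa [hep.1, hfp.1] using this
  have hK : KPx M (fun i => x i * e) e f := by
    refine ⟨fun i => mul_mem (h.mem _) eM, fun ξ => ?_, fun ξ => ?_⟩
    · have h1 := h.left (e ξ)
      have h2 : (fun i => (star (x i) * x i) (e ξ)) =
          fun i => (star (x i * e) * (x i * e)) ξ := by
        funext i
        have : star (x i) * x i * e = star (x i * e) * (x i * e) := by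
          rw [star_mul, hep.1, xef', mul_assoc, mul_assoc, xef, ← mul_assoc f, hfp.2]
        exact DFunLike.congr_fun this ξ
      rw [h2] at h1
      have h3 : p (e ξ) = e ξ := DFunLike.congr_fun pe ξ
      rwa [h3] at h1
    · have h1 := h.right (f ξ)
      have h2 : (fun i => (x i * star (x i)) (f ξ)) =
          fun i => (x i * e * star (x i * e)) ξ := by
        funext i
        have : x i * star (x i) * f = x i * e * star (x i * e) := by
          rw [star_mul, hep.1, mul_assoc _ e, ← mul_assoc e, hep.2, xef', mul_assoc]
        exact DFunLike.congr_fun this ξ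
      rw [h2] at h1
      have h3 : q (f ξ) = f ξ := DFunLike.congr_fun qf' ξ
      rwa [h3] at h1
  have ez : e = 0 := by
    by_contra e0
    obtain ⟨v, vM, hv, v0, ve, fv, vc⟩ := local2 hK eM fM hep hfp e0
    have ev : e * star v = star v := hep.flip' ve
    have vf : star v * f = star v := hfp.flip fv
    refine v0 (kmax v vM hv ⟨?_, ?_, fun i => ?_⟩ ?_ ?_)
    · rw [← ve, mul_assoc, epe]
    · rw [← fv, ← mul_assoc, qf']
    · have h1 := vc i
      rw [mul_assoc, ← mul_assoc e, ev, xef, mul_assoc v, ← mul_assoc (star v), vf,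
        ← mul_assoc] at h1
      exact h1
    · rw [← fv, ← mul_assoc, wf, zero_mul]
    · rw [← ev, ← mul_assoc, we, zero_mul]
  have fz : f = 0 := by
    have : f * f = 0 := sum_kill hK.right fun i => by
      rw [ez]; simp
    rw [hfp.2] at this
    exact this
  exact ⟨w, hwM, (sub_eq_zero.1 ez).symm, (sub_eq_zero.1 fz).symm⟩

end

end KPMvN

/-- For projections `p, q` in a von Neumann algebra `M`, the
Kadison–Pedersen equivalence `p ≈ q` holds iff `p` and `q` are Murray–von Neumann
equivalent. -/
theorem kpEquiv_iff_mvnEquiv (M : VonNeumannAlgebra H) (p q : H →L[ℂ] H)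
    (hp : IsProjIn M p) (hq : IsProjIn M q) :
    KPEquiv M p q ↔ MvNEquiv M p q := by
  have hp' : KPMvN.Pr p := ⟨hp.2.1, hp.2.2⟩
  have hq' : KPMvN.Pr q := ⟨hq.2.1, hq.2.2⟩
  constructor
  · rintro ⟨ι, x, hx, h1, h2⟩
    exact KPMvN.final (x := x) ⟨hx, h1, h2⟩ hp.1 hq.1 hp' hq'
  · rintro ⟨v, hv, h1, h2⟩
    refine ⟨PUnit, fun _ => v, fun _ => hv, fun ξ => ?_, fun ξ => ?_⟩
    · rw [← h1]
      exact hasSum_unique (fun _ : PUnit => (adjoint v * v) ξ)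
    · rw [← h2]
      exact hasSum_unique (fun _ : PUnit => (v * adjoint v) ξ)
end
end

section
/- The partially ordered set P(M)/∼ of Murray–von Neumann equivalence classes of projections in any von Neumann algebra M is a complete lattice: every subset has a supremum and an infimum with respect to the order induced by subequivalence. -/
open ContinuousLinearMap Filter Topology

universe u

noncomputable section

variable {H : Type u} [NormedAddCommGroup H] [InnerProductSpace ℂ H] [CompleteSpace H]

set_option linter.unusedSectionVars false
namespace PQ
variable {R : Type u} [Ring R] [StarRing R]

theorem rA {a b c : R} (h : a * b = c) (x : R) : a * (b * x) = c * x := by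
  rw [← mul_assoc, h]

/-- Orthogonal projections. -/
structure Pr (p : R) : Prop where
  sa : star p = p
  id : p * p = p

/-- Subequivalence. -/
def Sb (p q : R) : Prop := ∃ v, star v * v = p ∧ q * v = v

/-- Equivalence. -/
def Ev (p q : R) : Prop := ∃ v, star v * v = p ∧ v * star v = q

/-- Supremum of an orthogonal family. -/
structure IsSp {ι : Type*} (e : ι → R) (E : R) : Prop where
  pr : Pr E
  ge : ∀ i, E * e i = e i
  le : ∀ x, (∀ i, e i * x = 0) → E * x = 0

/-- Central projections. -/
structure Ct (z : R) : Prop where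
  pr : Pr z
  cm : ∀ x, z * x = x * z

/-- The properties extracted from the theory of von Neumann algebras. -/
class VN (R : Type u) [Ring R] [StarRing R] : Prop where
  proper : ∀ x : R, star x * x = 0 → x = 0
  sum : ∀ {ι : Type u} (v : ι → R), (∀ i, v i * star (v i) * v i = v i) →
    (∀ i j, i ≠ j → star (v i) * v j = 0) → (∀ i j, i ≠ j → v i * star (v j) = 0) →
    ∃ V : R, (∀ i, V * (star (v i) * v i) = v i) ∧ (∀ i, (v i * star (v i)) * V = v i) ∧
      (∀ x, (∀ i, v i * x = 0) → V * x = 0) ∧ (∀ x, (∀ i, x * v i = 0) → x * V = 0)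
  polar : ∀ x : R, ∃ w : R, w * star w * w = w ∧ x * (star w * w) = x ∧ (w * star w) * x = x ∧
    (∀ y, x * y = 0 → w * y = 0) ∧ (∀ y, y * x = 0 → y * w = 0)
  ann : ∀ p q : R, (∀ x, q * x * p = 0) → ∃ z, Ct z ∧ z * q = q ∧ z * p = 0

namespace Pr
variable {p q : R}
theorem comm0 (hp : Pr p) (hq : Pr q) (h : p * q = 0) : q * p = 0 := by
  have := congrArg star h
  simpa [hp.sa, hq.sa] using this
theorem le' (hp : Pr p) (hq : Pr q) (h : q * p = p) : p * q = p := by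
  have := congrArg star h
  simpa [hp.sa, hq.sa] using this
theorem add (hp : Pr p) (hq : Pr q) (h : p * q = 0) : Pr (p + q) :=
  ⟨by simp [hp.sa, hq.sa], by simp [mul_add, add_mul, hp.id, hq.id, h, hp.comm0 hq h]⟩
/-- `p ≤ q` -/
theorem sub (hp : Pr p) (hq : Pr q) (h : q * p = p) : Pr (q - p) :=
  ⟨by simp [hp.sa, hq.sa], by simp [mul_sub, sub_mul, hp.id, hq.id, h, hp.le' hq h]⟩
theorem zero : Pr (0 : R) := ⟨by simp, by simp⟩
theorem one : Pr (1 : R) := ⟨by simp, by simp⟩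
end Pr

namespace Ct
variable {z w p : R}
theorem compl (hz : Ct z) : Ct (1 - z) :=
  ⟨hz.pr.sub Pr.one (by simp), fun x => by simp [mul_sub, sub_mul, hz.cm x]⟩
theorem mul (hz : Ct z) (hw : Ct w) : Ct (z * w) :=
  ⟨⟨by simp [hz.pr.sa, hw.pr.sa, hz.cm w], by
    rw [mul_assoc, ← mul_assoc w, ← hz.cm w, mul_assoc z w w, hw.pr.id, ← mul_assoc, hz.pr.id]⟩,
   fun x => by rw [mul_assoc, hw.cm, ← mul_assoc, hz.cm, mul_assoc]⟩
theorem one : Ct (1 : R) := ⟨Pr.one, by simp⟩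
theorem cut (hz : Ct z) (hp : Pr p) : Pr (z * p) :=
  ⟨by simp [hz.pr.sa, hp.sa, hz.cm p], by
    rw [mul_assoc, ← mul_assoc p, ← hz.cm p, mul_assoc z p p, hp.id, ← mul_assoc, hz.pr.id]⟩
theorem lc (hz : Ct z) (x y : R) : x * (z * y) = z * (x * y) := by
  rw [← mul_assoc, ← hz.cm, mul_assoc]
end Ct

namespace Sb
variable {a b c d z : R}
theorem of_le (ha : Pr a) (h : b * a = a) : Sb a b := ⟨a, by rw [ha.sa, ha.id], h⟩
theorem refl (ha : Pr a) : Sb a a := of_le ha ha.id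
theorem zero : Sb (0 : R) b := ⟨0, by simp, by simp⟩
theorem trans (h : Sb a b) (h' : Sb b c) : Sb a c := by
  obtain ⟨v, h1, h2⟩ := h
  obtain ⟨w, h3, h4⟩ := h'
  exact ⟨w * v, by simp [mul_assoc, rA h3, h2, h1], by rw [← mul_assoc, h4]⟩
theorem le (h : Sb a b) (h' : c * b = b) : Sb a c := by
  obtain ⟨v, h1, h2⟩ := h
  exact ⟨v, h1, by rw [← h2, ← mul_assoc, h']⟩
theorem add (h : Sb a c) (h' : Sb b d) (hc : Pr c) (hd : Pr d) (hcd : c * d = 0) :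
    Sb (a + b) (c + d) := by
  obtain ⟨v, h1, h2⟩ := h
  obtain ⟨w, h3, h4⟩ := h'
  have e1 : star v * w = 0 := by
    rw [← h2, ← h4]; simp [mul_assoc, hc.sa, rA hcd]
  have e2 : star w * v = 0 := by simpa using congrArg star e1
  have e3 : c * w = 0 := by rw [← h4, ← mul_assoc, hcd, zero_mul]
  have e4 : d * v = 0 := by rw [← h2, ← mul_assoc, hc.comm0 hd hcd, zero_mul]
  exact ⟨v + w, by simp [mul_add, add_mul, h1, h3, e1, e2], by
    simp [mul_add, add_mul, h2, h4, e3, e4]⟩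
theorem cut (hz : Ct z) (h : Sb a b) : Sb (z * a) (z * b) := by
  obtain ⟨v, h1, h2⟩ := h
  refine ⟨z * v, ?_, ?_⟩
  · rw [star_mul, hz.pr.sa, mul_assoc, rA hz.pr.id, hz.lc, h1]
  · rw [mul_assoc, hz.lc, rA hz.pr.id, h2]
theorem cut_le (hz : Ct z) (ha : Pr a) : Sb (z * a) a :=
  of_le (hz.cut ha) (by rw [hz.lc, ha.id])
/-- gluing two central pieces -/
theorem glue (hz : Ct z) (hb : Pr b) (h : Sb (z * a) (z * b))
    (h' : Sb ((1 - z) * a) ((1 - z) * b)) : Sb a b := by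
  have := add h h' (hz.cut hb) (hz.compl.cut hb) (by
    rw [mul_assoc, hz.compl.lc, ← mul_assoc, mul_sub, hz.pr.id]; simp)
  simpa [sub_mul] using this
end Sb

theorem Ev.sb {a b : R} (h : Ev a b) (hb : Pr b) [VN R] : Sb a b := by
  obtain ⟨v, h1, h2⟩ := h
  refine ⟨v, h1, ?_⟩
  have : star (star (b * v - v)) = 0 := by
    rw [VN.proper (star (b * v - v)), star_zero]
    rw [star_star]
    simp only [star_sub, star_mul, hb.sa, mul_sub, sub_mul, mul_assoc]
    rw [h2]; rw [rA h2]; simp [hb.id]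
  rw [star_star] at this
  exact sub_eq_zero.1 this

theorem Ev.symm {a b : R} (h : Ev a b) : Ev b a := by
  obtain ⟨v, h1, h2⟩ := h
  exact ⟨star v, by simpa using h2, by simpa using h1⟩

section
variable [VN R]

theorem mulpr {v p : R} (hp : Pr p) (h : star v * v = p) : v * p = v := by
  apply sub_eq_zero.1
  apply VN.proper
  simp only [star_sub, star_mul, hp.sa, mul_sub, sub_mul, mul_assoc, h]
  rw [rA h]; simp [hp.id]

theorem prr {v p : R} (hp : Pr p) (h : star v * v = p) : Pr (v * star v) :=
  ⟨by simp, by rw [mul_assoc, rA h, ← mul_assoc, mulpr hp h]⟩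

/-- extraction of a subprojection -/
theorem Sb.out {a b : R} (ha : Pr a) (h : Sb a b) : ∃ r, Pr r ∧ Ev a r ∧ b * r = r := by
  obtain ⟨v, h1, h2⟩ := h
  exact ⟨v * star v, prr ha h1, ⟨v, h1, rfl⟩, by rw [← mul_assoc, h2]⟩

theorem Sb.eq_zero {a : R} (h : Sb a 0) : a = 0 := by
  obtain ⟨v, h1, h2⟩ := h
  rw [← h1, ← h2]; simp

theorem IsSp.exists {ι : Type u} (e : ι → R) (he : ∀ i, Pr (e i))
    (ho : ∀ i j, i ≠ j → e i * e j = 0) : ∃ E, IsSp e E := by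
  obtain ⟨V, h1, h2, h3, h4⟩ := VN.sum e (fun i => by simp [(he i).sa, (he i).id])
    (fun i j h => by rw [(he i).sa, ho i j h]) (fun i j h => by rw [(he j).sa, ho i j h])
  simp only [(he _).sa, (he _).id] at h1 h2
  have hid : V * V = V := by
    have := h4 (V - 1) (fun i => by rw [sub_mul, h1]; simp)
    rw [sub_mul, one_mul] at this
    exact sub_eq_zero.1 this
  have hs : star V * V = V := by
    have := h4 (star V - 1) (fun i => by
      have := congrArg star (h2 i)
      rw [star_mul, (he i).sa] at this
      rw [sub_mul, this]; simp)
    rw [sub_mul, one_mul] at this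
    exact sub_eq_zero.1 this
  have hsa : star V = V := by
    have := congrArg star hs
    rw [star_mul, star_star, hs] at this; exact this.symm
  exact ⟨V, ⟨⟨hsa, hid⟩, h1, h3⟩⟩

theorem IsSp.unique {ι : Type*} {e : ι → R} {E F : R} (he : ∀ i, Pr (e i))
    (hE : IsSp e E) (hF : IsSp e F) : E = F := by
  have h1 : E * (1 - F) = 0 := hE.le _ (fun i => by
    rw [mul_sub, mul_one, (he i).le' hF.pr (hF.ge i), sub_self])
  have h2 : F * (1 - E) = 0 := hF.le _ (fun i => by
    rw [mul_sub, mul_one, (he i).le' hE.pr (hE.ge i), sub_self])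
  rw [mul_sub, mul_one, sub_eq_zero] at h1 h2
  have := congrArg star h1
  rw [star_mul, hE.pr.sa, hF.pr.sa] at this
  rw [this, ← h2]

/-- complete additivity -/
theorem IsSp.sb {ι : Type u} {a b : ι → R} {A B : R} (ha : ∀ i, Pr (a i)) (hb : ∀ i, Pr (b i))
    (hao : ∀ i j, i ≠ j → a i * a j = 0) (hbo : ∀ i j, i ≠ j → b i * b j = 0)
    (hA : IsSp a A) (hB : IsSp b B) (h : ∀ i, Sb (a i) (b i)) : Sb A B := by
  choose v h1 h2 using h
  have hv : ∀ i, v i * a i = v i := fun i => mulpr (ha i) (h1 i)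
  obtain ⟨V, k1, k2, k3, k4⟩ := VN.sum v (fun i => by rw [mul_assoc, h1, hv])
    (fun i j hij => by
      rw [← h2 i, ← h2 j, star_mul, (hb i).sa, mul_assoc, rA (hbo i j hij)]; simp)
    (fun i j hij => by
      rw [← hv i, ← hv j, star_mul, (ha j).sa, mul_assoc, rA (hao i j hij)]; simp)
  simp only [h1] at k1
  have k5 : ∀ i, star V * v i = a i := fun i => by
    have := congrArg star (k2 i)
    simp only [star_mul, star_star, mul_assoc] at this
    have h3 : star (v i) * v i = star V * (v i * (star (v i) * v i)) :=
      calc star (v i) * v i = (star V * (v i * star (v i))) * v i := by rw [this]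
        _ = _ := by simp only [mul_assoc]
    rw [h1, hv] at h3
    exact h3.symm
  have hVV : IsSp a (star V * V) := by
    have e : V * (star V * V) = V := by
      have := k4 (V * star V - 1) (fun i => by
        rw [sub_mul, mul_assoc, k5, k1]; simp)
      rw [sub_mul, one_mul] at this
      rw [← mul_assoc]
      exact sub_eq_zero.1 this
    refine ⟨⟨by simp, by rw [mul_assoc, e]⟩, fun i => by rw [mul_assoc, k1, k5], fun x hx => ?_⟩
    rw [mul_assoc, k3 x (fun i => by rw [← hv i, mul_assoc, hx i, mul_zero]), mul_zero]
  refine ⟨V, hVV.unique ha hA, ?_⟩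
  have := k4 (B - 1) (fun i => by
    rw [sub_mul, one_mul, ← h2 i, ← mul_assoc, hB.ge i, sub_self])
  rw [sub_mul, one_mul] at this
  exact sub_eq_zero.1 this

theorem IsSp.central {ι : Type*} {y : ι → R} {w : R} (hy : ∀ i, Ct (y i)) (hw : IsSp y w) :
    Ct w := by
  have key : ∀ x, w * (x * (1 - w)) = 0 := fun x => hw.le _ (fun i => by
    rw [← mul_assoc, (hy i).cm, mul_assoc, mul_sub, mul_one,
      (hy i).pr.le' hw.pr (hw.ge i), sub_self, mul_zero])
  refine ⟨hw.pr, fun x => ?_⟩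
  have h1 := key x
  have h2 := congrArg star (key (star x))
  simp only [star_mul, star_sub, star_one, star_star, hw.pr.sa, star_zero] at h2
  rw [mul_sub, mul_sub, mul_one, sub_eq_zero] at h1
  rw [sub_mul, sub_mul, one_mul, sub_eq_zero] at h2
  rw [h1, ← mul_assoc, ← h2]

theorem IsSp.cut {ι : Type*} {e : ι → R} {E z : R} (hz : Ct z) (h : IsSp e E) :
    IsSp (fun i => z * e i) (z * E) :=
  ⟨hz.cut h.pr, fun i => by rw [mul_assoc, hz.lc, rA hz.pr.id, h.ge], fun x hx => by
    have := h.le (z * x) (fun i => by rw [hz.lc, ← mul_assoc]; exact hx i)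
    rw [hz.lc] at this; rw [mul_assoc, this]⟩

theorem IsSp.cutr {ι : Type*} {y : ι → R} {w b : R} (hy : ∀ i, Ct (y i)) (hb : Pr b)
    (hw : IsSp y w) : IsSp (fun i => y i * b) (w * b) := by
  have hc := hw.central hy
  refine ⟨hc.cut hb, fun i => ?_, fun x hx => ?_⟩
  · rw [mul_assoc, (hy i).lc, hb.id, ← mul_assoc, hw.ge]
  · rw [mul_assoc]; exact hw.le _ (fun i => by rw [← mul_assoc]; exact hx i)

theorem IsSp.le_of {ι : Type*} {e : ι → R} {E q : R} (he : ∀ i, Pr (e i)) (h : IsSp e E)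
    (hq : Pr q) (hl : ∀ i, q * e i = e i) : q * E = E := by
  have h1 : E * (1 - q) = 0 := h.le _ (fun i => by
    rw [mul_sub, mul_one, (he i).le' hq (hl i), sub_self])
  rw [mul_sub, mul_one, sub_eq_zero] at h1
  have := congrArg star h1
  rw [star_mul, h.pr.sa, hq.sa] at this
  exact this.symm

theorem IsSp.orth {ι κ : Type*} {e : ι → R} {f : κ → R} {E F : R} (he : ∀ i, Pr (e i))
    (hf : ∀ i, Pr (f i)) (hE : IsSp e E) (hF : IsSp f F) (h : ∀ i j, e i * f j = 0) :
    E * F = 0 :=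
  hE.le _ (fun i => hF.pr.comm0 (he i) (hF.le _ (fun j => (he i).comm0 (hf j) (h i j))))

end

/-- maximal pairwise related sets -/
theorem exists_max {α : Type*} (P : α → Prop) (r : α → α → Prop) (hs : ∀ a b, r a b → r b a) :
    ∃ S : Set α, (∀ a ∈ S, P a) ∧ (∀ a ∈ S, ∀ b ∈ S, a ≠ b → r a b) ∧
      ∀ x, P x → (∀ a ∈ S, r x a) → x ∈ S := by
  obtain ⟨S, hS⟩ := zorn_subset {S : Set α | (∀ a ∈ S, P a) ∧ (∀ a ∈ S, ∀ b ∈ S, a ≠ b → r a b)}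
    (fun c hc hch => ⟨⋃₀ c, ⟨fun a ⟨s, hs, ha⟩ => (hc hs).1 a ha, by
      rintro a ⟨s, hs, ha⟩ b ⟨t, ht, hb⟩ hab
      rcases hch.total hs ht with h | h
      · exact (hc ht).2 a (h ha) b hb hab
      · exact (hc hs).2 a ha b (h hb) hab⟩, fun s hs => Set.subset_sUnion_of_mem hs⟩)
  refine ⟨S, hS.prop.1, hS.prop.2, fun x hx hxa => ?_⟩
  have : insert x S ⊆ S := hS.le_of_ge ⟨?_, ?_⟩ (Set.subset_insert _ _)
  · exact this (Set.mem_insert _ _)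
  · rintro a (rfl | ha)
    · exact hx
    · exact hS.prop.1 a ha
  · rintro a (rfl | ha) b (rfl | hb) hab
    · exact absurd rfl hab
    · exact hxa b hb
    · exact hs _ _ (hxa a ha)
    · exact hS.prop.2 a ha b hb hab

section
variable [VN R]

theorem tuples {I : Type u} (i0 : I) (p : I → R) (hp : ∀ i, Pr (p i)) :
    ∃ r s : I → R, (∀ i, Pr (r i)) ∧ (∀ i, Pr (s i)) ∧ (∀ i, r i * s i = 0) ∧
      (∀ i, r i + s i = p i) ∧ (∀ i j, Sb (r i) (r j)) ∧
      (∀ e, Pr e → (∀ i, Sb e (s i)) → e = 0) := by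
  obtain ⟨S, h1, h2, h3⟩ := exists_max (α := I → R)
    (fun e => (∀ i, Pr (e i)) ∧ (∀ i, p i * e i = e i) ∧ (∀ i j, Sb (e i) (e j)) ∧ e i0 ≠ 0 )
    (fun e f => ∀ i, e i * f i = 0 ∧ f i * e i = 0) (fun a b h i => ⟨(h i).2, (h i).1⟩)
  have hex : ∀ i, ∃ E, IsSp (fun e : S => e.1 i) E := fun i =>
    IsSp.exists _ (fun e => (h1 e.1 e.2).1 i)
      (fun e f hef => (h2 e.1 e.2 f.1 f.2 (fun h => hef (Subtype.ext h)) i).1)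
  choose r hr using hex
  have hle : ∀ i, p i * r i = r i := fun i =>
    (hr i).le_of (fun e : S => (h1 e.1 e.2).1 i) (hp i) (fun e : S => (h1 e.1 e.2).2.1 i)
  refine ⟨r, fun i => p i - r i, fun i => (hr i).pr, fun i => (hr i).pr.sub (hp i) (hle i),
    fun i => ?_, fun i => by simp, fun i j => ?_, fun e he hes => ?_⟩
  · rw [mul_sub, (hr i).pr.id, (hr i).pr.le' (hp i) (hle i), sub_self]
  · exact IsSp.sb (fun e : S => (h1 e.1 e.2).1 i) (fun e : S => (h1 e.1 e.2).1 j)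
      (fun e f hef => (h2 e.1 e.2 f.1 f.2 (fun h => hef (Subtype.ext h)) i).1)
      (fun e f hef => (h2 e.1 e.2 f.1 f.2 (fun h => hef (Subtype.ext h)) j).1)
      (hr i) (hr j) (fun e => (h1 e.1 e.2).2.2.1 i j)
  · by_contra hne
    choose f hf hef hfs using fun i => (hes i).out he
    have hrf : ∀ i, r i * f i = 0 := fun i => by
      rw [← hfs i, ← mul_assoc, mul_sub, (hr i).pr.id, (hr i).pr.le' (hp i) (hle i), sub_self,
        zero_mul]
    have hmem : f ∈ S := by
      refine h3 f ⟨hf, fun i => ?_, fun i j => ?_, ?_⟩ (fun a ha i => ?_)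
      · have h := hfs i
        rw [sub_mul, hrf, sub_zero] at h
        exact h
      · exact ((hef i).symm.sb he).trans ((hef j).sb (hf j))
      · intro h0
        have := (hef i0).sb (hf i0)
        rw [h0] at this
        exact hne this.eq_zero
      · have : a i * f i = 0 := by
          rw [← ((h1 a ha).1 i).le' (hr i).pr ((hr i).ge ⟨a, ha⟩), mul_assoc, hrf, mul_zero]
        exact ⟨((h1 a ha).1 i).comm0 (hf i) this, this⟩
    have : f i0 = 0 := by
      exact ((hr i0).ge ⟨f, hmem⟩).symm.trans (hrf i0)
    have hk := (hef i0).sb (hf i0)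
    rw [this] at hk
    exact hne hk.eq_zero

/-- generalized comparability -/
theorem compar {p q : R} (hp : Pr p) (hq : Pr q) :
    ∃ z, Ct z ∧ Sb (z * p) (z * q) ∧ Sb ((1 - z) * q) ((1 - z) * p) := by
  obtain ⟨r, s, hr, hs, hrs, hsum, hrr, hmin⟩ := tuples (R := R) (I := ULift Bool) ⟨true⟩
    (fun b => if b.down then p else q) (fun b => by split_ifs <;> assumption)
  have hsp := hsum ⟨true⟩
  have hsq := hsum ⟨false⟩
  simp only [if_true] at hsp
  simp only [Bool.false_eq_true, if_false] at hsq
  have hr1 := hrr ⟨true⟩ ⟨false⟩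
  have hr2 := hrr ⟨false⟩ ⟨true⟩
  generalize ha : r ⟨true⟩ = r1 at *
  have k1 := hr ⟨true⟩
  have k2 := hr ⟨false⟩
  have l1 := hs ⟨true⟩
  have l2 := hs ⟨false⟩
  have o1 := hrs ⟨true⟩
  have o2 := hrs ⟨false⟩
  rw [ha] at k1 o1
  generalize r ⟨false⟩ = r2 at *
  have hmin' : ∀ e, Pr e → Sb e (s ⟨true⟩) → Sb e (s ⟨false⟩) → e = 0 := fun e he h1 h2 =>
    hmin e he (by rintro ⟨_ | _⟩ <;> assumption)
  generalize s ⟨true⟩ = s1 at *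
  generalize s ⟨false⟩ = s2 at *
  obtain ⟨z, hz, hz1, hz2⟩ := VN.ann s1 s2 (fun x => by
    obtain ⟨w, w1, w2, w3, w4, w5⟩ := VN.polar (s2 * x * s1)
    have e1 : w * s1 = w := by
      have := w4 (1 - s1) (by rw [mul_sub, mul_assoc _ s1 s1, l1.id, mul_one, sub_self])
      rw [mul_sub, mul_one, sub_eq_zero] at this; exact this.symm
    have e2 : s2 * w = w := by
      have := w5 (1 - s2) (by
        simp only [sub_mul, one_mul, mul_assoc]; rw [rA l2.id, sub_self])
      rw [sub_mul, one_mul, sub_eq_zero] at this; exact this.symm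
    have e0 : Pr (star w * w) := ⟨by simp, by rw [mul_assoc, ← mul_assoc w, w1]⟩
    have := hmin' _ e0 (Sb.of_le e0 (by
      rw [← mul_assoc]; congr 1; simpa [l1.sa] using congrArg star e1)) ⟨w, rfl, e2⟩
    rw [← w2, this, mul_zero])
  refine ⟨z, hz, ?_, ?_⟩
  · rw [← hsp, mul_add, hz2, add_zero]
    refine (hr1.cut hz).le ?_
    rw [← hsq, mul_assoc, hz.lc, add_mul, k2.id, k2.comm0 l2 o2]
    rw [add_zero, ← mul_assoc, hz.pr.id]
  · have e : (1 - z) * q = (1 - z) * r2 := by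
      rw [← hsq, mul_add, sub_mul _ _ s2, hz1]; simp
    rw [e]
    refine (hr2.cut hz.compl).le ?_
    rw [← hsp, mul_assoc, hz.compl.lc, add_mul, k1.id, k1.comm0 l1 o1]
    rw [add_zero, ← mul_assoc, hz.compl.pr.id]

theorem comparPlus {b r : R} (hb : Pr b) (hr : Pr r) :
    ∃ w, Ct w ∧ Sb ((1 - w) * b) ((1 - w) * r) ∧ Sb (w * r) (w * b) ∧
      ∀ y, Ct y → Sb (y * (w * b)) (y * (w * r)) → y * (w * b) = 0 := by
  obtain ⟨S, h1, h2, h3⟩ := exists_max (α := R)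
    (fun y => Ct y ∧ Sb (y * b) (y * r)) (fun x y => x * y = 0 ∧ y * x = 0)
    (fun a b h => ⟨h.2, h.1⟩)
  have ho : ∀ e f : S, e ≠ f → e.1 * f.1 = 0 :=
    fun e f hef => (h2 e.1 e.2 f.1 f.2 (fun h => hef (Subtype.ext h))).1
  obtain ⟨v, hv⟩ := IsSp.exists (fun e : S => e.1) (fun e => (h1 e.1 e.2).1.pr) ho
  have hS : ∀ e : S, Ct e.1 := fun e => (h1 e.1 e.2).1
  have cv := hv.central hS
  have ho' : ∀ c : R, Pr c → ∀ e f : S, e ≠ f → (e.1 * c) * (f.1 * c) = 0 := fun c hc e f hef => by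
    rw [mul_assoc, (hS f).lc, hc.id, ← mul_assoc, ho e f hef, zero_mul]
  have hvb : Sb (v * b) (v * r) :=
    IsSp.sb (fun e => (hS e).cut hb) (fun e => (hS e).cut hr) (ho' b hb) (ho' r hr)
      (hv.cutr hS hb) (hv.cutr hS hr) (fun e => (h1 e.1 e.2).2)
  have hno : ∀ y, Ct y → Sb (y * ((1 - v) * b)) (y * ((1 - v) * r)) → y * ((1 - v) * b) = 0 := by
    intro y hy hyb
    have hy' := hy.mul cv.compl
    have h0 : ∀ a : S, a.1 * (y * (1 - v)) = 0 := fun a => by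
      rw [hy.lc, mul_sub, mul_one, (hS a).pr.le' cv.pr (hv.ge a), sub_self, mul_zero]
    have hm : y * (1 - v) ∈ S := h3 _ ⟨hy', by simpa only [mul_assoc] using hyb⟩
      (fun a ha => ⟨(hS ⟨a, ha⟩).pr.comm0 hy'.pr (h0 ⟨a, ha⟩), h0 ⟨a, ha⟩⟩)
    have := h0 ⟨_, hm⟩
    rw [hy'.pr.id] at this
    rw [← mul_assoc, this, zero_mul]
  have hw := cv.compl
  obtain ⟨z, hz, z1, z2⟩ := compar (hw.cut hb) (hw.cut hr)
  have hz0 := hno z hz z1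
  have hbe : (1 - z) * ((1 - v) * b) = (1 - v) * b := by rw [sub_mul, hz0]; simp
  refine ⟨(1 - z) * (1 - v), hz.compl.mul hw, ?_, by simpa only [mul_assoc] using z2,
    fun y hy h => ?_⟩
  · have : (1 - (1 - z) * (1 - v)) * b = v * b := by
      rw [sub_mul, mul_assoc, hbe, sub_mul]; simp
    rw [this]
    refine hvb.le ?_
    have e : (1 - (1 - z) * (1 - v)) * v = v := by
      rw [sub_mul, mul_assoc, sub_mul _ _ v, cv.pr.id]; simp
    rw [mul_assoc, cv.lc, hr.id, ← mul_assoc, e]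
  · rw [mul_assoc, hbe]
    apply hno y hy
    rw [mul_assoc, hbe] at h
    exact h.le (by
      have e1 : (1 - z) * (1 - v) * r = (1 - z) * ((1 - v) * r) := mul_assoc _ _ _
      rw [e1]
      have cr := hw.cut hr
      generalize (1 - v) * r = c at *
      rw [mul_assoc, hy.lc, rA hy.pr.id, hz.compl.lc, cr.id])

/-- doubled projections -/
def Dbl (F : R) : Prop := Pr F ∧ ∃ a c, Pr a ∧ Pr c ∧ F * a = a ∧ F * c = c ∧ a * c = 0 ∧
  Sb F a ∧ Sb F c

theorem Dbl.cut {F z : R} (hz : Ct z) (h : Dbl F) : Dbl (z * F) := by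
  obtain ⟨hF, a, c, ha, hc, h1, h2, h3, h4, h5⟩ := h
  refine ⟨hz.cut hF, z * a, z * c, hz.cut ha, hz.cut hc, ?_, ?_, ?_, h4.cut hz, h5.cut hz⟩
  · rw [mul_assoc, hz.lc, h1, rA hz.pr.id]
  · rw [mul_assoc, hz.lc, h2, rA hz.pr.id]
  · rw [mul_assoc, hz.lc, h3]; simp

theorem Dbl.add {F a c : R} (h : Dbl F) (h1 : Sb a F) (h2 : Sb c F) : Sb (a + c) F := by
  obtain ⟨hF, x, y, hx, hy, k1, k2, k3, k4, k5⟩ := h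
  exact ((h1.trans k4).add (h2.trans k5) hx hy k3).le (by rw [mul_add, k1, k2])

theorem Dbl.ev {F G : R} (h : Dbl F) (hG : Pr G) (h' : Ev F G) : Dbl G := by
  obtain ⟨hF, a, c, ha, hc, h1, h2, h3, h4, h5⟩ := h
  have hGF := h'.symm.sb hF
  obtain ⟨v, v1, v2⟩ := h'
  have key : ∀ a, Pr a → F * a = a → Pr (v * a * star v) ∧ G * (v * a * star v) = v * a * star v
      ∧ Sb a (v * a * star v) := by
    intro a ha h
    have hGv : G * v = v := by rw [← v2, mul_assoc, v1, mulpr hF v1]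
    refine ⟨⟨by simp [mul_assoc, ha.sa], ?_⟩, ?_, v * a, ?_, ?_⟩
    · simp only [mul_assoc]; rw [rA v1, rA h, rA ha.id]
    · simp only [← mul_assoc]; rw [hGv]
    · simp only [star_mul, mul_assoc]; rw [rA v1, h, ha.sa, ha.id]
    · simp only [mul_assoc]; rw [rA v1, h, ha.id]
  obtain ⟨a1, a2, a3⟩ := key a ha h1
  obtain ⟨c1, c2, c3⟩ := key c hc h2
  refine ⟨hG, _, _, a1, c1, a2, c2, ?_, (hGF.trans h4).trans a3, (hGF.trans h5).trans c3⟩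
  simp only [mul_assoc]; rw [rA v1, rA h2, rA h3]; simp

theorem par {p q X : R} (hp : Pr p) (hq : Pr q) (hX : Pr X) (hpX : X * p = p) (hqX : X * q = q) :
    ∃ e f, Pr e ∧ Pr f ∧ p * e = e ∧ (q * (p - e) = p - e) ∧ Ev e f ∧ q * f = 0 ∧ X * f = f ∧
      (∀ y, (1 - q) * p * y = 0 → e * y = 0) ∧ (∀ y, y * ((1 - q) * p) = 0 → y * f = 0) ∧
      f * ((1 - q) * p) = (1 - q) * p := by
  obtain ⟨w, w1, w2, w3, w4, w5⟩ := VN.polar ((1 - q) * p)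
  have he : Pr (star w * w) := ⟨by simp, by rw [mul_assoc, ← mul_assoc w, w1]⟩
  have hf : Pr (w * star w) := ⟨by simp, by rw [← mul_assoc, w1]⟩
  have hpe : p * (star w * w) = star w * w := by
    have := w4 (1 - p) (by rw [mul_assoc, mul_sub, hp.id]; simp)
    rw [mul_sub, mul_one, sub_eq_zero] at this
    have h2 := congrArg star this
    rw [star_mul, hp.sa] at h2
    rw [← mul_assoc, ← h2]
  refine ⟨star w * w, w * star w, he, hf, hpe, ?_, ⟨w, rfl, rfl⟩, ?_, ?_, ?_, ?_, w3⟩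
  · have : (1 - q) * p * (1 - star w * w) = 0 := by rw [mul_sub, mul_one, w2, sub_self]
    rw [mul_assoc, mul_sub, mul_one, hpe, sub_mul, one_mul, sub_eq_zero] at this
    exact this.symm
  · rw [← mul_assoc, w5 q (by rw [← mul_assoc, mul_sub, hq.id]; simp), zero_mul]
  · have := w5 (1 - X) (by
      simp only [sub_mul, one_mul, mul_sub, hpX]; rw [rA hqX]; simp)
    rw [sub_mul, one_mul, sub_eq_zero] at this
    rw [← mul_assoc, ← this]
  · intro y hy; rw [mul_assoc, w4 y hy, mul_zero]
  · intro y hy; rw [← mul_assoc, w5 y hy, zero_mul]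

end

section
variable [VN R]

theorem split {f f1 g : R} (hf : Dbl f) (h1 : Pr f1) (hg : Pr g) (ho : f1 * g = 0)
    (hs : f = f1 + g) : ∃ z, Ct z ∧ Sb (z * f) (z * f1) ∧ Sb ((1 - z) * f) ((1 - z) * g) := by
  obtain ⟨hF, p, c0, hp, hc0, k1, k2, k3, k4, k5⟩ := hf
  have hq : Pr (f - p) := hp.sub hF k1
  have hfq : Sb f (f - p) := k5.le (by rw [sub_mul, k2, k3, sub_zero])
  have hff1 : f * f1 = f1 := by rw [hs, add_mul, h1.id, h1.comm0 hg ho, add_zero]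
  obtain ⟨e, b, he, hb, m1, m2, m3, m4, m5, m6, m7, m8⟩ := par hp h1 hF k1 hff1
  obtain ⟨e', b', he', hb', n1, n2, n3, n4, n5, n6, n7, n8⟩ := par h1 hp hF hff1 k1
  have ha : Pr (p - e) := he.sub hp m1
  have hc : Pr (f1 - (p - e)) := ha.sub h1 m2
  obtain ⟨z, hz, z1, z2⟩ := compar he hc
  refine ⟨z, hz, ?_, ?_⟩
  · refine (k4.cut hz).trans ?_
    have := Sb.add (Sb.refl (hz.cut ha)) z1 (hz.cut ha) (hz.cut hc) (by
      rw [mul_assoc, hz.lc, mul_sub (p - e), ha.le' h1 m2, ha.id, sub_self]; simp)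
    rw [← mul_add, ← mul_add] at this
    simpa using this
  · refine (hfq.cut hz.compl).trans ?_
    have hle : (f - p) * b' = b' := by rw [sub_mul, n4, n5, sub_zero]
    have hh : Pr (f - p - b') := hb'.sub hq hle
    have hhp : (f - p - b') * p = 0 := by
      rw [sub_mul, sub_mul, k1, hp.id, hp.comm0 hb' n4]; simp
    have hhb : (f - p - b') * b' = 0 := by
      rw [sub_mul, hle, hb'.id, sub_self]
    have hhf1 : (f - p - b') * f1 = 0 := by
      have : (f - p - b') * f1 = (f - p - b') * ((1 - p) * f1) := by
        rw [sub_mul 1 p f1, mul_sub, ← mul_assoc _ p, hhp]; simp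
      rw [this, ← n8, ← mul_assoc, hhb, zero_mul]
    have hhb1 : (f - p - b') * b = 0 := m7 _ (by
      rw [sub_mul 1 f1 p, mul_sub, ← mul_assoc _ f1, hhf1, one_mul, hhp]; simp)
    have hgh : g * (f - p - b') = f - p - b' := by
      have e1 : f * (f - p - b') = f - p - b' := by
        rw [mul_sub, mul_sub, hF.id, k1, n5]
      have e2 := hh.comm0 h1 hhf1
      rwa [hs, add_mul, ← hs, e2, zero_add] at e1
    have hgb : g * b = b := by
      have e1 := m5
      rwa [hs, add_mul, m4, zero_add] at e1
    have hec : (f1 - (p - e)) * e' = e' := by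
      have : e' * (p - e) = 0 := n6 _ (by
        rw [mul_assoc, m2, sub_mul, one_mul, mul_sub p p e, hp.id, m1, sub_self])
      rw [sub_mul, n1, he'.comm0 ha this, sub_zero]
    have hbb : Sb ((1 - z) * b') ((1 - z) * b) := by
      refine Sb.trans ?_ (z2.trans ((m3.sb hb).cut hz.compl))
      exact ((n3.symm.sb he').le hec).cut hz.compl
    have := Sb.add (Sb.refl (hz.compl.cut hh)) hbb (hz.compl.cut hh) (hz.compl.cut hb) (by
      rw [mul_assoc, hz.compl.lc, hhb1]; simp)
    rw [← mul_add, ← mul_add] at this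
    simp only [sub_add_cancel] at this
    refine this.le ?_
    rw [mul_assoc, hz.compl.lc, rA hz.compl.pr.id, mul_add, hgh, hgb]

theorem dichotomy {f r : R} (hf : Dbl f) (hf0 : f ≠ 0) (hr : Pr r) (hfr : Sb f r) :
    ∃ y F, Ct y ∧ y * f ≠ 0 ∧ Dbl F ∧ Sb F (y * r) ∧ Sb (y * r) F := by
  obtain ⟨S, h1, h2, h3⟩ := exists_max (α := R)
    (fun e => Pr e ∧ Ev f e ∧ r * e = e) (fun x y => x * y = 0 ∧ y * x = 0)
    (fun a b h => ⟨h.2, h.1⟩)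
  have ho : ∀ e f : S, e ≠ f → e.1 * f.1 = 0 :=
    fun e f hef => (h2 e.1 e.2 f.1 f.2 (fun h => hef (Subtype.ext h))).1
  have hS : ∀ e : S, Pr e.1 := fun e => (h1 e.1 e.2).1
  obtain ⟨F, hF⟩ := IsSp.exists (fun e : S => e.1) hS ho
  have hFr : r * F = F := hF.le_of hS hr (fun e => (h1 e.1 e.2).2.2)
  have hDe : ∀ e : S, Dbl e.1 := fun e => hf.ev (hS e) (h1 e.1 e.2).2.1
  have hDF : Dbl F := by
    choose hP a c ha hc k1 k2 k3 k4 k5 using hDe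
    have key : ∀ a c : S → R, (∀ e, Pr (a e)) → (∀ e, Pr (c e)) → (∀ e, e.1 * a e = a e) →
        (∀ e, e.1 * c e = c e) → ∀ e e', e ≠ e' → a e * c e' = 0 := by
      intro a c ha hc k1 k2 e e' hee
      rw [← (ha e).le' (hS e) (k1 e), ← k2 e', mul_assoc, rA (ho e e' hee)]; simp
    obtain ⟨A, hA⟩ := IsSp.exists a ha (key a a ha ha k1 k1)
    obtain ⟨C, hC⟩ := IsSp.exists c hc (key c c hc hc k2 k2)
    refine ⟨hF.pr, A, C, hA.pr, hC.pr, ?_, ?_, ?_, ?_, ?_⟩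
    · exact hA.le_of ha hF.pr (fun e => by rw [← k1 e, ← mul_assoc, hF.ge])
    · exact hC.le_of hc hF.pr (fun e => by rw [← k2 e, ← mul_assoc, hF.ge])
    · refine hA.orth ha hc hC (fun e e' => ?_)
      by_cases h : e = e'
      · subst h; exact k3 e
      · exact key a c ha hc k1 k2 e e' h
    · exact IsSp.sb hS ha ho (key a a ha ha k1 k1) hF hA k4
    · exact IsSp.sb hS hc ho (key c c hc hc k2 k2) hF hC k5
  have hr' : Pr (r - F) := hF.pr.sub hr hFr
  have hnot : ¬ Sb f (r - F) := by
    intro h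
    obtain ⟨e, he, hfe, hre⟩ := h.out hf.1
    have hFe : F * e = 0 := by
      rw [← hre, ← mul_assoc, mul_sub, hF.pr.id, hF.pr.le' hr hFr, sub_self, zero_mul]
    have hm : e ∈ S := h3 e ⟨he, hfe, by
        rw [sub_mul, hFe, sub_zero] at hre; exact hre⟩ (fun a ha => by
      have : a * e = 0 := by
        have h4 : a * F = a := (hS ⟨a, ha⟩).le' hF.pr (hF.ge ⟨a, ha⟩)
        rw [← h4, mul_assoc, hFe, mul_zero]
      exact ⟨(hS ⟨a, ha⟩).comm0 he this, this⟩)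
    have h0 : e = 0 := (hF.ge ⟨e, hm⟩).symm.trans hFe
    have := hfe.sb he
    rw [h0] at this
    exact hf0 this.eq_zero
  have hfF : Sb f F := by
    by_cases hne : S.Nonempty
    · obtain ⟨e, he⟩ := hne
      exact ((h1 e he).2.1.sb (h1 e he).1).le (hF.ge ⟨e, he⟩)
    · exfalso
      have : F = 0 := by
        have := hF.le 1 (fun e => absurd ⟨e.1, e.2⟩ hne)
        simpa using this
      rw [this, sub_zero] at hnot
      exact hnot hfr
  obtain ⟨z, hz, z1, z2⟩ := compar hr' hf.1
  refine ⟨z, z * F, hz, fun h0 => hnot ?_, hDF.cut hz, ?_, ?_⟩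
  · have : (1 - z) * f = f := by rw [sub_mul, h0]; simp
    rw [this] at z2
    exact z2.trans (Sb.cut_le hz.compl hr')
  · exact (Sb.of_le hF.pr hFr).cut hz
  · have e : z * r = z * F + z * (r - F) := by rw [← mul_add]; simp
    rw [e]
    exact (hDF.cut hz).add (Sb.refl (hz.cut hF.pr)) (z1.trans (hfF.cut hz))

theorem shift {x v t : R} (hx : Pr x) (hv : star v * v = x) (hxv : x * v = v) (ht : Pr t)
    (hxt : x * t = t) (htv : t * v = 0) : ∃ f, Dbl f ∧ x * f = f ∧ Sb t f := by
  have hvv : ∀ n (y : R), x * y = y → star (v ^ n) * (v ^ n * y) = y := by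
    intro n
    induction n with
    | zero => intro y _; simp
    | succ n ih =>
      intro y hy
      rw [pow_succ, star_mul, mul_assoc, mul_assoc, ih _ (by rw [rA hxv]), ← mul_assoc, hv, hy]
  have hxn : ∀ n, x * (v ^ n * t) = v ^ n * t := by
    intro n
    cases n with
    | zero => simpa using hxt
    | succ n => rw [pow_succ', mul_assoc, rA hxv]
  have htn : ∀ n, t * (v ^ (n + 1)) = 0 := fun n => by rw [pow_succ', ← mul_assoc, htv, zero_mul]
  let w : ℕ → R := fun n => v ^ n * t
  have w1 : ∀ n, star (w n) * w n = t := fun n => by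
    simp only [w, star_mul, mul_assoc]
    rw [hvv n t hxt, ht.sa, ht.id]
  have w2 : ∀ m k, star (w m) * w (m + (k + 1)) = 0 := fun m k => by
    simp only [w, star_mul, mul_assoc]
    rw [pow_add, mul_assoc, hvv m _ (hxn _), ht.sa, ← mul_assoc, htn, zero_mul]
  have w3 : ∀ m n, m ≠ n → star (w m) * w n = 0 := by
    intro m n h
    rcases lt_or_gt_of_ne h with h | h
    · obtain ⟨k, rfl⟩ := Nat.exists_eq_add_of_lt h
      exact w2 m k
    · obtain ⟨k, rfl⟩ := Nat.exists_eq_add_of_lt h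
      have := congrArg star (w2 n k)
      simpa [add_assoc] using this
  let T : ℕ → R := fun n => w n * star (w n)
  have hT : ∀ n, Pr (T n) := fun n => prr ht (w1 n)
  have hTo : ∀ m n, m ≠ n → T m * T n = 0 := fun m n h => by
    simp only [T, mul_assoc]; rw [rA (w3 m n h)]; simp
  have hTs : ∀ m n, Sb (T m) (T n) := fun m n => by
    have h1 : Ev t (T m) := ⟨w m, w1 m, rfl⟩
    have h2 : Ev t (T n) := ⟨w n, w1 n, rfl⟩
    exact (h1.symm.sb ht).trans (h2.sb (hT n))
  have hTx : ∀ n, x * T n = T n := fun n => by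
    simp only [T]; rw [← mul_assoc]; congr 1; exact hxn n
  obtain ⟨f, hf⟩ := IsSp.exists (fun n : ULift.{u} ℕ => T n.down) (fun n => hT _)
    (fun m n h => hTo _ _ (fun h' => h (ULift.ext _ _ h')))
  obtain ⟨a, ha⟩ := IsSp.exists (fun n : ULift.{u} ℕ => T (2 * n.down)) (fun n => hT _)
    (fun m n h => hTo _ _ (fun h' => h (ULift.ext _ _ (by omega))))
  obtain ⟨c, hc⟩ := IsSp.exists (fun n : ULift.{u} ℕ => T (2 * n.down + 1)) (fun n => hT _)
    (fun m n h => hTo _ _ (fun h' => h (ULift.ext _ _ (by omega))))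
  refine ⟨f, ⟨hf.pr, a, c, ha.pr, hc.pr, ?_, ?_, ?_, ?_, ?_⟩, ?_, ?_⟩
  · exact ha.le_of (fun n => hT _) hf.pr (fun n => hf.ge ⟨2 * n.down⟩)
  · exact hc.le_of (fun n => hT _) hf.pr (fun n => hf.ge ⟨2 * n.down + 1⟩)
  · exact ha.orth (fun n => hT _) (fun n => hT _) hc (fun m n => hTo _ _ (by omega))
  · exact IsSp.sb (fun n => hT _) (fun n => hT _)
      (fun m n h => hTo _ _ (fun h' => h (ULift.ext _ _ h')))
      (fun m n h => hTo _ _ (fun h' => h (ULift.ext _ _ (by omega)))) hf ha (fun n => hTs _ _)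
  · exact IsSp.sb (fun n => hT _) (fun n => hT _)
      (fun m n h => hTo _ _ (fun h' => h (ULift.ext _ _ h')))
      (fun m n h => hTo _ _ (fun h' => h (ULift.ext _ _ (by omega)))) hf hc (fun n => hTs _ _)
  · exact hf.le_of (fun n => hT _) hx (fun n => hTx _)
  · have h1 : Ev t (T 0) := ⟨w 0, w1 0, rfl⟩
    exact (h1.sb (hT 0)).le (hf.ge ⟨0⟩)

theorem cancel {r1 r2 s t : R} (hr1 : Pr r1) (hr2 : Pr r2) (hs : Pr s) (ht : Pr t)
    (h1 : r1 * t = 0) (h2 : r2 * s = 0) (hr : Sb r2 r1) (hle : Sb (r1 + t) (r2 + s))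
    (hst : Sb s t) (hfree : ∀ f, Dbl f → Sb f r2 → f = 0) : Sb t s := by
  obtain ⟨s', hs', hss', hts'⟩ := hst.out hs
  have ht' : Pr (t - s') := hs'.sub ht hts'
  have o1 : r1 * s' = 0 := by rw [← hts', ← mul_assoc, h1, zero_mul]
  have o2 : s' * (t - s') = 0 := by rw [mul_sub, hs'.le' ht hts', hs'.id, sub_self]
  have o3 : r1 * (t - s') = 0 := by rw [mul_sub, h1, o1, sub_self]
  have hx : Pr (r2 + s) := hr2.add hs h2
  obtain ⟨γ, g1, g2⟩ := hr.add (hss'.sb hs') hr1 hs' o1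
  obtain ⟨β, b1, b2⟩ := hle
  have htg : (t - s') * γ = 0 := by
    rw [← g2, ← mul_assoc, mul_add, hr1.comm0 ht' o3, hs'.comm0 ht' o2]; simp
  have htγ : t * γ = s' * γ := by rw [sub_mul, sub_eq_zero] at htg; exact htg
  have htt : (r1 + t) * (t - s') = t - s' := by
    rw [add_mul, o3, mul_sub, ht.id, hts', zero_add]
  have hbt : star β * (β * (t - s')) = t - s' := by rw [rA b1, htt]
  obtain ⟨f, hf, hxf, htf⟩ := shift (x := r2 + s) (v := β * γ)
    (t := β * (t - s') * star β) hx
    (by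
      rw [star_mul, mul_assoc, rA b1, add_mul, htγ, ← add_mul, g2, g1])
    (by rw [← mul_assoc, b2])
    (by
      have := prr (v := β * (t - s')) ht' (by
        rw [star_mul, mul_assoc, hbt, ht'.sa, ht'.id])
      rw [star_mul, ht'.sa, mul_assoc, rA ht'.id, ← mul_assoc] at this
      exact this)
    (by rw [← mul_assoc, ← mul_assoc, b2])
    (by
      simp only [mul_assoc]
      rw [rA b1, add_mul, htγ, ← add_mul, g2, htg, mul_zero])
  have htf' : Sb (t - s') f := by
    refine Sb.trans ⟨β * (t - s'), ?_, ?_⟩ htf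
    · rw [star_mul, mul_assoc, hbt, ht'.sa, ht'.id]
    · simp only [mul_assoc]; rw [hbt, ht'.id]
  have hxs : (r2 + s) * s = s := by rw [add_mul, h2, hs.id, zero_add]
  obtain ⟨e, g, he, hg, m1, m2, m3, m4, m5, -⟩ := par hf.1 hs hx hxf hxs
  have hfe : Pr (f - e) := he.sub hf.1 m1
  obtain ⟨z, hz, z1, z2⟩ := split hf hfe he
    (by rw [sub_mul, m1, he.id, sub_self]) (by simp)
  have hg2 : r2 * g = g := by rw [add_mul, m4, add_zero] at m5; exact m5
  have h0 : (1 - z) * f = 0 := hfree _ (hf.cut hz.compl)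
    ((z2.trans (Sb.cut_le hz.compl he)).trans ((m3.sb hg).le hg2))
  have hfs : Sb f s := by
    have : z * f = f := by
      rw [sub_mul, one_mul, sub_eq_zero] at h0; exact h0.symm
    rw [this] at z1
    exact (z1.trans (Sb.cut_le hz hfe)).le m2
  obtain ⟨f', hf', hff', hsf'⟩ := (hfs.trans (hss'.sb hs')).out hf.1
  have k1 : Sb (f' + (t - s')) f' :=
    (hf.add (hff'.symm.sb hf.1) htf').trans (hff'.sb hf')
  have hd : Pr (s' - f') := hf'.sub hs' hsf'
  have k2 := (Sb.refl hd).add k1 hd hf' (by rw [sub_mul, hsf', hf'.id, sub_self])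
  have e1 : s' - f' + (f' + (t - s')) = t := by abel
  rw [e1, sub_add_cancel] at k2
  exact k2.trans (hss'.symm.sb hs)

theorem core' {I : Type u} (i0 : I) {r s : I → R} {b : R} (hr : ∀ i, Pr (r i))
    (hs : ∀ i, Pr (s i)) (hrs : ∀ i, r i * s i = 0) (hrr : ∀ i j, Sb (r i) (r j))
    (hmin : ∀ e, Pr e → (∀ i, Sb e (s i)) → e = 0) (hb : Pr b) (hbl : ∀ i, Sb b (r i + s i))
    (hrb : Sb (r i0) b) (hno : ∀ y, Ct y → Sb (y * b) (y * r i0) → y * b = 0) : b = 0 := by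
  have hfree : ∀ f, Dbl f → Sb f (r i0) → f = 0 := by
    intro f hf hfr
    by_contra hf0
    obtain ⟨y, F, hy, hyf, hF, k1, k2⟩ := dichotomy hf hf0 (hr i0) hfr
    have : y * r i0 = 0 := hmin _ (hy.cut (hr i0)) (fun i => by
      obtain ⟨z, hz, z1, z2⟩ := compar (hy.cut (hs i)) (hy.cut (hr i))
      have hzF := hF.cut hz
      have e1 : Sb (z * (y * r i)) (z * F) := (((hrr i i0).cut hy).trans k2).cut hz
      have e2 : Sb (z * (y * b)) (z * (y * r i0)) := by
        have h1 := ((hbl i).cut hy).cut hz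
        rw [mul_add, mul_add] at h1
        exact (h1.trans (hzF.add e1 (z1.trans e1))).trans (k1.cut hz)
      have e3 : z * (y * b) = 0 := by
        rw [← mul_assoc]
        exact hno _ (hz.mul hy) (by simpa only [mul_assoc] using e2)
      have e4 : z * (y * r i0) = 0 := by
        have h1 := (hrb.cut hy).cut hz
        rw [e3] at h1
        exact h1.eq_zero
      refine Sb.trans ?_ (Sb.cut_le hy (hs i))
      refine Sb.glue hz (hy.cut (hs i)) (by rw [e4]; exact Sb.zero) ?_
      exact (((hrr i0 i).cut hy).cut hz.compl).trans z2)
    have h1 := hfr.cut hy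
    rw [this] at h1
    exact hyf h1.eq_zero
  obtain ⟨r', hr', hrr', hbr'⟩ := hrb.out (hr i0)
  have ht : Pr (b - r') := hr'.sub hb hbr'
  have hrt : r' * (b - r') = 0 := by rw [mul_sub, hr'.le' hb hbr', hr'.id, sub_self]
  have ht0 : b - r' = 0 := hmin _ ht (fun i => by
    obtain ⟨w, hw, w1, w2, w3⟩ := comparPlus ht (hs i)
    have hc : Sb (w * (b - r')) (w * s i) := by
      refine cancel (r1 := w * r') (r2 := w * r i) (hw.cut hr') (hw.cut (hr i)) (hw.cut (hs i))
        (hw.cut ht) ?_ ?_ ?_ ?_ w2 ?_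
      · rw [mul_assoc, hw.lc, hrt]; simp
      · rw [mul_assoc, hw.lc, hrs]; simp
      · exact ((hrr i i0).trans (hrr'.sb hr')).cut hw
      · rw [← mul_add, ← mul_add, add_sub_cancel]; exact (hbl i).cut hw
      · intro f hf hfw
        exact hfree f hf ((hfw.trans (Sb.cut_le hw (hr i))).trans (hrr i i0))
    exact Sb.glue hw (hs i) hc w1)
  have hbr : b = r' := sub_eq_zero.1 ht0
  have := hno 1 Ct.one (by rw [one_mul, one_mul, hbr]; exact hrr'.symm.sb (hr i0))
  simpa using this

theorem core {I : Type u} (i0 : I) {r s : I → R} {b : R} (hr : ∀ i, Pr (r i))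
    (hs : ∀ i, Pr (s i)) (hrs : ∀ i, r i * s i = 0) (hrr : ∀ i j, Sb (r i) (r j))
    (hmin : ∀ e, Pr e → (∀ i, Sb e (s i)) → e = 0) (hb : Pr b) (hbl : ∀ i, Sb b (r i + s i)) :
    Sb b (r i0) := by
  obtain ⟨w, hw, w1, w2, w3⟩ := comparPlus hb (hr i0)
  have : w * b = 0 := core' i0 (r := fun i => w * r i) (s := fun i => w * s i)
    (fun i => hw.cut (hr i)) (fun i => hw.cut (hs i))
    (fun i => by rw [mul_assoc, hw.lc, hrs]; simp) (fun i j => (hrr i j).cut hw)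
    (fun e he h => hmin e he (fun i => (h i).trans (Sb.cut_le hw (hs i)))) (hw.cut hb)
    (fun i => by rw [← mul_add]; exact (hbl i).cut hw) w2 w3
  exact Sb.glue hw (hr i0) (by rw [this]; exact Sb.zero) w1

/-- infima exist -/
theorem exists_inf {I : Type u} (i0 : I) (p : I → R) (hp : ∀ i, Pr (p i)) :
    ∃ m, Pr m ∧ (∀ i, Sb m (p i)) ∧ ∀ b, Pr b → (∀ i, Sb b (p i)) → Sb b m := by
  obtain ⟨r, s, hr, hs, hrs, hsum, hrr, hmin⟩ := tuples i0 p hp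
  refine ⟨r i0, hr i0, fun i => (hrr i0 i).le ?_, fun b hb h => ?_⟩
  · rw [← hsum, add_mul, (hr i).id, (hr i).comm0 (hs i) (hrs i), add_zero]
  · exact core i0 hr hs hrs hrr hmin hb (fun i => by rw [hsum]; exact h i)
end

theorem op_sum {ι : Type u} (v : ι → H →L[ℂ] H)
    (h1 : ∀ i, v i * star (v i) * v i = v i)
    (h2 : ∀ i j, i ≠ j → star (v i) * v j = 0) (h3 : ∀ i j, i ≠ j → v i * star (v j) = 0) :
    ∃ V : H →L[ℂ] H, ∀ ξ, HasSum (fun i => v i ξ) (V ξ) := by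
  classical
  have hW : ∀ s : Finset ι, star (∑ i ∈ s, v i) * (∑ i ∈ s, v i) = ∑ i ∈ s, star (v i) * v i := by
    intro s
    rw [star_sum, Finset.sum_mul_sum]
    refine Finset.sum_congr rfl fun i hi => ?_
    rw [Finset.sum_eq_single i]
    · intro j _ hj
      exact h2 i j hj.symm
    · intro h; exact absurd hi h
  have hP : ∀ s : Finset ι, IsStarProjection (∑ i ∈ s, star (v i) * v i) := by
    intro s
    constructor
    · show _ * _ = _
      rw [Finset.sum_mul_sum]
      refine Finset.sum_congr rfl fun i hi => ?_
      rw [Finset.sum_eq_single i]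
      · rw [mul_assoc, ← mul_assoc (v i), h1]
      · intro j _ hj
        rw [mul_assoc, ← mul_assoc (v i), h3 i j hj.symm]; simp
      · intro h; exact absurd hi h
    · show star _ = _
      simp [star_sum]
  have hN : ∀ s : Finset ι, ‖∑ i ∈ s, v i‖ ≤ 1 := by
    intro s
    have h := CStarRing.norm_star_mul_self (x := ∑ i ∈ s, v i)
    rw [hW] at h
    have h' := (hP s).norm_le
    nlinarith [norm_nonneg (∑ i ∈ s, v i)]
  have hB : ∀ (s : Finset ι) (ξ : H), ‖∑ i ∈ s, v i ξ‖ ≤ ‖ξ‖ := by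
    intro s ξ
    have := (∑ i ∈ s, v i).le_of_opNorm_le (hN s) ξ
    simpa [_root_.sum_apply] using this
  have hO : OrthogonalFamily ℂ (fun i => (v i).range) (fun i => (v i).range.subtypeₗᵢ) := by
    intro i j hij a b
    obtain ⟨_, x, rfl⟩ := a
    obtain ⟨_, y, rfl⟩ := b
    show inner ℂ (v i x) (v j y) = 0
    rw [← ContinuousLinearMap.adjoint_inner_right]
    have := congrArg (fun T : H →L[ℂ] H => T y) (h2 i j hij)
    have h' : (adjoint (v i)) (v j y) = 0 := this
    rw [h', inner_zero_right]
  have hS : ∀ ξ, Summable (fun i => v i ξ) := by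
    intro ξ
    have := (hO.summable_iff_norm_sq_summable (fun i => ⟨v i ξ, ξ, rfl⟩)).2 (by
      refine summable_of_sum_le (c := ‖ξ‖^2) (fun i => by positivity) fun s => ?_
      have h := hO.norm_sum (fun i => ⟨v i ξ, ξ, rfl⟩) s
      rw [← h]
      have := hB s ξ
      gcongr
      exact this)
    exact this
  let L : H →ₗ[ℂ] H :=
    { toFun := fun ξ => ∑' i, v i ξ
      map_add' := by
        intro x y
        simp only [map_add]
        exact (hS x).tsum_add (hS y)
      map_smul' := by
        intro c x
        simp only [map_smul, RingHom.id_apply]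
        exact (hS x).tsum_const_smul c }
  refine ⟨L.mkContinuous 1 ?_, fun ξ => (hS ξ).hasSum⟩
  intro ξ
  rw [one_mul]
  exact le_of_tendsto (hS ξ).hasSum.norm (Filter.Eventually.of_forall fun s => hB s ξ)

theorem op_polar (x : H →L[ℂ] H) : ∃ w T e : H →L[ℂ] H,
    star T = T ∧ T * T = star x * x ∧ star e = e ∧ e * e = e ∧ e * T = T ∧
    (∀ y, T * y = 0 → e * y = 0) ∧ w * T = x ∧ w * e = w ∧
    (∀ u, u * x = x * u → star u * x = x * star u → u * T = T * u) := by
  let T := CFC.abs x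
  have hsa : star T = T := (CFC.abs_nonneg x).isSelfAdjoint
  have hTT : T * T = star x * x := CFC.abs_mul_abs x
  have hn : ∀ ξ, ‖x ξ‖ = ‖T ξ‖ := by
    intro ξ
    have h1 : inner ℂ (x ξ) (x ξ) = inner ℂ (T ξ) (T ξ) := by
      rw [← ContinuousLinearMap.adjoint_inner_right, ← ContinuousLinearMap.adjoint_inner_right (A := T)]
      have h2 : (star x * x) ξ = (star T * T) ξ := by rw [hsa, hTT]
      have h3 : (adjoint x) (x ξ) = (adjoint T) (T ξ) := h2
      rw [h3]
    rw [@norm_eq_sqrt_re_inner ℂ, @norm_eq_sqrt_re_inner ℂ, h1]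
  let K : Submodule ℂ H := T.range.topologicalClosure
  have hK : IsClosed (K : Set H) := Submodule.isClosed_topologicalClosure _
  have : CompleteSpace K := hK.completeSpace_coe
  have hTK : ∀ ξ, T ξ ∈ K := fun ξ => Submodule.le_topologicalClosure _ ⟨ξ, rfl⟩
  let TK : H →ₗ[ℂ] K := T.toLinearMap.codRestrict K hTK
  have hD : DenseRange TK := by
    intro k
    rw [closure_subtype]
    have hk : (k : H) ∈ closure (T.range : Set H) := k.2
    convert hk using 2
    ext y
    constructor
    · rintro ⟨_, ⟨ξ, rfl⟩, rfl⟩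
      exact ⟨ξ, rfl⟩
    · rintro ⟨ξ, rfl⟩
      exact ⟨TK ξ, ⟨ξ, rfl⟩, rfl⟩
  let w0 : K →L[ℂ] H := (x.toLinearMap).extendOfNorm TK
  have hw0 : ∀ ξ, w0 (TK ξ) = x ξ := by
    intro ξ
    exact LinearMap.extendOfNorm_eq hD ⟨1, fun y => by
      rw [one_mul]; exact (hn y).le⟩ ξ
  let e : H →L[ℂ] H := K.starProjection
  have heT : e * T = T := by
    ext ξ
    exact Submodule.starProjection_eq_self_iff.2 (hTK ξ)
  have hee : e * e = e := by
    ext ξ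
    exact Submodule.starProjection_eq_self_iff.2 (Submodule.starProjection_apply_mem _ _)
  refine ⟨w0.comp K.orthogonalProjectionOnto, T, e, hsa, hTT, ?_, hee, heT, ?_, ?_, ?_, ?_⟩
  · exact (isStarProjection_starProjection (U := K)).isSelfAdjoint
  · intro y hy
    ext ξ
    show K.starProjection (y ξ) = 0
    rw [Submodule.starProjection_apply_eq_zero_iff]
    show y ξ ∈ (T.range.topologicalClosure)ᗮ
    rw [Submodule.orthogonal_closure]
    rintro _ ⟨η, rfl⟩
    show inner ℂ (T η) (y ξ) = 0
    rw [← ContinuousLinearMap.adjoint_inner_right]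
    have h1 : (star T * y) ξ = 0 := by rw [hsa, hy]; rfl
    have h2 : adjoint T (y ξ) = 0 := h1
    rw [h2, inner_zero_right]
  · ext ξ
    show w0 (K.orthogonalProjectionOnto (T ξ)) = x ξ
    rw [← hw0 ξ]
    congr 1
    exact Submodule.orthogonalProjectionOnto_mem_subspace_eq_self (TK ξ)
  · ext ξ
    show w0 (K.orthogonalProjectionOnto (K.starProjection ξ)) = w0 (K.orthogonalProjectionOnto ξ)
    congr 1
    exact Submodule.orthogonalProjectionOnto_mem_subspace_eq_self (K.orthogonalProjectionOnto ξ)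
  · intro u h1 h2
    exact Commute.cfcAbs_right (a := x) (b := u) h1.symm h2.symm

theorem memM (M : VonNeumannAlgebra H) {x : H →L[ℂ] H}
    (h : ∀ u ∈ M.commutant, u * x = x * u) : x ∈ M := by
  rw [← M.commutant_commutant, VonNeumannAlgebra.mem_commutant_iff]
  exact h

theorem comM (M : VonNeumannAlgebra H) {x u : H →L[ℂ] H} (hx : x ∈ M)
    (hu : u ∈ M.commutant) : u * x = x * u :=
  (VonNeumannAlgebra.mem_commutant_iff.1 hu x hx).symm

theorem vn_sum (M : VonNeumannAlgebra H) {ι : Type u} (v : ι → H →L[ℂ] H) (hM : ∀ i, v i ∈ M)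
    (h1 : ∀ i, v i * star (v i) * v i = v i)
    (h2 : ∀ i j, i ≠ j → star (v i) * v j = 0) (h3 : ∀ i j, i ≠ j → v i * star (v j) = 0) :
    ∃ V : H →L[ℂ] H, V ∈ M ∧ (∀ i, V * (star (v i) * v i) = v i) ∧
      (∀ i, (v i * star (v i)) * V = v i) ∧ (∀ x, (∀ i, v i * x = 0) → V * x = 0) ∧
      (∀ x, (∀ i, x * v i = 0) → x * V = 0) := by
  obtain ⟨V, hV⟩ := op_sum v h1 h2 h3
  have hr : ∀ (x : H →L[ℂ] H) ξ, HasSum (fun i => (v i * x) ξ) ((V * x) ξ) := fun x ξ => hV (x ξ)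
  have hl : ∀ (x : H →L[ℂ] H) ξ, HasSum (fun i => (x * v i) ξ) ((x * V) ξ) :=
    fun x ξ => (hV ξ).mapL x
  refine ⟨V, memM M fun u hu => ?_, fun i => ?_, fun i => ?_, fun x hx => ?_, fun x hx => ?_⟩
  · ext ξ
    refine (hl u ξ).unique ?_
    simp_rw [comM M (hM _) hu]
    exact hr u ξ
  · ext ξ
    refine (hr _ ξ).unique ?_
    convert hasSum_single (f := fun j => (v j * (star (v i) * v i)) ξ) i ?_ using 1
    · rw [← mul_assoc, h1]
    · intro j hj
      show (v j * (star (v i) * v i)) ξ = 0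
      rw [← mul_assoc, h3 j i hj, zero_mul]; rfl
  · ext ξ
    refine (hl _ ξ).unique ?_
    convert hasSum_single (f := fun j => (v i * star (v i) * v j) ξ) i ?_ using 1
    · rw [h1]
    · intro j hj
      show (v i * star (v i) * v j) ξ = 0
      rw [mul_assoc, h2 i j hj.symm, mul_zero]; rfl
  · ext ξ
    refine (hr _ ξ).unique ?_
    simp_rw [hx]
    exact hasSum_zero
  · ext ξ
    refine (hl _ ξ).unique ?_
    simp_rw [hx]
    exact hasSum_zero

theorem vn_polar (M : VonNeumannAlgebra H) (x : H →L[ℂ] H) (hx : x ∈ M) :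
    ∃ w : H →L[ℂ] H, w ∈ M ∧ w * star w * w = w ∧ x * (star w * w) = x ∧ (w * star w) * x = x ∧
      (∀ y, x * y = 0 → w * y = 0) ∧ (∀ y, y * x = 0 → y * w = 0) := by
  obtain ⟨w, T, e, hT, hTT, hse, hee, heT, hTy, hwT, hwe, hc⟩ := op_polar x
  have hTe : T * e = T := by
    have := congrArg star heT
    rwa [star_mul, hT, hse] at this
  have hyT : ∀ y, y * T = 0 → y * e = 0 := by
    intro y hy
    have h1 : T * star y = 0 := by
      have := congrArg star hy
      rwa [star_mul, hT, star_zero] at this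
    have h2 := congrArg star (hTy _ h1)
    rwa [star_mul, star_star, hse, star_zero] at h2
  have hws : star w * w = e := by
    have h0 : T * ((star w * w - e) * T) = 0 := by
      have h1 : T * (star w * w) * T = T * T := by
        calc T * (star w * w) * T = star (w * T) * (w * T) := by
              rw [star_mul, hT]; noncomm_ring
          _ = T * T := by rw [hwT, hTT]
      rw [sub_mul, heT, mul_sub, ← mul_assoc, h1, sub_self]
    have h1 := hTy _ h0
    rw [← mul_assoc] at h1
    have h2 := hyT _ h1
    have h3 : e * star w = star w := by
      have := congrArg star hwe
      rwa [star_mul, hse] at this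
    have h4 : e * (star w * w - e) * e = star w * w - e := by
      rw [mul_sub, ← mul_assoc, h3, hee, sub_mul, hee, mul_assoc, hwe]
    rw [h4] at h2
    exact sub_eq_zero.1 h2
  have hzero : ∀ y, x * y = 0 → w * y = 0 := by
    intro y hy
    have h1 : T * (T * y) = 0 := by
      rw [← mul_assoc, hTT, mul_assoc, hy, mul_zero]
    have h2 := hTy _ h1
    rw [← mul_assoc, heT] at h2
    rw [← hwe, mul_assoc, hTy _ h2, mul_zero]
  refine ⟨w, memM M fun u hu => ?_, ?_, ?_, ?_, hzero, ?_⟩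
  · have hu' : star u ∈ M.commutant := star_mem hu
    have hcu := hc u (comM M hx hu) (comM M hx hu')
    have h1 : T * (u * (1 - e)) = 0 := by
      rw [← mul_assoc, ← hcu, mul_assoc, mul_sub, hTe, mul_one, sub_self, mul_zero]
    have h2 : w * (u * (1 - e)) = 0 := by
      rw [← hwe, mul_assoc, hTy _ h1, mul_zero]
    have h3 : (u * w - w * u) * T = 0 := by
      rw [sub_mul, mul_assoc, hwT, mul_assoc, hcu, ← mul_assoc, hwT, comM M hx hu, sub_self]
    have h4 := hyT _ h3
    rw [sub_mul, mul_assoc, hwe, sub_eq_zero] at h4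
    rw [h4]
    rw [mul_sub, mul_one, mul_sub, sub_eq_zero, ← mul_assoc w u e] at h2
    exact h2.symm
  · rw [mul_assoc, hws, hwe]
  · rw [hws, ← hwT, mul_assoc, hTe]
  · rw [← hwT, mul_assoc, ← mul_assoc (star w), hws, heT]
  · intro y hy
    rw [← hwe, ← mul_assoc]
    apply hyT
    rw [mul_assoc, hwT, hy]

theorem vn_ann (M : VonNeumannAlgebra H) (p q : H →L[ℂ] H)  (hq : q ∈ M)
    (h : ∀ x ∈ M, q * x * p = 0) :
    ∃ z ∈ M, star z = z ∧ z * z = z ∧ (∀ x ∈ M, z * x = x * z) ∧ z * q = q ∧ z * p = 0 := by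
  let N : Submodule ℂ H := ⨅ x : M, (q * x.1).ker
  have hmem : ∀ ξ, ξ ∈ N ↔ ∀ x ∈ M, q (x ξ) = 0 := by
    intro ξ
    simp [N, Submodule.mem_iInf]
  have hN : IsClosed (N : Set H) := by
    have : (N : Set H) = ⋂ x : M, ((q * x.1).ker : Set H) := by simp [N]
    rw [this]
    exact isClosed_iInter fun x => (q * x.1).isClosed_ker
  have : CompleteSpace N := hN.completeSpace_coe
  let e : H →L[ℂ] H := N.starProjection
  have he : IsStarProjection e := isStarProjection_starProjection
  have hr : e.range = N := Submodule.range_starProjection N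
  have he1 : e ∈ M := by
    rw [VonNeumannAlgebra.IsStarProjection.mem_iff he, hr]
    intro u hu ξ hξ
    show u ξ ∈ N
    rw [hmem] at hξ ⊢
    intro x hx
    have h1 : (q * x) * u = u * (q * x) := (comM M (mul_mem hq hx) hu).symm
    have h2 : q (x (u ξ)) = u (q (x ξ)) := congrArg (fun T : H →L[ℂ] H => T ξ) h1
    rw [h2, hξ x hx, map_zero]
  have he2 : e ∈ M.commutant := by
    rw [VonNeumannAlgebra.IsStarProjection.mem_iff he, hr, M.commutant_commutant]
    intro u hu ξ hξ
    show u ξ ∈ N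
    rw [hmem] at hξ ⊢
    intro x hx
    exact hξ (x * u) (mul_mem hx hu)
  have hc : ∀ x ∈ M, e * x = x * e := fun x hx => comM M hx he2
  have hee : e * e = e := he.isIdempotentElem
  have hse : star e = e := he.isSelfAdjoint
  refine ⟨1 - e, sub_mem (one_mem _) he1, ?_, ?_, ?_, ?_, ?_⟩
  · rw [star_sub, star_one, hse]
  · rw [mul_sub, mul_one, sub_mul, one_mul, hee, sub_self, sub_zero]
  · intro x hx
    rw [mul_sub, mul_one, sub_mul, one_mul, hc x hx]
  · have : e * q = 0 := by
      rw [hc q hq]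
      ext ξ
      have := (hmem (e ξ)).1 (Submodule.starProjection_apply_mem _ _) 1 (one_mem _)
      exact this
    rw [sub_mul, one_mul, this, sub_zero]
  · have : e * p = p := by
      ext ξ
      refine Submodule.starProjection_eq_self_iff.2 ?_
      rw [hmem]
      intro x hx
      exact congrArg (fun T : H →L[ℂ] H => T ξ) (h x hx)
    rw [sub_mul, one_mul, this, sub_self]

/-- The ring of elements of a von Neumann algebra. -/
abbrev Rg (M : VonNeumannAlgebra H) : Type u := ↥M.toStarSubalgebra

instance vnRg (M : VonNeumannAlgebra H) : VN (Rg M) where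
  proper x hx := by
    apply Subtype.ext
    exact CStarRing.star_mul_self_eq_zero_iff x.1 |>.1 (congrArg Subtype.val hx)
  sum v h1 h2 h3 := by
    obtain ⟨V, hV, a, b, c, d⟩ := vn_sum M (fun i => (v i).1) (fun i => (v i).2)
      (fun i => congrArg Subtype.val (h1 i)) (fun i j h => congrArg Subtype.val (h2 i j h))
      (fun i j h => congrArg Subtype.val (h3 i j h))
    exact ⟨⟨V, hV⟩, fun i => Subtype.ext (a i), fun i => Subtype.ext (b i),
      fun x hx => Subtype.ext (c x.1 fun i => congrArg Subtype.val (hx i)),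
      fun x hx => Subtype.ext (d x.1 fun i => congrArg Subtype.val (hx i))⟩
  polar x := by
    obtain ⟨w, hw, a, b, c, d, e⟩ := vn_polar M x.1 x.2
    exact ⟨⟨w, hw⟩, Subtype.ext a, Subtype.ext b, Subtype.ext c,
      fun x hx => Subtype.ext (d x.1 (congrArg Subtype.val hx)),
      fun x hx => Subtype.ext (e x.1 (congrArg Subtype.val hx))⟩
  ann p q h := by
    obtain ⟨z, hz, a, b, c, d, e⟩ := vn_ann M p.1 q.1 q.2
      (fun x hx => congrArg Subtype.val (h ⟨x, hx⟩))
    exact ⟨⟨z, hz⟩, ⟨⟨Subtype.ext a, Subtype.ext b⟩, fun x => Subtype.ext (c x.1 x.2)⟩,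
      Subtype.ext d, Subtype.ext e⟩


/-- A projection of `M` as a ring element. -/
def el (M : VonNeumannAlgebra H) (p : ProjSet M) : Rg M := ⟨p.1, p.2.1⟩

theorem el_pr (M : VonNeumannAlgebra H) (p : ProjSet M) : Pr (el M p) :=
  ⟨Subtype.ext p.2.2.1, Subtype.ext p.2.2.2⟩

/-- A projection of the ring as a projection of `M`. -/
def ofEl (M : VonNeumannAlgebra H) (m : Rg M) (hm : Pr m) : ProjSet M :=
  ⟨m.1, m.2, congrArg Subtype.val hm.sa, congrArg Subtype.val hm.id⟩

theorem ev_of (M : VonNeumannAlgebra H) {p q : ProjSet M} (h : MvNEquiv M p.1 q.1) :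
    Ev (el M p) (el M q) := by
  obtain ⟨v, hv, h1, h2⟩ := h
  exact ⟨⟨v, hv⟩, Subtype.ext h1, Subtype.ext h2⟩

theorem sb_of_mk (M : VonNeumannAlgebra H) {p q : ProjSet M} (h : pquotMk M p = pquotMk M q) :
    Sb (el M p) (el M q) := by
  let P : PQuot M → Prop := Quot.lift (fun x => Sb (el M p) (el M x)) (by
    intro a b hab
    have h1 := ev_of M hab
    exact propext ⟨fun h => h.trans (h1.sb (el_pr M b)),
      fun h => h.trans (h1.symm.sb (el_pr M a))⟩)
  have h1 : P (pquotMk M p) := Sb.refl (el_pr M p)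
  rw [h] at h1
  exact h1

theorem qle_iff (M : VonNeumannAlgebra H) (p q : ProjSet M) :
    QLE M (pquotMk M p) (pquotMk M q) ↔ Sb (el M p) (el M q) := by
  constructor
  · rintro ⟨a, b, ha, hb, r, hr, hv, hle⟩
    refine (sb_of_mk M ha).trans (Sb.trans ?_ (sb_of_mk M hb.symm))
    have h1 : Ev (el M a) (el M ⟨r, hr⟩) := ev_of M hv
    exact (h1.sb (el_pr M _)).le (Subtype.ext hle.2)
  · intro h
    obtain ⟨r, hr, ⟨v, h1, h2⟩, hle⟩ := h.out (el_pr M p)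
    refine ⟨p, q, rfl, rfl, r.1, (ofEl M r hr).2, ⟨v.1, v.2, congrArg Subtype.val h1,
      congrArg Subtype.val h2⟩, ?_, congrArg Subtype.val hle⟩
    have := congrArg star hle
    rw [star_mul, hr.sa, (el_pr M q).sa] at this
    exact congrArg Subtype.val this

theorem q_inf (M : VonNeumannAlgebra H) (S : Set (PQuot M)) :
    ∃ m, (∀ a ∈ S, QLE M m a) ∧ ∀ b, (∀ a ∈ S, QLE M b a) → QLE M b m := by
  have h1 : Pr (1 : Rg M) := ⟨star_one _, one_mul _⟩
  let t := ofEl M 1 h1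
  have rep : ∀ a : PQuot M, ∃ p, pquotMk M p = a := fun a => Quot.exists_rep a
  choose f hf using rep
  have ht : ∀ b, QLE M b (pquotMk M t) := by
    intro b
    rw [← hf b, qle_iff]
    exact Sb.of_le (el_pr M _) (one_mul _)
  obtain ⟨m, hm, hm1, hm2⟩ := exists_inf
    (I := ↥(insert (pquotMk M t) S)) ⟨pquotMk M t, Set.mem_insert _ _⟩
    (fun i => el M (f i.1)) (fun i => el_pr M _)
  refine ⟨pquotMk M (ofEl M m hm), fun a ha => ?_, fun b hb => ?_⟩
  · rw [← hf a, qle_iff]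
    exact hm1 ⟨a, Set.mem_insert_of_mem _ ha⟩
  · rw [← hf b, qle_iff]
    refine hm2 _ (el_pr M _) ?_
    rintro ⟨a, ha⟩
    rw [← qle_iff, hf, hf]
    rcases ha with rfl | ha
    · exact ht b
    · exact hb a ha

end PQ

/-- `P(M)/∼` is a complete lattice: every subset of the set of
Murray–von Neumann equivalence classes of projections has a supremum and an infimum with
respect to the order induced by subequivalence. -/
theorem pquot_completeLattice (M : VonNeumannAlgebra H) (S : Set (PQuot M)) :
    (∃ m, (∀ a ∈ S, QLE M a m) ∧ ∀ b, (∀ a ∈ S, QLE M a b) → QLE M m b) ∧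
    (∃ m, (∀ a ∈ S, QLE M m a) ∧ ∀ b, (∀ a ∈ S, QLE M b a) → QLE M b m) := by
  refine ⟨?_, PQ.q_inf M S⟩
  obtain ⟨m, h1, h2⟩ := PQ.q_inf M {b | ∀ a ∈ S, QLE M a b}
  exact ⟨m, fun a ha => h2 a fun b hb => hb a ha, fun b hb => h1 b hb⟩
end
end
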